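/- Suppose μ is a T-ergodic Borel probability measure on Ω that has a local product structure and full support (supp μ = Ω), and suppose T has a fixed point in Ω. Then {k ∈ (0,π) : k ≠ π/2 and L(A^{(k)}, μ) = 0} = ⋂_{p ∈ Per(T)} {k ∈ (0,π) : k ≠ π/2 and cos k ∈ σ(H̃_p)}, where Per(T) denotes the set of all T-periodic points of Ω. -/

import Mathlib

open Real MeasureTheory Filter Topology Matrix Set

noncomputable section

/-- The left shift on bi-infinite sequences: `(Tω)_n = ω_{n+1}`. -/
def shift (ω : ℤ → ℕ) : ℤ → ℕ := fun n => ω (n + 1)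

/-- The subshift of finite type: sequences with letters in `{1,…,ℓ}` and all
transitions `(ω_n, ω_{n+1})` in the allowed set `W`. -/
def SFT (ℓ : ℕ) (W : Set (ℕ × ℕ)) : Set (ℤ → ℕ) :=
  {ω | (∀ n, 1 ≤ ω n ∧ ω n ≤ ℓ) ∧ ∀ n, (ω n, ω (n + 1)) ∈ W}

/-- The cocycle matrix
`A^{(k)}(ω) = √(ω₀/ω₋₁)·[[((ω₀+ω₋₁)/ω₀)·cos k, −ω₋₁/ω₀],[1, 0]]`. -/
def Acoc (k : ℝ) (ω : ℤ → ℕ) : Matrix (Fin 2) (Fin 2) ℝ :=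
  Real.sqrt ((ω 0 : ℝ) / (ω (-1) : ℝ)) •
    !![((ω 0 : ℝ) + (ω (-1) : ℝ)) / (ω 0 : ℝ) * Real.cos k, -((ω (-1) : ℝ) / (ω 0 : ℝ));
       (1 : ℝ), 0]

/-- The iterated cocycle `A_n(ω) = A^{(k)}(T^{n−1}ω)⋯A^{(k)}(ω)` for `n ≥ 0`,
with `A_0(ω) = Id`. -/
def AIter (k : ℝ) (ω : ℤ → ℕ) : ℕ → Matrix (Fin 2) (Fin 2) ℝ
  | 0 => 1
  | n + 1 => Acoc k (shift^[n] ω) * AIter k ω n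

end

/-- We endow 2×2 real matrices with the `L²` operator norm. -/
noncomputable instance : NormedAddCommGroup (Matrix (Fin 2) (Fin 2) ℝ) :=
  Matrix.instL2OpNormedAddCommGroup

/-- Projection onto nonnegative coordinates: `π₊ω = (ω_n)_{n≥0}`. -/
def projPlus (ω : ℤ → ℕ) : ℕ → ℕ := fun n => ω (n : ℤ)

/-- Projection onto nonpositive coordinates: `π₋ω = (ω_{−n})_{n≥0}`. -/
def projMinus (ω : ℤ → ℕ) : ℕ → ℕ := fun n => ω (-(n : ℤ))

/-- The map `P(ω) = (π₋ω, π₊ω)`; on each cylinder `[0;j]` this is the map `P_j`. -/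
def pairProj (ω : ℤ → ℕ) : (ℕ → ℕ) × (ℕ → ℕ) := (projMinus ω, projPlus ω)

/-- `μ` has a local product structure: there is a positive function `ψ` on `Ω`
(written as `ψ ∘ P` for a function on `Ω₋ × Ω₊`) such that for each letter `j`,
`ψ∘P_j⁻¹` is integrable with respect to `μ_j^− × μ_j^+` and
`(P_j)_* μ_j = (ψ∘P_j⁻¹) d(μ_j^− × μ_j^+)`. -/
def LocalProductStructure (ℓ : ℕ) (W : Set (ℕ × ℕ)) (μ : Measure (ℤ → ℕ)) : Prop :=
  ∃ ψ : (ℕ → ℕ) × (ℕ → ℕ) → ℝ,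
    (∀ ω ∈ SFT ℓ W, 0 < ψ (pairProj ω)) ∧
    ∀ j : ℕ, 1 ≤ j → j ≤ ℓ →
      MeasureTheory.Integrable ψ
        (((Measure.map projMinus μ).restrict {a | a 0 = j}).prod
          ((Measure.map projPlus μ).restrict {a | a 0 = j})) ∧
      Measure.map pairProj (μ.restrict {ω | ω 0 = j}) =
        (((Measure.map projMinus μ).restrict {a | a 0 = j}).prod
          ((Measure.map projPlus μ).restrict {a | a 0 = j})).withDensity
          (fun x => ENNReal.ofReal (ψ x))

/-- `supp μ = Ω`: every open set meeting `Ω` has positive measure. -/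
def FullSupport (ℓ : ℕ) (W : Set (ℕ × ℕ)) (μ : Measure (ℤ → ℕ)) : Prop :=
  ∀ U : Set (ℤ → ℕ), IsOpen U → (U ∩ SFT ℓ W).Nonempty → 0 < μ U

/-- `ℓ²(ℤ)` over `ℝ`. -/
abbrev L2Z : Type := lp (fun _ : ℤ => ℝ) 2

/-- `H` is the periodic Jacobi-type operator `H̃_p` on `ℓ²(ℤ)`:
`(H̃_p u)(n) = (p_n/(p_n+p_{n−1}))·u(n+1) + (p_{n−1}/(p_n+p_{n−1}))·u(n−1)`. -/
def IsJacobiOp (p : ℤ → ℕ) (H : L2Z →L[ℝ] L2Z) : Prop :=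
  ∀ u : L2Z, ∀ n : ℤ,
    (H u : ∀ _ : ℤ, ℝ) n =
      ((p n : ℝ) / ((p n : ℝ) + (p (n - 1) : ℝ))) * (u : ∀ _ : ℤ, ℝ) (n + 1) +
      ((p (n - 1) : ℝ) / ((p n : ℝ) + (p (n - 1) : ℝ))) * (u : ∀ _ : ℤ, ℝ) (n - 1)

/-!
Suppose `L(A^{(k)}, μ) = 0`. Lift `μ` to a measure on `Ω × S¹` invariant under the projective action
of the cocycle. No expansion means no production of entropy, so by the invariance principle of
Ledrappier and Avila–Viana the fibre measures depend only on the past and only on the future; by the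
local product structure they depend only on the letter at the origin, and the transfer matrices
permute this finite family. Over the fixed point of the shift the transfer matrix is elliptic with
trace `2 cos k ≠ 0`. A periodic point whose transfer matrix has `|trace| > 2` would, after transport
to the fixed point, give a probability measure on the circle invariant under both this elliptic and
a hyperbolic matrix, which does not exist. So all periodic transfer matrices have `|trace| ≤ 2`.

Conversely, if all these traces are bounded by `2`, compare the trace of a loop at the fixed letter
with that of the same loop followed by one more copy of the letter: with `det = 1` the two bound a
positive definite form, hence the norm of the loop. By ergodicity and full support every finite
orbit segment extends to such a loop at a bounded cost, so the cocycle is bounded.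

On the side of the operator, let `Δ` be the discriminant, that is, the trace of the transfer matrix
over a period `N` as a polynomial in the energy. By Cayley–Hamilton, `Δ(H̃_p)` is the sum of the
translations by `N` and by `-N`. So `‖Δ(H̃_p)‖ ≤ 2`, and `|Δ(E)| ≤ 2` on the spectrum. If
`|Δ(E)| ≤ 2` and `E - H̃_p` were invertible, the solution of `(E - H̃_p) u = δ₀` would satisfy
`u(m + N) + u(m - N) = Δ(E) u(m)` outside a finite set; no nonzero solution of this recurrence
decays, so `u` would be finitely supported, which is impossible. Hence the condition on the spectrum
is the condition `|Δ(cos k)| ≤ 2` on the periodic transfer matrices.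
-/

section ConditionalDensities

open scoped ENNReal

variable {X : Type*} {𝒢 mX : MeasurableSpace X} {M : Measure X}

lemma lintegral_condLExp_mul (hle : 𝒢 ≤ mX) [SigmaFinite (M.trim hle)] {g h : X → ℝ≥0∞}
    (hg : Measurable g) (hh : Measurable[𝒢] h) :
    ∫⁻ x, (M⁻[g|𝒢]) x * h x ∂M = ∫⁻ x, g x * h x ∂M := by
  have hm : Measurable[𝒢] (M⁻[g|𝒢]) := measurable_condLExp 𝒢 M g
  have trim_eq : (M.trim hle).withDensity (M⁻[g|𝒢]) = (M.withDensity g).trim hle := by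
    refine @Measure.ext _ 𝒢 _ _ fun s hs => ?_
    rw [withDensity_apply _ hs, trim_measurableSet_eq hle hs, withDensity_apply _ (hle s hs),
      setLIntegral_condLExp_trim (hm := hle) M g hs]
  calc ∫⁻ x, (M⁻[g|𝒢]) x * h x ∂M
      = ∫⁻ x, (M⁻[g|𝒢]) x * h x ∂(M.trim hle) := (lintegral_trim hle (hm.mul hh)).symm
    _ = ∫⁻ x, h x ∂((M.trim hle).withDensity (M⁻[g|𝒢])) :=
        (lintegral_withDensity_eq_lintegral_mul _ hm hh).symm
    _ = ∫⁻ x, h x ∂(M.withDensity g) := by rw [trim_eq, lintegral_trim hle hh]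
    _ = ∫⁻ x, g x * h x ∂M := lintegral_withDensity_eq_lintegral_mul M hg (hh.mono hle le_rfl)

lemma lintegral_comp_symm_iterate_mul {F : X ≃ᵐ X} (hF : MeasurePreserving F M M) (n : ℕ)
    (g h : X → ℝ≥0∞) : ∫⁻ x, g (F.symm^[n] x) * h x ∂M = ∫⁻ x, g x * h (F^[n] x) ∂M := by
  induction n generalizing h with
  | zero => rfl
  | succ n ih =>
    calc ∫⁻ x, g (F.symm^[n + 1] x) * h x ∂M
        = ∫⁻ x, g (F.symm^[n + 1] (F x)) * h (F x) ∂M :=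
          (hF.lintegral_comp_emb F.measurableEmbedding _).symm
      _ = ∫⁻ x, g (F.symm^[n] x) * h (F x) ∂M := by simp
      _ = ∫⁻ x, g x * h (F^[n + 1] x) ∂M := by
          simpa only [Function.comp_apply, Function.iterate_succ_apply'] using ih (h ∘ F)

/-- `r` is a version with values in `[0, 1]` of the conditional expectation given `𝒢` of the
density `g` on the possibly infinite measure space `(X, M)`. It is characterised by its integrals
against nonnegative `𝒢`-measurable functions, since the entropy argument tests it against the
unbounded function `-log r`. -/
structure IsCondDensity (𝒢 : MeasurableSpace X) {mX : MeasurableSpace X} (M : Measure X)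
    (g r : X → ℝ) : Prop where
  measurable : Measurable[𝒢] r
  nonneg : ∀ x, 0 ≤ r x
  le_one : ∀ x, r x ≤ 1
  lintegral_mul : ∀ h : X → ℝ≥0∞, Measurable[𝒢] h →
    ∫⁻ x, ENNReal.ofReal (r x) * h x ∂M = ∫⁻ x, ENNReal.ofReal (g x) * h x ∂M

lemma exists_isCondDensity (hle : 𝒢 ≤ mX) [SigmaFinite (M.trim hle)] {g : X → ℝ}
    (hg : Measurable g) (hg1 : ∀ x, g x ≤ 1) : ∃ r, IsCondDensity 𝒢 M g r := by
  set R := M⁻[fun x => ENNReal.ofReal (g x)|𝒢]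
  have hR : Measurable[𝒢] R := measurable_condLExp 𝒢 M _
  have R_le_one : ∀ᵐ x ∂M, R x ≤ 1 := by
    have h := condLExp_mono (mΩ := 𝒢) (P := M) (X := fun x => ENNReal.ofReal (g x)) (Y := 1)
      (.of_forall fun x => by simpa using hg1 x)
    rwa [condLExp_one (hm := hle)] at h
  refine ⟨fun x => (min (R x) 1).toReal, (hR.min measurable_const).ennreal_toReal,
    fun x => ENNReal.toReal_nonneg,
    fun x => ENNReal.toReal_le_of_le_ofReal zero_le_one (by simp), fun h hh => ?_⟩
  rw [← lintegral_condLExp_mul hle hg.ennreal_ofReal hh]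
  refine lintegral_congr_ae ?_
  filter_upwards [R_le_one] with x hx
  rw [min_eq_left hx, ENNReal.ofReal_toReal (ne_top_of_le_ne_top ENNReal.one_ne_top hx)]

namespace IsCondDensity

variable {g r : X → ℝ}

lemma lintegral_eq (h : IsCondDensity 𝒢 M g r) :
    ∫⁻ x, ENNReal.ofReal (r x) ∂M = ∫⁻ x, ENNReal.ofReal (g x) ∂M := by
  simpa using h.lintegral_mul (fun _ => 1) (@measurable_const _ _ _ 𝒢 _)

lemma eq_zero_of_eq_zero (h : IsCondDensity 𝒢 M g r) (hle : 𝒢 ≤ mX) (hg : Measurable g)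
    (hg0 : ∀ x, 0 ≤ g x) : ∀ᵐ x ∂M, r x = 0 → g x = 0 := by
  have zeros : MeasurableSet[𝒢] {x | r x = 0} := h.measurable (measurableSet_singleton 0)
  have int_zero := h.lintegral_mul ({x | r x = 0}.indicator 1)
    ((@measurable_one _ _ _ 𝒢 _).indicator zeros)
  have prod_zero (x : X) :
      ENNReal.ofReal (r x) * ({x | r x = 0}.indicator 1 : X → ℝ≥0∞) x = 0 := by
    by_cases hx : r x = 0 <;> simp [hx]
  simp only [prod_zero, lintegral_zero] at int_zero
  have ae_zero := (lintegral_eq_zero_iff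
    (hg.ennreal_ofReal.mul (measurable_one.indicator (hle _ zeros)))).1 int_zero.symm
  filter_upwards [ae_zero] with x hx hrx
  exact le_antisymm (by simpa [hrx] using hx) (hg0 x)

lemma lintegral_mul_neg_log (hr : IsCondDensity 𝒢 M g r) {q : X → ℝ} (hq : Measurable[𝒢] q) :
    ∫⁻ x, ENNReal.ofReal (r x) * ENNReal.ofReal (-log (q x)) ∂M
      = ∫⁻ x, ENNReal.ofReal (g x) * ENNReal.ofReal (-log (q x)) ∂M :=
  hr.lintegral_mul _ (@Measurable.ennreal_ofReal _ 𝒢 _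
    (@Measurable.neg _ _ _ _ _ 𝒢 _ (@Measurable.log _ 𝒢 _ hq)))

lemma lintegral_comp_symm_mul {F : X ≃ᵐ X} (hF : MeasurePreserving F M M)
    (hr : IsCondDensity 𝒢 M g r) {h : X → ℝ≥0∞} (hh : Measurable[𝒢] (h ∘ F)) :
    ∫⁻ x, ENNReal.ofReal (r (F.symm x)) * h x ∂M
      = ∫⁻ x, ENNReal.ofReal (g (F.symm x)) * h x ∂M := by
  have pull (u : X → ℝ) : ∫⁻ x, ENNReal.ofReal (u (F.symm x)) * h x ∂M
      = ∫⁻ x, ENNReal.ofReal (u x) * (h ∘ F) x ∂M :=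
    lintegral_comp_symm_iterate_mul hF 1 (fun x => ENNReal.ofReal (u x)) h
  rw [pull, pull, hr.lintegral_mul _ hh]

lemma comp_symm {F : X ≃ᵐ X} (hF : MeasurePreserving F M M) (hF𝒢 : Measurable[𝒢, 𝒢] F)
    {r' : X → ℝ} (hr : IsCondDensity 𝒢 M g r) (hr' : IsCondDensity 𝒢 M (g ∘ F.symm) r') :
    IsCondDensity 𝒢 M (r ∘ F.symm) r' where
  measurable := hr'.measurable
  nonneg := hr'.nonneg
  le_one := hr'.le_one
  lintegral_mul h hh :=
    (hr'.lintegral_mul h hh).trans (hr.lintegral_comp_symm_mul hF (hh.comp hF𝒢)).symm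

end IsCondDensity

/-- The pointwise form of the fact that relative entropy dominates the squared Hellinger
distance. -/
lemma negMulLog_add_sq_sqrt_sub_le {s r : ℝ} (hs : 0 ≤ s) (hr : 0 < r) :
    negMulLog s + s + (√s - √r) ^ 2 ≤ s * (-log r) + r := by
  have sq_sub : (√s - √r) ^ 2 = s + r - 2 * (√s * √r) := by
    rw [sub_sq, Real.sq_sqrt hs, Real.sq_sqrt hr.le]; ring
  rcases hs.eq_or_lt with rfl | hs
  · simp [hr.le, Real.sq_sqrt]
  · have log_le : log (√r / √s) ≤ √r / √s - 1 :=
      log_le_sub_one_of_pos (div_pos (sqrt_pos.2 hr) (sqrt_pos.2 hs))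
    rw [log_div (sqrt_pos.2 hr).ne' (sqrt_pos.2 hs).ne', log_sqrt hr.le, log_sqrt hs.le]
      at log_le
    have mul_div : s * (√r / √s) = √s * √r := by
      rw [← mul_div_assoc, mul_comm s, mul_div_assoc, div_sqrt, mul_comm]
    rw [sq_sub, negMulLog]
    nlinarith [mul_le_mul_of_nonneg_left log_le (by linarith : (0 : ℝ) ≤ 2 * s)]

lemma negMulLog_le_cross {s r : ℝ} (hs : 0 ≤ s) (hr : 0 < r) :
    negMulLog s ≤ s * (-log r) + r := by
  nlinarith [negMulLog_add_sq_sqrt_sub_le hs hr, sq_nonneg (√s - √r)]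

namespace IsCondDensity

variable {g r : X → ℝ}

lemma lintegral_negMulLog_add_hellinger_le (hr : IsCondDensity 𝒢 M g r) (hle : 𝒢 ≤ mX)
    (hg : Measurable g) (hg0 : ∀ x, 0 ≤ g x) (hg1 : ∀ x, g x ≤ 1)
    (hfin : ∫⁻ x, ENNReal.ofReal (g x) ∂M ≠ ∞) :
    ∫⁻ x, ENNReal.ofReal (negMulLog (g x)) ∂M + ∫⁻ x, ENNReal.ofReal ((√(g x) - √(r x)) ^ 2) ∂M
      ≤ ∫⁻ x, ENNReal.ofReal (negMulLog (r x)) ∂M := by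
  have r_meas : Measurable r := hr.measurable.mono hle le_rfl
  have cross_eq : ∫⁻ x, ENNReal.ofReal (negMulLog (r x)) ∂M
      = ∫⁻ x, ENNReal.ofReal (g x) * ENNReal.ofReal (-log (r x)) ∂M := by
    rw [← hr.lintegral_mul_neg_log hr.measurable]
    refine lintegral_congr fun x => ?_
    rw [← ENNReal.ofReal_mul (hr.nonneg x), negMulLog, neg_mul_comm]
  have pointwise : ∀ᵐ x ∂M, ENNReal.ofReal (negMulLog (g x))
        + ENNReal.ofReal ((√(g x) - √(r x)) ^ 2) + ENNReal.ofReal (g x)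
      ≤ ENNReal.ofReal (g x) * ENNReal.ofReal (-log (r x)) + ENNReal.ofReal (r x) := by
    filter_upwards [hr.eq_zero_of_eq_zero hle hg hg0] with x hx
    have entropy_nonneg : 0 ≤ negMulLog (g x) := negMulLog_nonneg (hg0 x) (hg1 x)
    have log_nonpos := log_nonpos (hr.nonneg x) (hr.le_one x)
    rw [← ENNReal.ofReal_mul (hg0 x), ← ENNReal.ofReal_add entropy_nonneg (sq_nonneg _),
      ← ENNReal.ofReal_add (by positivity) (hg0 x),
      ← ENNReal.ofReal_add (mul_nonneg (hg0 x) (neg_nonneg.2 log_nonpos)) (hr.nonneg x)]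
    refine ENNReal.ofReal_le_ofReal ?_
    rcases (hr.nonneg x).eq_or_lt with h0 | h0
    · simp [hx h0.symm, ← h0]
    · linarith [negMulLog_add_sq_sqrt_sub_le (hg0 x) h0]
  have integrated := lintegral_mono_ae pointwise
  rw [lintegral_add_right _ hg.ennreal_ofReal,
    lintegral_add_left (f := fun x => ENNReal.ofReal (negMulLog (g x)))
      (continuous_negMulLog.measurable.comp hg).ennreal_ofReal,
    lintegral_add_right _ r_meas.ennreal_ofReal, ← cross_eq, hr.lintegral_eq] at integrated
  exact (ENNReal.add_le_add_iff_right hfin).1 integrated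

lemma lintegral_negMulLog_le_cross (hr : IsCondDensity 𝒢 M g r) (hle : 𝒢 ≤ mX) {q : X → ℝ}
    (hq : Measurable[𝒢] q) (hq0 : ∀ x, 0 < q x) (hq1 : ∀ x, q x ≤ 1) :
    ∫⁻ x, ENNReal.ofReal (negMulLog (r x)) ∂M
      ≤ ∫⁻ x, ENNReal.ofReal (g x) * ENNReal.ofReal (-log (q x)) ∂M
        + ∫⁻ x, ENNReal.ofReal (q x) ∂M := by
  rw [← hr.lintegral_mul_neg_log hq, ← lintegral_add_right _ (hq.mono hle le_rfl).ennreal_ofReal]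
  refine lintegral_mono fun x => ?_
  rw [← ENNReal.ofReal_mul (hr.nonneg x), ← ENNReal.ofReal_add
    (mul_nonneg (hr.nonneg x) (neg_nonneg.2 (log_nonpos (hq0 x).le (hq1 x)))) (hq0 x).le]
  exact ENNReal.ofReal_le_ofReal (negMulLog_le_cross (hr.nonneg x) (hq0 x))

end IsCondDensity

lemma lintegral_sq_sqrt_add_le {s r : X → ℝ} (hs : Measurable s) (hr : Measurable r)
    (hs0 : ∀ x, 0 ≤ s x) (hr0 : ∀ x, 0 ≤ r x) :
    ∫⁻ x, ENNReal.ofReal ((√(s x) + √(r x)) ^ 2) ∂M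
      ≤ 2 * ∫⁻ x, ENNReal.ofReal (s x) ∂M + 2 * ∫⁻ x, ENNReal.ofReal (r x) ∂M := by
  rw [← lintegral_const_mul _ hs.ennreal_ofReal, ← lintegral_const_mul _ hr.ennreal_ofReal,
    ← lintegral_add_left (hs.ennreal_ofReal.const_mul 2)]
  refine lintegral_mono fun x => ?_
  rw [← ENNReal.ofReal_ofNat 2, ← ENNReal.ofReal_mul zero_le_two, ← ENNReal.ofReal_mul zero_le_two,
    ← ENNReal.ofReal_add (by linarith [hs0 x]) (by linarith [hr0 x])]
  refine ENNReal.ofReal_le_ofReal ?_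
  nlinarith [sq_nonneg (√(s x) - √(r x)), Real.sq_sqrt (hs0 x), Real.sq_sqrt (hr0 x)]

lemma lintegral_abs_sub_le_of_hellinger_le {s r : X → ℝ} (hs : Measurable s) (hr : Measurable r)
    (hs0 : ∀ x, 0 ≤ s x) (hr0 : ∀ x, 0 ≤ r x) (hs1 : ∫⁻ x, ENNReal.ofReal (s x) ∂M = 1)
    (hr1 : ∫⁻ x, ENNReal.ofReal (r x) ∂M = 1) {d : ℝ} (hd : 0 ≤ d)
    (hsr : ∫⁻ x, ENNReal.ofReal ((√(s x) - √(r x)) ^ 2) ∂M ≤ ENNReal.ofReal (d ^ 2)) :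
    ∫⁻ x, ENNReal.ofReal |s x - r x| ∂M ≤ ENNReal.ofReal (2 * d) := by
  have factor (x : X) : ENNReal.ofReal |s x - r x|
      = ENNReal.ofReal |√(s x) - √(r x)| * ENNReal.ofReal (√(s x) + √(r x)) := by
    rw [← ENNReal.ofReal_mul (abs_nonneg _),
      ← abs_of_nonneg (a := √(s x) + √(r x)) (by positivity), ← abs_mul, mul_comm, ← sq_sub_sq,
      Real.sq_sqrt (hs0 x), Real.sq_sqrt (hr0 x)]
  have rpow_two {a : ℝ} (ha : 0 ≤ a) : ENNReal.ofReal a ^ (2 : ℝ) = ENNReal.ofReal (a ^ 2) := by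
    rw [ENNReal.ofReal_rpow_of_nonneg ha zero_le_two, Real.rpow_two]
  have diff_le : ∫⁻ x, ENNReal.ofReal |√(s x) - √(r x)| ^ (2 : ℝ) ∂M ≤ ENNReal.ofReal (d ^ 2) := by
    simpa only [rpow_two (abs_nonneg _), sq_abs] using hsr
  have sum_le : ∫⁻ x, ENNReal.ofReal (√(s x) + √(r x)) ^ (2 : ℝ) ∂M
      ≤ ENNReal.ofReal (2 ^ 2) := by
    simp only [rpow_two (add_nonneg (sqrt_nonneg _) (sqrt_nonneg _))]
    refine (lintegral_sq_sqrt_add_le hs hr hs0 hr0).trans (le_of_eq ?_)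
    rw [hs1, hr1]
    norm_num
  have sqrt_sq {a : ℝ} (ha : 0 ≤ a) :
      ENNReal.ofReal (a ^ 2) ^ (1 / 2 : ℝ) = ENNReal.ofReal a := by
    rw [ENNReal.ofReal_rpow_of_nonneg (sq_nonneg a) (by norm_num), ← sqrt_eq_rpow, Real.sqrt_sq ha]
  calc ∫⁻ x, ENNReal.ofReal |s x - r x| ∂M
      = ∫⁻ x, ENNReal.ofReal |√(s x) - √(r x)| * ENNReal.ofReal (√(s x) + √(r x)) ∂M :=
        lintegral_congr factor
    _ ≤ (∫⁻ x, ENNReal.ofReal |√(s x) - √(r x)| ^ (2 : ℝ) ∂M) ^ (1 / 2 : ℝ)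
          * (∫⁻ x, ENNReal.ofReal (√(s x) + √(r x)) ^ (2 : ℝ) ∂M) ^ (1 / 2 : ℝ) :=
        ENNReal.lintegral_mul_le_Lp_mul_Lq M Real.HolderConjugate.two_two
          (hs.sqrt.sub hr.sqrt).abs.ennreal_ofReal.aemeasurable
          (hs.sqrt.add hr.sqrt).ennreal_ofReal.aemeasurable
    _ ≤ ENNReal.ofReal (d ^ 2) ^ (1 / 2 : ℝ) * ENNReal.ofReal (2 ^ 2) ^ (1 / 2 : ℝ) := by gcongr
    _ = ENNReal.ofReal (2 * d) := by
        rw [sqrt_sq hd, sqrt_sq zero_le_two, ← ENNReal.ofReal_mul hd, mul_comm]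

lemma exists_lt_le_of_sum_le {a : ℕ → ℝ≥0∞} {n : ℕ} (hn : 0 < n) {c : ℝ}
    (h : ∑ i ∈ Finset.range n, a i ≤ ENNReal.ofReal (n * c)) :
    ∃ i < n, a i ≤ ENNReal.ofReal c := by
  have hsum : ∑ i ∈ Finset.range n, a i ≤ ∑ _i ∈ Finset.range n, ENNReal.ofReal c := by
    rwa [Finset.sum_const, Finset.card_range, nsmul_eq_mul, ← ENNReal.ofReal_natCast,
      ← ENNReal.ofReal_mul (Nat.cast_nonneg n)]
  obtain ⟨i, hi, hle⟩ := ENNReal.exists_le_of_sum_le (Finset.nonempty_range_iff.2 hn.ne') hsum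
  exact ⟨i, Finset.mem_range.1 hi, hle⟩

lemma IsCondDensity.entropy_add_hellinger_le (hle : 𝒢 ≤ mX) {F : X ≃ᵐ X}
    (hF : MeasurePreserving F M M) (hF𝒢 : Measurable[𝒢, 𝒢] F) {g r r' : X → ℝ}
    (hgm : ∫⁻ x, ENNReal.ofReal (g x) ∂M ≠ ∞) (hr : IsCondDensity 𝒢 M g r)
    (hr' : IsCondDensity 𝒢 M (g ∘ F.symm) r') :
    ∫⁻ x, ENNReal.ofReal (negMulLog (r x)) ∂M
        + ∫⁻ x, ENNReal.ofReal ((√(r (F.symm x)) - √(r' x)) ^ 2) ∂M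
      ≤ ∫⁻ x, ENNReal.ofReal (negMulLog (r' x)) ∂M := by
  have pullback (φ : X → ℝ≥0∞) : ∫⁻ x, φ (F.symm x) ∂M = ∫⁻ x, φ x ∂M :=
    (hF.symm F).lintegral_comp_emb F.symm.measurableEmbedding φ
  have gain := (hr.comp_symm hF hF𝒢 hr').lintegral_negMulLog_add_hellinger_le hle
    ((hr.measurable.mono hle le_rfl).comp F.symm.measurable) (fun x => hr.nonneg _)
    (fun x => hr.le_one _)
    (by simpa only [Function.comp_apply, pullback fun x => ENNReal.ofReal (r x), hr.lintegral_eq])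
  simpa only [Function.comp_apply, pullback fun x => ENNReal.ofReal (negMulLog (r x))] using gain

/-- Entropy is preserved by `F` and increased by conditioning, the gain being the squared
Hellinger distance. A total entropy of at most `n * D ^ 2` after `n` steps therefore leaves a step
with a gain of at most `D ^ 2`. -/
lemma exists_almost_invariant_condDensity (hle : 𝒢 ≤ mX) [SigmaFinite (M.trim hle)] {F : X ≃ᵐ X}
    (hF : MeasurePreserving F M M) (hF𝒢 : Measurable[𝒢, 𝒢] F) {g q : X → ℝ} (hg : Measurable g)
    (hg1 : ∀ x, g x ≤ 1) (hgm : ∫⁻ x, ENNReal.ofReal (g x) ∂M = 1) (hq : Measurable[𝒢] q)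
    (hq0 : ∀ x, 0 < q x) (hq1 : ∀ x, q x ≤ 1) {n : ℕ} (hn : 0 < n) {D : ℝ} (hD0 : 0 ≤ D)
    (hD : ∫⁻ x, ENNReal.ofReal (g x) * ENNReal.ofReal (-log (q (F^[n] x))) ∂M
        + ∫⁻ x, ENNReal.ofReal (q x) ∂M ≤ ENNReal.ofReal (n * D ^ 2)) :
    ∃ i < n, ∃ r r' : X → ℝ, IsCondDensity 𝒢 M (g ∘ F.symm^[i]) r ∧
      IsCondDensity 𝒢 M (g ∘ F.symm^[i + 1]) r' ∧
      ∫⁻ x, ENNReal.ofReal |r (F.symm x) - r' x| ∂M ≤ ENNReal.ofReal (2 * D) := by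
  choose r hr using fun i => exists_isCondDensity (M := M) hle
    (hg.comp (F.symm.measurable.iterate i)) fun x => hg1 _
  have mass (i : ℕ) : ∫⁻ x, ENNReal.ofReal (r i x) ∂M = 1 := by
    rw [(hr i).lintegral_eq, ← hgm]
    exact ((hF.symm F).iterate i).lintegral_comp hg.ennreal_ofReal
  have mass_symm (i : ℕ) : ∫⁻ x, ENNReal.ofReal (r i (F.symm x)) ∂M = 1 := by
    rw [← mass i]
    exact (hF.symm F).lintegral_comp_emb F.symm.measurableEmbedding fun x => ENNReal.ofReal (r i x)
  set Φ : ℕ → ℝ≥0∞ := fun i => ∫⁻ x, ENNReal.ofReal (negMulLog (r i x)) ∂M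
  set gain : ℕ → ℝ≥0∞ := fun i => ∫⁻ x, ENNReal.ofReal ((√(r i (F.symm x)) - √(r (i + 1) x)) ^ 2) ∂M
  have gain_step (i : ℕ) : Φ i + gain i ≤ Φ (i + 1) :=
    (hr i).entropy_add_hellinger_le hle hF hF𝒢
      (by rw [← (hr i).lintegral_eq, mass i]; exact ENNReal.one_ne_top) (hr (i + 1))
  have sum_gain_le (k : ℕ) : ∑ i ∈ Finset.range k, gain i ≤ Φ k := by
    induction k with
    | zero => simp
    | succ k ih =>
      rw [Finset.sum_range_succ]
      exact (add_le_add_left ih _).trans (gain_step k)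
  have Φ_le : Φ n ≤ ENNReal.ofReal (n * D ^ 2) := by
    refine ((hr n).lintegral_negMulLog_le_cross hle hq hq0 hq1).trans (le_trans (le_of_eq ?_) hD)
    rw [← lintegral_comp_symm_iterate_mul hF n (fun x => ENNReal.ofReal (g x))
      fun x => ENNReal.ofReal (-log (q x))]
    rfl
  obtain ⟨i, hi, gain_le⟩ := exists_lt_le_of_sum_le hn ((sum_gain_le n).trans Φ_le)
  have r_meas (i : ℕ) : Measurable (r i) := (hr i).measurable.mono hle le_rfl
  exact ⟨i, hi, r i, r (i + 1), hr i, hr (i + 1), lintegral_abs_sub_le_of_hellinger_le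
    ((r_meas i).comp F.symm.measurable) (r_meas (i + 1)) (fun x => (hr i).nonneg _)
    (hr (i + 1)).nonneg (mass_symm i) (mass (i + 1)) hD0 gain_le⟩

end ConditionalDensities

section ProjectiveAction

open scoped ENNReal

/-- The Euclidean plane. -/
abbrev Plane : Type := EuclideanSpace ℝ (Fin 2)

/-- The unit circle, which double covers the projective line. -/
abbrev UnitCircle : Type := Metric.sphere (0 : Plane) 1

/-- The group `SL(2,ℝ)`. -/
abbrev SL2 : Type := Matrix.SpecialLinearGroup (Fin 2) ℝ

instance : SecondCountableTopology SL2 :=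
  TopologicalSpace.secondCountableTopology_induced SL2 (Fin 2 → Fin 2 → ℝ) Subtype.val

instance : MeasurableSpace SL2 := borel SL2

instance : BorelSpace SL2 := ⟨rfl⟩

/-- The linear action of `SL(2,ℝ)` on the plane. -/
@[irreducible] noncomputable def act (g : SL2) : Plane →L[ℝ] Plane :=
  toEuclideanCLM (𝕜 := ℝ) (n := Fin 2) g.1

lemma act_apply (g : SL2) (v : Plane) (i : Fin 2) : act g v i = g.1 i 0 * v 0 + g.1 i 1 * v 1 := by
  have h : act g v i = (g.1 *ᵥ v.ofLp) i := by rw [act, ← ofLp_toEuclideanCLM]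
  rw [h, mulVec, dotProduct, Fin.sum_univ_two]

lemma act_mul (g h : SL2) : act (g * h) = act g * act h := by simp [act]

lemma act_mul_apply (g h : SL2) (v : Plane) : act (g * h) v = act g (act h v) := by
  rw [act_mul, mul_apply_eq_comp]

@[simp] lemma act_one : act 1 = 1 := by simp [act]

@[simp] lemma act_inv_act (g : SL2) (v : Plane) : act g⁻¹ (act g v) = v := by
  rw [← act_mul_apply, inv_mul_cancel, act_one, one_apply_eq_self]

lemma act_ne_zero (g : SL2) {v : Plane} (hv : v ≠ 0) : act g v ≠ 0 := fun h =>
  hv (by rw [← act_inv_act g v, h, map_zero])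

lemma norm_act (g : SL2) : ‖act g‖ = ‖g.1‖ := by rw [act, Matrix.l2_opNorm_toEuclideanCLM]

/- In dimension two `g⁻¹ = J gᵀ Jᵀ` with `J` the rotation by a right angle. -/
lemma norm_act_inv (g : SL2) : ‖act g⁻¹‖ = ‖act g‖ := by
  let Φ : Matrix (Fin 2) (Fin 2) ℝ ≃⋆ₐ[ℝ] (Plane →L[ℝ] Plane) := toEuclideanCLM (𝕜 := ℝ)
  obtain ⟨J, hJ, hinv⟩ : ∃ J ∈ unitary (Matrix (Fin 2) (Fin 2) ℝ),
      (g⁻¹).1 = J * star g.1 * star J := by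
    refine ⟨!![0, 1; -1, 0], Unitary.mem_iff.2 ⟨?_, ?_⟩,
      (Matrix.SpecialLinearGroup.coe_inv g).trans ((adjugate_fin_two _).trans ?_)⟩ <;>
    · ext i j
      fin_cases i <;> fin_cases j <;>
        simp [star_eq_conjTranspose, Matrix.mul_apply, vecMul, dotProduct, Fin.sum_univ_two]
  have hΦJ : Φ J ∈ unitary (Plane →L[ℝ] Plane) := Unitary.map_mem Φ hJ
  calc ‖act g⁻¹‖ = ‖Φ (J * star g.1 * star J)‖ := by rw [← hinv, act]
    _ = ‖Φ J * star (act g) * star (Φ J)‖ := by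
        rw [act, map_mul, map_mul, map_star, map_star]
    _ = ‖act g‖ := by
        rw [CStarRing.norm_mul_mem_unitary _ (Unitary.star_mem hΦJ),
          CStarRing.norm_mem_unitary_mul _ hΦJ,
          ContinuousLinearMap.star_eq_adjoint, LinearIsometryEquiv.norm_map]

lemma norm_le_norm_act_mul (g : SL2) (v : Plane) : ‖v‖ ≤ ‖act g‖ * ‖act g v‖ := by
  rw [← norm_act_inv g]
  simpa using (act g⁻¹).le_opNorm (act g v)

lemma norm_act_mul_le (g h : SL2) : ‖act (g * h)‖ ≤ ‖act g‖ * ‖act h‖ := by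
  rw [act_mul]
  exact norm_mul_le _ _

lemma one_le_norm_act (g : SL2) : 1 ≤ ‖act g‖ := by
  have h : (1 : ℝ) ≤ ‖act g‖ * ‖act g‖ := by
    simpa [norm_act_inv] using norm_act_mul_le g⁻¹ g
  nlinarith [norm_nonneg (act g)]

lemma measurePreserving_act (g : SL2) : MeasurePreserving (act g) volume volume := by
  refine ⟨(act g).continuous.measurable, ?_⟩
  have hdet : LinearMap.det (act g : Plane →ₗ[ℝ] Plane) = 1 := by
    rw [act, coe_toEuclideanCLM_eq_toEuclideanLin, toEuclideanLin_eq_toLin_orthonormal,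
      LinearMap.det_toLin, g.2]
  simpa [hdet] using Measure.map_linearMap_addHaar_eq_smul_addHaar (volume : Measure Plane)
    (f := (act g : Plane →ₗ[ℝ] Plane)) (by rw [hdet]; exact one_ne_zero)

lemma continuous_act : Continuous act := by
  simp only [funext act.eq_1]
  let L : Matrix (Fin 2) (Fin 2) ℝ →ₗ[ℝ] (Plane →L[ℝ] Plane) :=
    (toEuclideanCLM (𝕜 := ℝ) (n := Fin 2)).toAlgEquiv.toLinearMap
  exact L.continuous_of_finiteDimensional.comp continuous_subtype_val

lemma continuous_act_apply : Continuous fun x : SL2 × Plane => act x.1 x.2 :=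
  (continuous_act.comp continuous_fst).clm_apply continuous_snd

lemma measurable_act {X : Type*} {_ : MeasurableSpace X} {B : X → SL2} {V : X → Plane}
    (hB : Measurable B) (hV : Measurable V) : Measurable fun x => act (B x) (V x) :=
  continuous_act_apply.measurable.comp (hB.prodMk hV)

/-- Radial projection of the plane to the unit circle, with an arbitrary value at `0`. -/
noncomputable def radial (v : Plane) : UnitCircle :=
  if h : v = 0 then ⟨EuclideanSpace.single 0 1, by simp⟩
  else ⟨NormedSpace.normalize v, by simpa using h⟩

lemma coe_radial {v : Plane} (h : v ≠ 0) : (radial v : Plane) = NormedSpace.normalize v := by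
  simp [radial, h]

lemma radial_smul {c : ℝ} (hc : 0 < c) (v : Plane) : radial (c • v) = radial v := by
  simp [radial, hc.ne', NormedSpace.normalize_smul_of_pos hc]

lemma coe_ne_zero (ξ : UnitCircle) : (ξ : Plane) ≠ 0 := ne_zero_of_mem_unit_sphere ξ

lemma radial_coe (ξ : UnitCircle) : radial ξ = ξ := by
  ext1
  rw [coe_radial (coe_ne_zero ξ), NormedSpace.normalize_eq_self_of_norm_eq_one (by simp)]

lemma measurable_radial : Measurable radial := by
  refine Measurable.subtype_mk (f := fun v => (radial v : Plane)) ?_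
  have h : (fun v => (radial v : Plane)) = fun v : Plane =>
      if v = 0 then EuclideanSpace.single 0 1 else ‖v‖⁻¹ • v := by
    ext1 v
    by_cases h : v = 0 <;> simp [radial, h, NormedSpace.normalize]
  rw [h]
  exact Measurable.ite (measurableSet_singleton 0) measurable_const
    (measurable_norm.inv.smul measurable_id)

/-- The projective action of `SL(2,ℝ)` on the unit circle. -/
noncomputable def circleAct (g : SL2) (ξ : UnitCircle) : UnitCircle := radial (act g ξ)

lemma coe_circleAct (g : SL2) (ξ : UnitCircle) :
    (circleAct g ξ : Plane) = ‖act g ξ‖⁻¹ • act g ξ :=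
  coe_radial (act_ne_zero g (coe_ne_zero ξ))

lemma circleAct_radial (g : SL2) {v : Plane} (hv : v ≠ 0) :
    circleAct g (radial v) = radial (act g v) := by
  rw [circleAct, coe_radial hv, NormedSpace.normalize, map_smul,
    radial_smul (inv_pos.2 (norm_pos_iff.2 hv))]

lemma circleAct_mul (g h : SL2) (ξ : UnitCircle) :
    circleAct (g * h) ξ = circleAct g (circleAct h ξ) := by
  conv_rhs => rw [circleAct.eq_def h]
  rw [circleAct_radial _ (act_ne_zero h (coe_ne_zero ξ)), circleAct, act_mul_apply]

@[simp] lemma circleAct_one (ξ : UnitCircle) : circleAct 1 ξ = ξ := by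
  rw [circleAct, act_one, one_apply_eq_self, radial_coe]

lemma continuous_circleAct_uncurry :
    Continuous fun x : SL2 × UnitCircle => circleAct x.1 x.2 := by
  rw [Topology.IsInducing.subtypeVal.continuous_iff]
  have h : Continuous fun x : SL2 × UnitCircle => act x.1 (x.2 : Plane) :=
    (continuous_act.comp continuous_fst).clm_apply (continuous_subtype_val.comp continuous_snd)
  have heq : Subtype.val ∘ (fun x : SL2 × UnitCircle => circleAct x.1 x.2) =
      fun x : SL2 × UnitCircle => ‖act x.1 (x.2 : Plane)‖⁻¹ • act x.1 (x.2 : Plane) :=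
    funext fun x => coe_circleAct x.1 x.2
  rw [heq]
  exact (h.norm.inv₀ fun x => norm_ne_zero_iff.2 (act_ne_zero x.1 (coe_ne_zero x.2))).smul h

lemma continuous_circleAct (g : SL2) : Continuous (circleAct g) :=
  continuous_circleAct_uncurry.comp (Continuous.prodMk_right g)

lemma norm_normalize_sub_normalize_le {E : Type*} [NormedAddCommGroup E] [NormedSpace ℝ E] {v : E}
    (hv : v ≠ 0) (w : E) :
    ‖NormedSpace.normalize v - NormedSpace.normalize w‖ ≤ 2 * ‖w - v‖ / ‖v‖ := by
  have hv0 : 0 < ‖v‖ := norm_pos_iff.2 hv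
  have hwn : ‖‖w‖ • NormedSpace.normalize w - ‖v‖ • NormedSpace.normalize w‖ ≤ ‖w - v‖ := by
    have h1 : ‖NormedSpace.normalize w‖ ≤ 1 := by
      by_cases hw : w = 0
      · simp [hw]
      · exact (NormedSpace.norm_normalize_eq_one_iff.2 hw).le
    rw [← sub_smul, norm_smul]
    exact (mul_le_of_le_one_right (norm_nonneg _) h1).trans (abs_norm_sub_norm_le w v)
  rw [NormedSpace.norm_smul_normalize] at hwn
  have h : ‖v‖ * ‖NormedSpace.normalize v - NormedSpace.normalize w‖ ≤ 2 * ‖w - v‖ := by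
    calc ‖v‖ * ‖NormedSpace.normalize v - NormedSpace.normalize w‖
        = ‖v - ‖v‖ • NormedSpace.normalize w‖ := by
          rw [← norm_smul_of_nonneg (norm_nonneg v), smul_sub, NormedSpace.norm_smul_normalize]
      _ ≤ ‖v - w‖ + ‖w - ‖v‖ • NormedSpace.normalize w‖ := norm_sub_le_norm_sub_add_norm_sub _ _ _
      _ ≤ 2 * ‖w - v‖ := by rw [norm_sub_rev v w]; linarith
  rwa [le_div_iff₀' hv0]

lemma dist_radial_act_le (g : SL2) (ξ : UnitCircle) {u : Plane} {ε : ℝ} (hu : ‖u‖ ≤ ε)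
    (hε : ε * ‖act g‖ ^ 2 < 1) :
    dist (radial (act g ((ξ : Plane) + u))) (circleAct g ξ) ≤ 2 * (ε * ‖act g‖ ^ 2) := by
  have hξ : ‖(ξ : Plane)‖ = 1 := by simp
  have hg := one_le_norm_act g
  have hgξ : 1 ≤ ‖act g‖ * ‖act g ξ‖ := hξ.symm.le.trans (norm_le_norm_act_mul g ξ)
  have hgu : ‖act g u‖ ≤ ‖act g‖ * ε := (act g).le_opNorm_of_le hu
  have hε0 : 0 ≤ ε := (norm_nonneg u).trans hu
  have hξu : (ξ : Plane) + u ≠ 0 := fun h => by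
    have h1 : ‖u‖ = 1 := by rw [← hξ, eq_neg_of_add_eq_zero_left h, norm_neg]
    nlinarith
  have hne := act_ne_zero g (coe_ne_zero ξ)
  rw [dist_comm, circleAct, Subtype.dist_eq, coe_radial hne, coe_radial (act_ne_zero g hξu),
    dist_eq_norm]
  refine (norm_normalize_sub_normalize_le hne _).trans ?_
  rw [map_add, add_sub_cancel_left, div_le_iff₀ (norm_pos_iff.2 hne)]
  nlinarith [mul_le_mul_of_nonneg_left hgξ (mul_nonneg hε0 (norm_nonneg (act g)))]

end ProjectiveAction

section Cocycle

variable {Ω G : Type*}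

/-- The iterates `B(T^{n-1}ω) ⋯ B(ω)` of a cocycle over `T`. -/
def cocycle [Monoid G] (T : Ω → Ω) (B : Ω → G) : ℕ → Ω → G
  | 0, _ => 1
  | n + 1, ω => B (T^[n] ω) * cocycle T B n ω

lemma cocycle_add [Monoid G] (T : Ω → Ω) (B : Ω → G) (m n : ℕ) (ω : Ω) :
    cocycle T B (m + n) ω = cocycle T B m (T^[n] ω) * cocycle T B n ω := by
  induction m with
  | zero => simp [cocycle]
  | succ m ih => rw [Nat.succ_add, cocycle, ih, cocycle, ← mul_assoc, Function.iterate_add_apply]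

lemma cocycle_iterate [Monoid G] (T : Ω → Ω) (B : Ω → G) (k n : ℕ) (ω : Ω) :
    cocycle T^[k] (cocycle T B k) n ω = cocycle T B (k * n) ω := by
  induction n with
  | zero => rfl
  | succ n ih =>
    rw [cocycle, ih, Nat.mul_succ, add_comm (k * n), cocycle_add, ← Function.iterate_mul]

lemma cocycle_inv_of_rightInverse [Group G] {T T' : Ω → Ω} (B : Ω → G)
    (hT : Function.RightInverse T' T) (n : ℕ) (ω : Ω) :
    cocycle T' (fun ω => (B (T' ω))⁻¹) n ω = (cocycle T B n (T'^[n] ω))⁻¹ := by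
  induction n with
  | zero => simp [cocycle]
  | succ n ih =>
    rw [cocycle, ih, cocycle_add T B n 1, _root_.mul_inv_rev]
    simp only [Function.iterate_succ_apply']
    simp [cocycle, hT _]

lemma measurable_cocycle [Monoid G] {_ : MeasurableSpace Ω} [MeasurableSpace G] [MeasurableMul₂ G]
    {T : Ω → Ω} {B : Ω → G} (hT : Measurable T) (hB : Measurable B) (n : ℕ) :
    Measurable (cocycle T B n) := by
  induction n with
  | zero => exact measurable_const
  | succ n ih => exact (hB.comp (hT.iterate n)).mul ih

lemma norm_cocycle_le {T : Ω → Ω} {B : Ω → SL2} {K : ℝ} (hK : ∀ ω, ‖act (B ω)‖ ≤ K) (n : ℕ)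
    (ω : Ω) : ‖act (cocycle T B n ω)‖ ≤ K ^ n := by
  induction n with
  | zero => simp [cocycle]
  | succ n ih =>
    rw [cocycle, pow_succ']
    exact (norm_act_mul_le _ _).trans (mul_le_mul (hK _) ih (norm_nonneg _)
      ((norm_nonneg _).trans (hK ω)))

variable {mΩ : MeasurableSpace Ω}

/-- The skew product `(ω, v) ↦ (Tω, B(ω)v)` on `Ω × ℝ²` defined by a measurable cocycle. -/
noncomputable def skewEquiv (T : Ω ≃ᵐ Ω) {B : Ω → SL2} (hB : Measurable B) :
    Ω × Plane ≃ᵐ Ω × Plane where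
  toFun x := (T x.1, act (B x.1) x.2)
  invFun x := (T.symm x.1, act (B (T.symm x.1))⁻¹ x.2)
  left_inv x := by simp
  right_inv x := by
    have h := act_inv_act (B (T.symm x.1))⁻¹ x.2
    simp_all
  measurable_toFun := (T.measurable.comp measurable_fst).prodMk
    (measurable_act (hB.comp measurable_fst) measurable_snd)
  measurable_invFun := (T.symm.measurable.comp measurable_fst).prodMk
    (measurable_act ((hB.comp (T.symm.measurable.comp measurable_fst)).inv) measurable_snd)

lemma skewEquiv_iterate (T : Ω ≃ᵐ Ω) {B : Ω → SL2} (hB : Measurable B) (n : ℕ) (x : Ω × Plane) :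
    (skewEquiv T hB)^[n] x = (T^[n] x.1, act (cocycle T B n x.1) x.2) := by
  induction n with
  | zero => simp [cocycle]
  | succ n ih =>
    simp only [Function.iterate_succ_apply', ih, cocycle, act_mul_apply]
    rfl

lemma measurePreserving_skewEquiv {μ : Measure Ω} [SFinite μ] {T : Ω ≃ᵐ Ω}
    (hT : MeasurePreserving T μ μ) {B : Ω → SL2} (hB : Measurable B) (c : ENNReal) :
    MeasurePreserving (skewEquiv T hB) (μ.prod (c • volume)) (μ.prod (c • volume)) :=
  hT.skew_product (g := fun ω v => act (B ω) v)
    (measurable_act (hB.comp measurable_fst) measurable_snd)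
    (Eventually.of_forall fun ω => by rw [Measure.map_smul, (measurePreserving_act (B ω)).map_eq])

end Cocycle

section AlmostInvariance

open scoped ENNReal
open ProbabilityTheory

variable {X : Type*} {𝒢 mX : MeasurableSpace X} {M : Measure X}

lemma lintegral_ofReal_mul_le_add {s r : X → ℝ} (hs : Measurable s) (hr : Measurable r)
    {h : X → ℝ≥0∞} (hh : Measurable h) {C : ℝ≥0∞} (hC : ∀ x, h x ≤ C) :
    ∫⁻ x, ENNReal.ofReal (s x) * h x ∂M
      ≤ ∫⁻ x, ENNReal.ofReal (r x) * h x ∂M + (∫⁻ x, ENNReal.ofReal |s x - r x| ∂M) * C := by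
  have hrh : Measurable fun x => ENNReal.ofReal (r x) * h x := hr.ennreal_ofReal.mul hh
  have habs : Measurable fun x => ENNReal.ofReal |s x - r x| :=
    (continuous_abs.measurable.comp (hs.sub hr)).ennreal_ofReal
  rw [← lintegral_mul_const _ habs, ← lintegral_add_left hrh]
  refine lintegral_mono fun x => ?_
  calc ENNReal.ofReal (s x) * h x
      ≤ (ENNReal.ofReal (r x) + ENNReal.ofReal |s x - r x|) * h x := by
        gcongr
        refine le_trans (ENNReal.ofReal_le_ofReal ?_) ENNReal.ofReal_add_le
        linarith [le_abs_self (s x - r x)]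
    _ ≤ ENNReal.ofReal (r x) * h x + ENNReal.ofReal |s x - r x| * C := by
        rw [add_mul]
        gcongr
        exact hC x

lemma sub_le_of_lintegral_eq_ofReal {s r : X → ℝ} (hs : Measurable s) (hr : Measurable r)
    {h : X → ℝ≥0∞} (hh : Measurable h) {C d : ℝ} (hC0 : 0 ≤ C) (hd : 0 ≤ d)
    (hC : ∀ x, h x ≤ ENNReal.ofReal C)
    (hsr : ∫⁻ x, ENNReal.ofReal |s x - r x| ∂M ≤ ENNReal.ofReal d) {a b : ℝ} (hb0 : 0 ≤ b)
    (ha : ∫⁻ x, ENNReal.ofReal (s x) * h x ∂M = ENNReal.ofReal a)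
    (hb : ∫⁻ x, ENNReal.ofReal (r x) * h x ∂M = ENNReal.ofReal b) : a - b ≤ d * C := by
  have key : ENNReal.ofReal a ≤ ENNReal.ofReal (b + d * C) := by
    rw [← ha, ENNReal.ofReal_add hb0 (by positivity), ← hb, ENNReal.ofReal_mul hd]
    exact (lintegral_ofReal_mul_le_add hs hr hh hC).trans (by gcongr)
  linarith [(ENNReal.ofReal_le_ofReal_iff (by positivity)).1 key]

lemma lintegral_comp_symm_iterate_mul_ofReal {F : X ≃ᵐ X} (hF : MeasurePreserving F M M)
    {g h : X → ℝ} (hg : Measurable g) (hh : Measurable h) (h0 : ∀ x, 0 ≤ h x) (j : ℕ)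
    (hint : Integrable (fun x => h (F^[j] x)) (M.withDensity fun x => ENNReal.ofReal (g x))) :
    ∫⁻ x, ENNReal.ofReal (g (F.symm^[j] x)) * ENNReal.ofReal (h x) ∂M
      = ENNReal.ofReal (∫ x, h (F^[j] x) ∂(M.withDensity fun x => ENNReal.ofReal (g x))) := by
  have hm : Measurable fun x => ENNReal.ofReal (h (F^[j] x)) :=
    (hh.comp (F.measurable.iterate j)).ennreal_ofReal
  rw [ofReal_integral_eq_lintegral_ofReal hint (Eventually.of_forall fun x => h0 _),
    lintegral_withDensity_eq_lintegral_mul M hg.ennreal_ofReal hm]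
  exact lintegral_comp_symm_iterate_mul hF j (fun x => ENNReal.ofReal (g x))
    fun x => ENNReal.ofReal (h x)

/- At the time `j` at which the conditional density is almost invariant, `h₁` and `h₂` are
integrated against almost the same `𝒢`-measurable density. -/
lemma exists_abs_integral_iterate_sub_le (hle : 𝒢 ≤ mX) [SigmaFinite (M.trim hle)] {F : X ≃ᵐ X}
    (hF : MeasurePreserving F M M) (hF𝒢 : Measurable[𝒢, 𝒢] F) {g q : X → ℝ} (hg : Measurable g)
    (hg1 : ∀ x, g x ≤ 1) {N : Measure X} [IsProbabilityMeasure N]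
    (hN : N = M.withDensity fun x => ENNReal.ofReal (g x)) (hq : Measurable[𝒢] q)
    (hq0 : ∀ x, 0 < q x) (hq1 : ∀ x, q x ≤ 1) {n : ℕ} (hn : 0 < n) {D : ℝ} (hD0 : 0 ≤ D)
    (hD : ∫⁻ x, ENNReal.ofReal (-log (q (F^[n] x))) ∂N + ∫⁻ x, ENNReal.ofReal (q x) ∂M
      ≤ ENNReal.ofReal (n * D ^ 2))
    {h₁ h₂ : X → ℝ} (hh₁ : Measurable[𝒢] (h₁ ∘ F)) (hh₂ : Measurable[𝒢] h₂) {C : ℝ} (hC : 0 ≤ C)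
    (h₁0 : ∀ x, 0 ≤ h₁ x) (h₂0 : ∀ x, 0 ≤ h₂ x) (h₁C : ∀ x, h₁ x ≤ C) (h₂C : ∀ x, h₂ x ≤ C)
    (heq : ∀ r : X → ℝ, Measurable[𝒢] r →
      ∫⁻ x, ENNReal.ofReal (r x) * ENNReal.ofReal (h₁ x) ∂M
        = ∫⁻ x, ENNReal.ofReal (r x) * ENNReal.ofReal (h₂ x) ∂M) :
    ∃ j ≤ n, |∫ x, (h₁ (F^[j] x) - h₂ (F^[j] x)) ∂N| ≤ 2 * D * C := by
  have lintegral_N {h : X → ℝ≥0∞} (hh : Measurable h) :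
      ∫⁻ x, h x ∂N = ∫⁻ x, ENNReal.ofReal (g x) * h x ∂M := by
    rw [hN]
    exact lintegral_withDensity_eq_lintegral_mul M hg.ennreal_ofReal hh
  have h₁m : Measurable h₁ := by
    simpa [Function.comp_def] using (hh₁.mono hle le_rfl).comp F.symm.measurable
  have h₂m : Measurable h₂ := hh₂.mono hle le_rfl
  have hqn : Measurable fun x => ENNReal.ofReal (-log (q (F^[n] x))) :=
    (measurable_log.comp ((hq.mono hle le_rfl).comp (F.measurable.iterate n))).neg.ennreal_ofReal
  rw [lintegral_N hqn] at hD
  obtain ⟨i, hi, r, r', hr, hr', hrr'⟩ := exists_almost_invariant_condDensity hle hF hF𝒢 hg hg1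
    (by simpa using (lintegral_N measurable_one).symm) hq hq0 hq1 hn hD0 hD
  have hrm : Measurable fun x => r (F.symm x) :=
    (hr.measurable.mono hle le_rfl).comp F.symm.measurable
  have hrm' : Measurable r' := hr'.measurable.mono hle le_rfl
  have integrable {h : X → ℝ} (hm : Measurable h) (h0 : ∀ x, 0 ≤ h x) (hC : ∀ x, h x ≤ C) :
      Integrable (fun x => h (F^[i + 1] x)) N :=
    Integrable.of_bound (hm.comp (F.measurable.iterate _)).aestronglyMeasurable C
      (Eventually.of_forall fun x => by rw [Real.norm_of_nonneg (h0 _)]; exact hC _)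
  have int₁ := integrable h₁m h₁0 h₁C
  have int₂ := integrable h₂m h₂0 h₂C
  have mean₁ : ∫⁻ x, ENNReal.ofReal (r (F.symm x)) * ENNReal.ofReal (h₁ x) ∂M
      = ENNReal.ofReal (∫ x, h₁ (F^[i + 1] x) ∂N) := by
    rw [hr.lintegral_comp_symm_mul hF (h := fun x => ENNReal.ofReal (h₁ x)) hh₁.ennreal_ofReal]
    subst hN
    exact lintegral_comp_symm_iterate_mul_ofReal hF hg h₁m h₁0 _ int₁
  have mean₂ : ∫⁻ x, ENNReal.ofReal (r' x) * ENNReal.ofReal (h₁ x) ∂M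
      = ENNReal.ofReal (∫ x, h₂ (F^[i + 1] x) ∂N) := by
    rw [heq r' hr'.measurable, hr'.lintegral_mul _ hh₂.ennreal_ofReal]
    subst hN
    exact lintegral_comp_symm_iterate_mul_ofReal hF hg h₂m h₂0 _ int₂
  have bound (x : X) : ENNReal.ofReal (h₁ x) ≤ ENNReal.ofReal C := ENNReal.ofReal_le_ofReal (h₁C x)
  refine ⟨i + 1, hi, ?_⟩
  rw [integral_sub int₁ int₂, abs_sub_le_iff]
  exact ⟨sub_le_of_lintegral_eq_ofReal hrm hrm' h₁m.ennreal_ofReal hC (by positivity) bound hrr'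
      (integral_nonneg fun x => h₂0 _) mean₁ mean₂,
    sub_le_of_lintegral_eq_ofReal hrm' hrm h₁m.ennreal_ofReal hC (by positivity) bound
      (by simpa only [abs_sub_comm] using hrr') (integral_nonneg fun x => h₁0 _) mean₂ mean₁⟩

end AlmostInvariance

section ConditionalIntegration

open scoped ENNReal

variable {Ω : Type*} {ℱ mΩ : MeasurableSpace Ω} {μ : Measure Ω}

lemma lintegral_ofReal_condExp_mul (hℱ : ℱ ≤ mΩ) [SigmaFinite (μ.trim hℱ)] {g : Ω → ℝ}
    (hg : Measurable g) (hint : Integrable g μ) (hg0 : ∀ ω, 0 ≤ g ω) {h : Ω → ℝ≥0∞}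
    (hh : Measurable[ℱ] h) :
    ∫⁻ ω, ENNReal.ofReal ((μ[g | ℱ]) ω) * h ω ∂μ = ∫⁻ ω, ENNReal.ofReal (g ω) * h ω ∂μ := by
  rw [← lintegral_condLExp_mul hℱ hg.ennreal_ofReal hh]
  refine lintegral_congr_ae ?_
  filter_upwards [condLExp_ofReal ℱ hint (Eventually.of_forall hg0)] with ω hω
  rw [hω]

lemma condExp_mul_const_add_const [IsFiniteMeasure μ] (hℱ : ℱ ≤ mΩ) {b : Ω → ℝ}
    (hb : Integrable b μ) (c d : ℝ) :
    μ[fun ω => b ω * c + d | ℱ] =ᵐ[μ] fun ω => (μ[b | ℱ]) ω * c + d := by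
  have hadd := condExp_add (hb.smul c) (integrable_const d) ℱ
  filter_upwards [hadd, condExp_smul c b ℱ] with ω h₁ h₂
  have hfun : (fun ω => b ω * c + d) = c • b + fun _ => d := by
    ext ω
    simp [mul_comm]
  rw [hfun, h₁, Pi.add_apply, h₂, condExp_const hℱ]
  simp [mul_comm]

lemma lintegral_prod_mul_ofReal_condExp [IsFiniteMeasure μ] (hℱ : ℱ ≤ mΩ) {E : Type*}
    {mE : MeasurableSpace E} (M : Measure E) [SFinite M] {b b' : Ω → ℝ} (hb : Measurable b)
    (hb' : Measurable[ℱ] b') (hb1 : ∀ ω, |b ω| ≤ 1) (hbb' : b' =ᵐ[μ] μ[b | ℱ]) {ψ : E → ℝ}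
    (hψ : Measurable ψ) (hψ1 : ∀ v, |ψ v| ≤ 1) {r : Ω × E → ℝ} (hr : Measurable[ℱ.prod mE] r) :
    ∫⁻ x, ENNReal.ofReal (r x) * ENNReal.ofReal (b x.1 * ψ x.2 + 1) ∂(μ.prod M)
      = ∫⁻ x, ENNReal.ofReal (r x) * ENNReal.ofReal (b' x.1 * ψ x.2 + 1) ∂(μ.prod M) := by
  have hrm : Measurable r := hr.mono (sup_le_sup (MeasurableSpace.comap_mono hℱ) le_rfl) le_rfl
  have hm {β : Ω → ℝ} (hβ : Measurable β) : Measurable fun x : Ω × E =>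
      ENNReal.ofReal (r x) * ENNReal.ofReal (β x.1 * ψ x.2 + 1) :=
    hrm.ennreal_ofReal.mul
      (((hβ.comp measurable_fst).mul (hψ.comp measurable_snd)).add_const 1).ennreal_ofReal
  rw [lintegral_prod_symm _ (hm hb).aemeasurable,
    lintegral_prod_symm _ (hm (hb'.mono hℱ le_rfl)).aemeasurable]
  refine lintegral_congr fun v => ?_
  have hrv : Measurable[ℱ] fun ω => ENNReal.ofReal (r (ω, v)) :=
    (hr.comp (@measurable_prodMk_right Ω E ℱ mE v)).ennreal_ofReal
  have hbi : Integrable b μ :=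
    Integrable.of_bound hb.aestronglyMeasurable 1 (Eventually.of_forall hb1)
  have nonneg (ω : Ω) : 0 ≤ b ω * ψ v + 1 := by
    have : |b ω * ψ v| ≤ 1 := by
      rw [abs_mul]
      exact mul_le_one₀ (hb1 ω) (abs_nonneg _) (hψ1 v)
    linarith [neg_abs_le (b ω * ψ v)]
  simp only [mul_comm (ENNReal.ofReal (r _))]
  rw [← lintegral_ofReal_condExp_mul hℱ ((hb.mul_const _).add_const 1)
    ((hbi.mul_const _).add (integrable_const 1)) nonneg hrv]
  refine lintegral_congr_ae ?_
  filter_upwards [condExp_mul_const_add_const hℱ hbi (ψ v) 1, hbb'] with ω h₁ h₂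
  rw [h₁, h₂]

lemma sigmaFinite_trim_prod [IsProbabilityMeasure μ] {E : Type*}
    {mE : MeasurableSpace E} (M : Measure E) [SigmaFinite M]
    (hle : ℱ.prod mE ≤ mΩ.prod mE) : SigmaFinite ((μ.prod M).trim hle) := by
  have hsnd : Measurable[ℱ.prod mE, mE] (Prod.snd : Ω × E → E) := @measurable_snd Ω E ℱ mE
  have hmap : @Measure.map _ _ (ℱ.prod mE) _ Prod.snd ((μ.prod M).trim hle) = M := by
    ext s hs
    rw [@Measure.map_apply _ _ (ℱ.prod mE) _ _ _ hsnd s hs, trim_measurableSet_eq hle (hsnd hs),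
      ← Measure.map_apply measurable_snd hs, Measure.map_snd_prod, measure_univ, one_smul]
  exact @SigmaFinite.of_map _ _ (ℱ.prod mE) _ _ Prod.snd
    (@Measurable.aemeasurable _ _ (ℱ.prod mE) _ _ _ hsnd) (by rw [hmap]; infer_instance)

end ConditionalIntegration

section Smoothing

open scoped ENNReal
open ProbabilityTheory

variable {Ω : Type*} {mΩ : MeasurableSpace Ω} {μ : Measure Ω}

lemma map_add_compProd_prod_restrict [SFinite μ] {Y E : Type*} {mY : MeasurableSpace Y}
    [AddCommGroup E] {mE : MeasurableSpace E} [MeasurableAdd₂ E] [MeasurableNeg E]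
    {m : Measure E} [SFinite m] [m.IsAddLeftInvariant] (ν : Kernel Ω Y) [IsSFiniteKernel ν]
    {φ : Y → E} (hφ : Measurable φ) {A : Set E} (hA : MeasurableSet A) :
    ((μ ⊗ₘ ν).prod (m.restrict A)).map (fun z => (z.1.1, φ z.1.2 + z.2))
      = (μ.prod m).withDensity fun x => ν x.1 {y | -φ y + x.2 ∈ A} := by
  have hadd : Measurable fun z : (Ω × Y) × E => (z.1.1, φ z.1.2 + z.2) :=
    measurable_fst.fst.prodMk ((hφ.comp measurable_fst.snd).add measurable_snd)
  have hS : MeasurableSet {p : Y × E | -φ p.1 + p.2 ∈ A} :=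
    ((hφ.comp measurable_fst).neg.add measurable_snd) hA
  have hdens : Measurable fun x : Ω × E => ν x.1 {y | -φ y + x.2 ∈ A} :=
    Kernel.measurable_kernel_prodMk_left (κ := ν.comap Prod.fst measurable_fst)
      (((hφ.comp measurable_snd).neg.add measurable_fst.snd) hA)
  refine Measure.ext_of_lintegral _ fun h hh => ?_
  have translate (ω : Ω) (y : Y) : ∫⁻ u in A, h (ω, φ y + u) ∂m
      = ∫⁻ v, {p : Y × E | -φ p.1 + p.2 ∈ A}.indicator 1 (y, v) * h (ω, v) ∂m := by
    rw [← lintegral_indicator hA, ← lintegral_add_left_eq_self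
      (fun v => {p : Y × E | -φ p.1 + p.2 ∈ A}.indicator 1 (y, v) * h (ω, v)) (φ y)]
    refine lintegral_congr fun u => ?_
    by_cases hu : u ∈ A <;> simp [indicator, hu]
  have hm₁ : Measurable fun z : (Ω × Y) × E => h (z.1.1, φ z.1.2 + z.2) := hh.comp hadd
  have hm₂ : Measurable fun x : Ω × E => ν x.1 {y | -φ y + x.2 ∈ A} * h x := hdens.mul hh
  rw [lintegral_map hh hadd, lintegral_prod _ hm₁.aemeasurable,
    Measure.lintegral_compProd hm₁.lintegral_prod_right',
    lintegral_withDensity_eq_lintegral_mul _ hdens hh]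
  simp only [Pi.mul_apply]
  rw [lintegral_prod _ hm₂.aemeasurable]
  refine lintegral_congr fun ω => ?_
  simp only [translate]
  have hhω : Measurable fun v => h (ω, v) := hh.comp measurable_prodMk_left
  rw [lintegral_lintegral_swap
    ((measurable_one.indicator hS).mul (hhω.comp measurable_snd)).aemeasurable]
  refine lintegral_congr fun v => ?_
  have hm : Measurable fun y =>
      {p : Y × E | -φ p.1 + p.2 ∈ A}.indicator (1 : Y × E → ℝ≥0∞) (y, v) :=
    (measurable_one.indicator hS).comp measurable_prodMk_right
  rw [lintegral_mul_const _ hm]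
  exact congrArg (· * h (ω, v)) (lintegral_indicator_one (measurable_prodMk_right hS))

/-- Lebesgue measure on the plane, normalised so that the ball of radius `ε` has mass one. -/
noncomputable def scaledVolume (ε : ℝ) : Measure Plane :=
  (volume (Metric.ball (0 : Plane) ε))⁻¹ • volume

lemma isAddHaarMeasure_scaledVolume {ε : ℝ} (hε : 0 < ε) : (scaledVolume ε).IsAddHaarMeasure :=
  Measure.IsAddHaarMeasure.smul _ (ENNReal.inv_ne_zero.2 measure_ball_lt_top.ne)
    (ENNReal.inv_ne_top.2 (Metric.measure_ball_pos _ _ hε).ne')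

/-- The uniform distribution on the ball of radius `ε`, used to smooth measures on the plane. -/
noncomputable def ballNoise (ε : ℝ) : Measure Plane :=
  (scaledVolume ε).restrict (Metric.ball 0 ε)

lemma isProbabilityMeasure_ballNoise {ε : ℝ} (hε : 0 < ε) : IsProbabilityMeasure (ballNoise ε) := by
  refine ⟨?_⟩
  rw [ballNoise, Measure.restrict_apply_univ, scaledVolume, Measure.smul_apply, smul_eq_mul]
  exact ENNReal.inv_mul_cancel (Metric.measure_ball_pos _ _ hε).ne' measure_ball_lt_top.ne

lemma ae_norm_le_ballNoise (ε : ℝ) : ∀ᵐ u ∂ballNoise ε, ‖u‖ ≤ ε := by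
  filter_upwards [ae_restrict_mem Metric.isOpen_ball.measurableSet] with u hu
  exact (mem_ball_zero_iff.1 hu).le

/-- The joint law of `(ω, ξ + u)`, where `ω` has law `μ`, the direction `ξ` has law `ν ω` and `u` is
an independent uniform noise of size `ε`. -/
noncomputable def smoothedLaw (μ : Measure Ω) (ν : Kernel Ω UnitCircle) (ε : ℝ) :
    Measure (Ω × Plane) :=
  ((μ ⊗ₘ ν).prod (ballNoise ε)).map fun z => (z.1.1, z.1.2 + z.2)

lemma measurable_add_noise :
    Measurable fun z : (Ω × UnitCircle) × Plane => (z.1.1, (z.1.2 : Plane) + z.2) :=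
  measurable_fst.fst.prodMk ((measurable_subtype_coe.comp measurable_fst.snd).add measurable_snd)

lemma ae_norm_snd_le_smoothedLaw (ν : Kernel Ω UnitCircle) (ε : ℝ) :
    ∀ᵐ x ∂smoothedLaw μ ν ε, ‖x.2‖ ≤ 1 + ε := by
  rw [smoothedLaw, ae_map_iff measurable_add_noise.aemeasurable
    (measurableSet_le measurable_snd.norm measurable_const)]
  filter_upwards [Measure.quasiMeasurePreserving_snd.ae (ae_norm_le_ballNoise ε)] with z hz
  have hξ : ‖(z.1.2 : Plane)‖ = 1 := by simp
  exact (norm_add_le _ _).trans (by linarith)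

/-- The density of the smoothed law with respect to the product of `μ` and scaled Lebesgue measure:
the proportion of directions at distance less than `ε` from the given point. -/
noncomputable def smoothedDensity (ν : Kernel Ω UnitCircle) (ε : ℝ) (x : Ω × Plane) : ℝ :=
  (ν x.1).real {ξ | -(ξ : Plane) + x.2 ∈ Metric.ball 0 ε}

lemma measurable_smoothedDensity (ν : Kernel Ω UnitCircle) [IsMarkovKernel ν] (ε : ℝ) :
    Measurable (smoothedDensity ν ε) :=
  (Kernel.measurable_kernel_prodMk_left (κ := ν.comap Prod.fst measurable_fst)
    (((measurable_subtype_coe.comp measurable_snd).neg.add measurable_fst.snd)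
      Metric.isOpen_ball.measurableSet)).ennreal_toReal

variable (ν : Kernel Ω UnitCircle) [IsMarkovKernel ν]

lemma smoothedLaw_eq_withDensity [SFinite μ] {ε : ℝ} (hε : 0 < ε) :
    smoothedLaw μ ν ε
      = (μ.prod (scaledVolume ε)).withDensity fun x => ENNReal.ofReal (smoothedDensity ν ε x) := by
  have := isAddHaarMeasure_scaledVolume hε
  simp only [smoothedDensity, Measure.real, ENNReal.ofReal_toReal (measure_ne_top _ _)]
  exact map_add_compProd_prod_restrict ν measurable_subtype_coe Metric.isOpen_ball.measurableSet

variable [IsProbabilityMeasure μ] {ε : ℝ}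

lemma isProbabilityMeasure_smoothedLaw (hε : 0 < ε) : IsProbabilityMeasure (smoothedLaw μ ν ε) := by
  have := isProbabilityMeasure_ballNoise hε
  exact Measure.isProbabilityMeasure_map measurable_add_noise.aemeasurable

lemma map_fst_smoothedLaw (hε : 0 < ε) : (smoothedLaw μ ν ε).map Prod.fst = μ := by
  have := isProbabilityMeasure_ballNoise hε
  rw [smoothedLaw, Measure.map_map measurable_fst measurable_add_noise]
  change ((μ ⊗ₘ ν).prod (ballNoise ε)).map (Prod.fst ∘ Prod.fst) = μ
  rw [← Measure.map_map measurable_fst measurable_fst, Measure.map_fst_prod, measure_univ,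
    one_smul, ← Measure.fst, Measure.fst_compProd]

end Smoothing

section EntropyEstimate

open scoped ENNReal
open ProbabilityTheory

/-- An integrable positive density on the plane with polynomial decay, scaled by `ε ^ 2` so that its
mass relative to `scaledVolume ε` does not depend on `ε`; it is the reference measure of the entropy
estimate. -/
noncomputable def refDensity (ε : ℝ) (v : Plane) : ℝ := ε ^ 2 * (1 + ‖v‖) ^ (-3 : ℝ)

lemma refDensity_pos {ε : ℝ} (hε : 0 < ε) (v : Plane) : 0 < refDensity ε v := by
  unfold refDensity
  positivity

lemma refDensity_le_one {ε : ℝ} (hε : 0 < ε) (hε1 : ε ≤ 1) (v : Plane) : refDensity ε v ≤ 1 :=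
  mul_le_one₀ (pow_le_one₀ hε.le hε1) (by positivity)
    (rpow_le_one_of_one_le_of_nonpos (by linarith [norm_nonneg v]) (by norm_num))

lemma measurable_refDensity (ε : ℝ) : Measurable (refDensity ε) :=
  ((measurable_norm.const_add 1).pow_const _).const_mul _

lemma neg_log_refDensity {ε : ℝ} (hε : 0 < ε) (v : Plane) :
    -log (refDensity ε v) = -(2 * log ε) + 3 * log (1 + ‖v‖) := by
  have hv : 0 < 1 + ‖v‖ := by positivity
  rw [refDensity, log_mul (by positivity) (by positivity), log_pow, log_rpow hv]
  push_cast
  ring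

lemma neg_log_refDensity_act_le {ε : ℝ} (hε : 0 < ε) (g : SL2) {v : Plane} (hv : ‖v‖ ≤ 2) :
    -log (refDensity ε (act g v)) ≤ -(2 * log ε) + 3 * log 3 + 3 * log ‖act g‖ := by
  have hg := one_le_norm_act g
  have hgv : ‖act g v‖ ≤ ‖act g‖ * 2 := (act g).le_opNorm_of_le hv
  have hlog : log (1 + ‖act g v‖) ≤ log (3 * ‖act g‖) := log_le_log (by positivity) (by linarith)
  rw [log_mul (by norm_num) (by positivity)] at hlog
  rw [neg_log_refDensity hε]
  linarith

/-- The mass of `refDensity ε` relative to `scaledVolume ε`, which does not depend on `ε`. -/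
noncomputable def refMass : ℝ :=
  ((volume (Metric.ball (0 : Plane) 1))⁻¹
    * ∫⁻ v : Plane, ENNReal.ofReal ((1 + ‖v‖) ^ (-3 : ℝ))).toReal

variable {Ω : Type*} {ℱ mΩ : MeasurableSpace Ω} {μ : Measure Ω}

lemma lintegral_refDensity [IsProbabilityMeasure μ] {ε : ℝ} (hε : 0 < ε) :
    ∫⁻ x, ENNReal.ofReal (refDensity ε x.2) ∂(μ.prod (scaledVolume ε))
      = ENNReal.ofReal refMass := by
  have hm : Measurable fun x : Ω × Plane => ENNReal.ofReal (refDensity ε x.2) :=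
    ((measurable_refDensity ε).comp measurable_snd).ennreal_ofReal
  have factor (v : Plane) : ENNReal.ofReal (refDensity ε v)
      = ENNReal.ofReal (ε ^ 2) * ENNReal.ofReal ((1 + ‖v‖) ^ (-3 : ℝ)) :=
    ENNReal.ofReal_mul (by positivity)
  have hε2 : ENNReal.ofReal (ε ^ 2) ≠ 0 := by simpa using by positivity
  have decay : ∫⁻ v : Plane, ENNReal.ofReal ((1 + ‖v‖) ^ (-3 : ℝ)) ≠ ∞ :=
    (finite_integral_one_add_norm (by simp; norm_num)).ne
  have := isAddHaarMeasure_scaledVolume hε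
  rw [refMass, ENNReal.ofReal_toReal (ENNReal.mul_ne_top
    (ENNReal.inv_ne_top.2 (Metric.measure_ball_pos _ _ one_pos).ne') decay),
    lintegral_prod _ hm.aemeasurable]
  simp only [factor, scaledVolume, lintegral_const, measure_univ, mul_one, lintegral_smul_measure,
    smul_eq_mul]
  rw [lintegral_const_mul _ ((measurable_norm.const_add 1).pow_const _).ennreal_ofReal,
    Measure.addHaar_ball_of_pos _ _ hε, finrank_euclideanSpace, Fintype.card_fin,
    ENNReal.mul_inv (Or.inl hε2) (Or.inl ENNReal.ofReal_ne_top), mul_mul_mul_comm,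
    ENNReal.inv_mul_cancel hε2 ENNReal.ofReal_ne_top, one_mul]

lemma integrable_log_norm_cocycle [IsFiniteMeasure μ] {T : Ω → Ω} {B : Ω → SL2} (hT : Measurable T)
    (hB : Measurable B) {K : ℝ} (hK : ∀ ω, ‖act (B ω)‖ ≤ K) (n : ℕ) :
    Integrable (fun ω => log ‖act (cocycle T B n ω)‖) μ := by
  have hm : Measurable fun ω => log ‖act (cocycle T B n ω)‖ :=
    measurable_log.comp (continuous_act.norm.measurable.comp (measurable_cocycle hT hB n))
  refine Integrable.of_bound hm.aestronglyMeasurable (log (K ^ n))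
    (Eventually.of_forall fun ω => ?_)
  have h1 := one_le_norm_act (cocycle T B n ω)
  rw [Real.norm_of_nonneg (log_nonneg h1)]
  exact log_le_log (by linarith) (norm_cocycle_le hK n ω)

variable [IsProbabilityMeasure μ] {T : Ω ≃ᵐ Ω} {B : Ω → SL2} {K : ℝ}
  (ν : Kernel Ω UnitCircle) [IsMarkovKernel ν] {ε : ℝ} (hε : 0 < ε) (hε1 : ε ≤ 1)

include hε hε1

lemma lintegral_neg_log_refDensity_smoothedLaw_le (hB : Measurable B) (hK : ∀ ω, ‖act (B ω)‖ ≤ K)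
    (n : ℕ) :
    ∫⁻ x, ENNReal.ofReal (-log (refDensity ε ((skewEquiv T hB)^[n] x).2)) ∂smoothedLaw μ ν ε
      ≤ ENNReal.ofReal (-(2 * log ε) + 3 * log 3
        + 3 * ∫ ω, log ‖act (cocycle T B n ω)‖ ∂μ) := by
  set L : Ω → ℝ := fun ω => -(2 * log ε) + 3 * log 3 + 3 * log ‖act (cocycle T B n ω)‖
  have hint := integrable_log_norm_cocycle (μ := μ) T.measurable hB hK n
  have hL : Integrable L μ := (integrable_const _).add (hint.const_mul 3)
  have hLm : Measurable L := ((measurable_log.comp (continuous_act.norm.measurable.comp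
    (measurable_cocycle T.measurable hB n))).const_mul 3).const_add _
  have hL0 (ω : Ω) : 0 ≤ L ω := by
    have h₁ := log_nonneg (one_le_norm_act (cocycle T B n ω))
    have h₂ := log_nonpos hε.le hε1
    have h₃ : 0 ≤ log (3 : ℝ) := log_nonneg (by norm_num)
    simp only [L]
    linarith
  have hLmean : ∫ ω, L ω ∂μ
      = -(2 * log ε) + 3 * log 3 + 3 * ∫ ω, log ‖act (cocycle T B n ω)‖ ∂μ := by
    rw [integral_add (integrable_const _) (hint.const_mul 3), integral_const_mul]
    simp
  calc ∫⁻ x, ENNReal.ofReal (-log (refDensity ε ((skewEquiv T hB)^[n] x).2)) ∂smoothedLaw μ ν ε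
      ≤ ∫⁻ x, ENNReal.ofReal (L x.1) ∂smoothedLaw μ ν ε := by
        refine lintegral_mono_ae ?_
        filter_upwards [ae_norm_snd_le_smoothedLaw ν ε] with x hx
        rw [skewEquiv_iterate]
        exact ENNReal.ofReal_le_ofReal (neg_log_refDensity_act_le hε _ (by linarith))
    _ = ∫⁻ ω, ENNReal.ofReal (L ω) ∂μ := by
        conv_rhs => rw [← map_fst_smoothedLaw (μ := μ) ν hε]
        rw [lintegral_map hLm.ennreal_ofReal measurable_fst]
    _ = _ := by
        rw [← ofReal_integral_eq_lintegral_ofReal hL (Eventually.of_forall hL0), hLmean]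

lemma lintegral_neg_log_refDensity_add_le (hB : Measurable B) (hK : ∀ ω, ‖act (B ω)‖ ≤ K) (n : ℕ) :
    ∫⁻ x, ENNReal.ofReal (-log (refDensity ε ((skewEquiv T hB)^[n] x).2)) ∂smoothedLaw μ ν ε
        + ∫⁻ x, ENNReal.ofReal (refDensity ε x.2) ∂(μ.prod (scaledVolume ε))
      ≤ ENNReal.ofReal (-(2 * log ε) + 3 * log 3 + 3 * ∫ ω, log ‖act (cocycle T B n ω)‖ ∂μ
        + refMass) := by
  have hlog : 0 ≤ ∫ ω, log ‖act (cocycle T B n ω)‖ ∂μ :=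
    integral_nonneg fun ω => log_nonneg (one_le_norm_act _)
  have hlog3 : 0 ≤ log (3 : ℝ) := log_nonneg (by norm_num)
  have hmass : 0 ≤ refMass := ENNReal.toReal_nonneg
  rw [ENNReal.ofReal_add (by linarith [log_nonpos hε.le hε1]) hmass, lintegral_refDensity hε]
  gcongr
  exact lintegral_neg_log_refDensity_smoothedLaw_le ν hε hε1 hB hK n

/-- The entropy bound `hD` forces the innovation `b ∘ T⁻¹ - b'` of `b ∘ T⁻¹` relative to `ℱ` to be
almost uncorrelated with the smoothed fibre measures at some time. -/
lemma exists_abs_integral_smoothedLaw_le (hℱ : ℱ ≤ mΩ) (hT : MeasurePreserving T μ μ)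
    (hTℱ : Measurable[ℱ, ℱ] T) (hB : Measurable[ℱ] B) (hK : ∀ ω, ‖act (B ω)‖ ≤ K)
    {f : C(UnitCircle, ℝ)} (hf : ∀ ξ, |f ξ| ≤ 1) {b b' : Ω → ℝ} (hb : Measurable[ℱ] b)
    (hb' : Measurable[ℱ] b') (hb1 : ∀ ω, |b ω| ≤ 1) (hb1' : ∀ ω, |b' ω| ≤ 1)
    (hbb' : b' =ᵐ[μ] μ[b ∘ T.symm | ℱ]) {n : ℕ} (hn : 0 < n) {D : ℝ} (hD0 : 0 ≤ D)
    (hD : -(2 * log ε) + 3 * log 3 + 3 * ∫ ω, log ‖act (cocycle T B n ω)‖ ∂μ + refMass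
      ≤ n * D ^ 2) :
    ∃ j ≤ n, |∫ x, (b (T.symm (T^[j] x.1)) - b' (T^[j] x.1)) *
      f (radial (act (cocycle T B j x.1) x.2)) ∂smoothedLaw μ ν ε| ≤ 4 * D := by
  have hBm : Measurable B := hB.mono hℱ le_rfl
  have hle : ℱ.prod inferInstance ≤ mΩ.prod (inferInstance : MeasurableSpace Plane) :=
    sup_le_sup (MeasurableSpace.comap_mono hℱ) le_rfl
  have := isAddHaarMeasure_scaledVolume hε
  have := isProbabilityMeasure_smoothedLaw (μ := μ) ν hε
  have := sigmaFinite_trim_prod (μ := μ) (scaledVolume ε) hle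
  have hψ : Measurable fun v => f (radial v) := f.continuous.measurable.comp measurable_radial
  have hfst : Measurable[ℱ.prod inferInstance, ℱ] (Prod.fst : Ω × Plane → Ω) :=
    @measurable_fst _ _ ℱ _
  have hsnd : Measurable[ℱ.prod inferInstance] (Prod.snd : Ω × Plane → Plane) :=
    @measurable_snd _ _ ℱ _
  have hFℱ : Measurable[ℱ.prod inferInstance, ℱ.prod inferInstance] (skewEquiv T hBm) :=
    Measurable.prodMk (hTℱ.comp hfst) (measurable_act (hB.comp hfst) hsnd)
  have hh₁ : Measurable[ℱ.prod inferInstance]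
      ((fun x : Ω × Plane => b (T.symm x.1) * f (radial x.2) + 1) ∘ skewEquiv T hBm) := by
    simpa [Function.comp_def, skewEquiv] using
      ((hb.comp hfst).mul ((hψ.comp hsnd).comp hFℱ)).add_const 1
  have hh₂ : Measurable[ℱ.prod inferInstance]
      fun x : Ω × Plane => b' x.1 * f (radial x.2) + 1 :=
    ((hb'.comp hfst).mul (hψ.comp hsnd)).add_const 1
  have range {s t : ℝ} (hs : |s| ≤ 1) (ht : |t| ≤ 1) : |s * t| ≤ 1 := by
    rw [abs_mul]
    exact mul_le_one₀ hs (abs_nonneg _) ht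
  have nonneg {β : Ω → ℝ} (hβ : ∀ ω, |β ω| ≤ 1) (x : Ω × Plane) :
      0 ≤ β x.1 * f (radial x.2) + 1 := by
    linarith [(abs_le.1 (range (hβ x.1) (hf (radial x.2)))).1]
  have le_two {β : Ω → ℝ} (hβ : ∀ ω, |β ω| ≤ 1) (x : Ω × Plane) :
      β x.1 * f (radial x.2) + 1 ≤ 2 := by
    linarith [(abs_le.1 (range (hβ x.1) (hf (radial x.2)))).2]
  obtain ⟨j, hj, hjD⟩ := exists_abs_integral_iterate_sub_le
    (M := μ.prod (scaledVolume ε)) hle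
    (measurePreserving_skewEquiv hT hBm _) hFℱ (measurable_smoothedDensity ν ε)
    (fun x => measureReal_le_one) (smoothedLaw_eq_withDensity ν hε)
    ((measurable_refDensity ε).comp hsnd) (fun x => refDensity_pos hε _)
    (fun x => refDensity_le_one hε hε1 _) hn hD0
    ((lintegral_neg_log_refDensity_add_le ν hε hε1 hBm hK n).trans (ENNReal.ofReal_le_ofReal hD))
    hh₁ hh₂ zero_le_two (nonneg fun ω => hb1 _) (nonneg hb1') (le_two fun ω => hb1 _) (le_two hb1')
    (fun r hr => lintegral_prod_mul_ofReal_condExp hℱ _ ((hb.mono hℱ le_rfl).comp T.symm.measurable)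
      hb' (fun ω => hb1 _) hbb' hψ (fun v => hf _) hr)
  refine ⟨j, hj, ?_⟩
  simp only [skewEquiv_iterate, add_sub_add_right_eq_sub, ← sub_mul] at hjD
  linarith

end EntropyEstimate

section InvariancePrinciple

open scoped ENNReal
open ProbabilityTheory

lemma eventually_forall_le_of_tendsto {x : ℕ → ℝ}
    (hx : Tendsto (fun n : ℕ => 1 / (n : ℝ) * x n) atTop (𝓝 0)) {ε : ℝ} (hε : 0 < ε) :
    ∀ᶠ n : ℕ in atTop, ∀ j ≤ n, x j ≤ n * ε := by
  obtain ⟨J, hJ⟩ := eventually_atTop.1 ((hx.eventually_lt_const hε).and (eventually_gt_atTop 0))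
  obtain ⟨C, hC⟩ : ∃ C, ∀ j < J, x j ≤ C :=
    ⟨∑ j ∈ Finset.range J, |x j|, fun j hj => (le_abs_self _).trans
      (Finset.single_le_sum (f := fun j => |x j|) (fun i _ => abs_nonneg _)
        (Finset.mem_range.2 hj))⟩
  have hlarge : ∀ᶠ n : ℕ in atTop, C ≤ n * ε :=
    (tendsto_natCast_atTop_atTop.atTop_mul_const hε).eventually_ge_atTop C
  filter_upwards [hlarge] with n hn j hj
  by_cases h : j < J
  · exact (hC j h).trans hn
  · obtain ⟨hxj, hj0⟩ := hJ j (not_lt.1 h)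
    rw [one_div, inv_mul_eq_div, div_lt_iff₀ (by exact_mod_cast hj0)] at hxj
    calc x j ≤ ε * j := hxj.le
      _ ≤ n * ε := by rw [mul_comm]; gcongr

variable {Ω : Type*} {ℱ mΩ : MeasurableSpace Ω} {μ : Measure Ω}

lemma ae_map_cocycle_eq {T : Ω → Ω} (hT : MeasurePreserving T μ μ) {B : Ω → SL2}
    {ν : Kernel Ω UnitCircle} (hν : ∀ᵐ ω ∂μ, (ν ω).map (circleAct (B ω)) = ν (T ω)) (j : ℕ) :
    ∀ᵐ ω ∂μ, (ν ω).map (circleAct (cocycle T B j ω)) = ν (T^[j] ω) := by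
  induction j with
  | zero =>
    have : circleAct 1 = id := funext circleAct_one
    exact Eventually.of_forall fun ω => by simp [cocycle, this]
  | succ j ih =>
    filter_upwards [ih, (hT.iterate j).quasiMeasurePreserving.ae hν] with ω h₁ h₂
    have : circleAct (cocycle T B (j + 1) ω)
        = circleAct (B (T^[j] ω)) ∘ circleAct (cocycle T B j ω) :=
      funext fun ξ => circleAct_mul _ _ ξ
    rw [this, ← Measure.map_map (continuous_circleAct _).measurable
      (continuous_circleAct _).measurable, h₁, h₂, Function.iterate_succ_apply']

lemma measurable_integral_kernel (ν : Kernel Ω UnitCircle) (f : C(UnitCircle, ℝ)) :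
    Measurable fun ω => ∫ ξ, f ξ ∂ν ω :=
  (f.continuous.stronglyMeasurable.integral_kernel (κ := ν)).measurable

lemma measurable_mul_comp_circleAct {f : C(UnitCircle, ℝ)} {d : Ω → ℝ} (hd : Measurable d)
    {C : Ω → SL2} (hC : Measurable C) :
    Measurable fun z : Ω × UnitCircle => d z.1 * f (circleAct (C z.1) z.2) :=
  (hd.comp measurable_fst).mul (f.continuous.measurable.comp
    (continuous_circleAct_uncurry.measurable.comp ((hC.comp measurable_fst).prodMk measurable_snd)))

lemma measurable_mul_comp_radial {f : C(UnitCircle, ℝ)} {d : Ω → ℝ} (hd : Measurable d)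
    {C : Ω → SL2} (hC : Measurable C) :
    Measurable fun x : Ω × Plane => d x.1 * f (radial (act (C x.1) x.2)) :=
  (hd.comp measurable_fst).mul (f.continuous.measurable.comp
    (measurable_radial.comp (measurable_act (hC.comp measurable_fst) measurable_snd)))

lemma norm_mul_le_of_abs_le {d : Ω → ℝ} {c : ℝ} (hd : ∀ ω, |d ω| ≤ c) {f : C(UnitCircle, ℝ)}
    (hf : ∀ ξ, |f ξ| ≤ 1) (ω : Ω) (ξ : UnitCircle) : ‖d ω * f ξ‖ ≤ c := by
  rw [Real.norm_eq_abs, abs_mul]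
  exact (mul_le_of_le_one_right (abs_nonneg _) (hf ξ)).trans (hd ω)

lemma integral_mul_integral_eq_of_equivariant [IsFiniteMeasure μ] {T : Ω → Ω}
    (hT : MeasurePreserving T μ μ) {B : Ω → SL2} (hB : Measurable B) (ν : Kernel Ω UnitCircle)
    [IsMarkovKernel ν] (hν : ∀ᵐ ω ∂μ, (ν ω).map (circleAct (B ω)) = ν (T ω))
    {f : C(UnitCircle, ℝ)} (hf : ∀ ξ, |f ξ| ≤ 1) {d : Ω → ℝ} (hd : Measurable d) {c : ℝ}
    (hdc : ∀ ω, |d ω| ≤ c) (j : ℕ) :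
    ∫ ω, d ω * ∫ ξ, f ξ ∂ν ω ∂μ
      = ∫ z, d (T^[j] z.1) * f (circleAct (cocycle T B j z.1) z.2) ∂(μ ⊗ₘ ν) := by
  have hint : Integrable (fun z : Ω × UnitCircle =>
      d (T^[j] z.1) * f (circleAct (cocycle T B j z.1) z.2)) (μ ⊗ₘ ν) :=
    Integrable.of_bound (measurable_mul_comp_circleAct (hd.comp (hT.measurable.iterate j))
      (measurable_cocycle hT.measurable hB j)).aestronglyMeasurable c
      (Eventually.of_forall fun z => norm_mul_le_of_abs_le hdc hf _ _)
  have hm : Measurable fun ω => d ω * ∫ ξ, f ξ ∂ν ω := hd.mul (measurable_integral_kernel ν f)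
  rw [Measure.integral_compProd hint]
  conv_lhs => rw [← (hT.iterate j).map_eq]
  rw [integral_map (hT.measurable.iterate j).aemeasurable hm.aestronglyMeasurable]
  refine integral_congr_ae ?_
  filter_upwards [ae_map_cocycle_eq hT hν j] with ω hω
  rw [integral_const_mul, ← hω, integral_map (continuous_circleAct _).measurable.aemeasurable
    f.continuous.aestronglyMeasurable]

lemma abs_sub_comp_radial_act_le {f : C(UnitCircle, ℝ)} (hf : ∀ ξ, |f ξ| ≤ 1) {δ ρ : ℝ}
    (hδ : 0 ≤ δ) (hfρ : ∀ ⦃p q⦄, dist p q < ρ → dist (f p) (f q) < δ) {ε s : ℝ} (hε : 0 ≤ ε)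
    (hεs : ε * s ^ 2 < 1) (hερ : 2 * (ε * s ^ 2) < ρ) (g : SL2) (ξ : UnitCircle) {u : Plane}
    (hu : ‖u‖ ≤ ε) :
    |f (circleAct g ξ) - f (radial (act g (ξ + u)))|
      ≤ δ + 2 * {g : SL2 | s ≤ ‖act g‖}.indicator 1 g := by
  by_cases hg : s ≤ ‖act g‖
  · rw [indicator_of_mem (by exact hg), Pi.one_apply]
    refine (abs_sub _ _).trans ?_
    linarith [hf (circleAct g ξ), hf (radial (act g (ξ + u)))]
  · rw [indicator_of_notMem (by exact hg), mul_zero, add_zero, ← Real.dist_eq, dist_comm]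
    have hgs : ε * ‖act g‖ ^ 2 ≤ ε * s ^ 2 := by
      gcongr
      exact (not_le.1 hg).le
    exact (hfρ ((dist_radial_act_le g ξ hu (by linarith)).trans_lt (by linarith))).le

lemma abs_integral_compProd_sub_integral_smoothedLaw_le [IsProbabilityMeasure μ]
    (ν : Kernel Ω UnitCircle) [IsMarkovKernel ν] {ε : ℝ} (hε : 0 < ε) {Ψ : Ω × UnitCircle → ℝ}
    (hΨ : Measurable Ψ) {Θ : Ω × Plane → ℝ} (hΘ : Measurable Θ) {c : ℝ} (hΨc : ∀ z, ‖Ψ z‖ ≤ c)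
    (hΘc : ∀ x, ‖Θ x‖ ≤ c) {G : Ω → ℝ} (hG : Integrable G μ)
    (hΨΘ : ∀ ω (ξ : UnitCircle) u, ‖u‖ ≤ ε → |Ψ (ω, ξ) - Θ (ω, ξ + u)| ≤ G ω) :
    |∫ z, Ψ z ∂(μ ⊗ₘ ν) - ∫ x, Θ x ∂smoothedLaw μ ν ε| ≤ ∫ ω, G ω ∂μ := by
  have := isProbabilityMeasure_ballNoise hε
  have hfst : MeasurePreserving (fun z : (Ω × UnitCircle) × Plane => z.1.1)
      ((μ ⊗ₘ ν).prod (ballNoise ε)) μ :=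
    MeasurePreserving.comp (g := Prod.fst) (μb := μ ⊗ₘ ν)
      ⟨measurable_fst, Measure.fst_compProd μ ν⟩ measurePreserving_fst
  have hΨint : Integrable (fun z => Ψ z.1) ((μ ⊗ₘ ν).prod (ballNoise ε)) :=
    Integrable.of_bound (hΨ.comp measurable_fst).aestronglyMeasurable c
      (Eventually.of_forall fun z => hΨc _)
  have hΘint : Integrable (fun z : (Ω × UnitCircle) × Plane => Θ (z.1.1, z.1.2 + z.2))
      ((μ ⊗ₘ ν).prod (ballNoise ε)) :=
    Integrable.of_bound (hΘ.comp measurable_add_noise).aestronglyMeasurable c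
      (Eventually.of_forall fun z => hΘc _)
  have hfibre := integral_fun_fst (μ := μ ⊗ₘ ν) (ν := ballNoise ε) Ψ
  rw [probReal_univ, one_smul] at hfibre
  have hnoise : ∀ᵐ z ∂(μ ⊗ₘ ν).prod (ballNoise ε), ‖z.2‖ ≤ ε :=
    Measure.quasiMeasurePreserving_snd.ae (ae_norm_le_ballNoise ε)
  have hGfst : ∫ z, G z.1.1 ∂(μ ⊗ₘ ν).prod (ballNoise ε) = ∫ ω, G ω ∂μ := by
    rw [← integral_map (f := G) hfst.aemeasurable
      (by rw [hfst.map_eq]; exact hG.aestronglyMeasurable), hfst.map_eq]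
  rw [smoothedLaw, integral_map measurable_add_noise.aemeasurable hΘ.aestronglyMeasurable,
    ← hfibre, ← integral_sub hΨint hΘint, ← hGfst, ← Real.norm_eq_abs]
  refine norm_integral_le_of_norm_le (hfst.integrable_comp_of_integrable hG) ?_
  filter_upwards [hnoise] with z hz using hΨΘ _ _ _ hz

lemma abs_integral_sub_integral_smoothedLaw_le [IsProbabilityMeasure μ] (ν : Kernel Ω UnitCircle)
    [IsMarkovKernel ν] {f : C(UnitCircle, ℝ)} (hf : ∀ ξ, |f ξ| ≤ 1) {δ ρ : ℝ}
    (hδ : 0 ≤ δ) (hfρ : ∀ ⦃p q⦄, dist p q < ρ → dist (f p) (f q) < δ) {ε s : ℝ} (hε : 0 < ε)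
    (hεs : ε * s ^ 2 < 1) (hερ : 2 * (ε * s ^ 2) < ρ) {d : Ω → ℝ} (hd : Measurable d) {c : ℝ}
    (hdc : ∀ ω, |d ω| ≤ c) {C : Ω → SL2} (hC : Measurable C) :
    |∫ z, d z.1 * f (circleAct (C z.1) z.2) ∂(μ ⊗ₘ ν)
        - ∫ x, d x.1 * f (radial (act (C x.1) x.2)) ∂smoothedLaw μ ν ε|
      ≤ c * (δ + 2 * μ.real {ω | s ≤ ‖act (C ω)‖}) := by
  set S : Set SL2 := {g | s ≤ ‖act g‖}
  have hS : MeasurableSet S := measurableSet_le measurable_const continuous_act.norm.measurable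
  have hind : Integrable ((C ⁻¹' S).indicator (1 : Ω → ℝ)) μ :=
    (integrable_const (1 : ℝ)).indicator (hC hS)
  have hmean : ∫ ω, c * (δ + 2 * (C ⁻¹' S).indicator 1 ω) ∂μ
      = c * (δ + 2 * μ.real {ω | s ≤ ‖act (C ω)‖}) := by
    rw [integral_const_mul, integral_add (integrable_const δ) (hind.const_mul 2),
      integral_const_mul, integral_indicator_one (hC hS)]
    simp [S]
  rw [← hmean]
  refine abs_integral_compProd_sub_integral_smoothedLaw_le ν hε
    (measurable_mul_comp_circleAct hd hC) (measurable_mul_comp_radial hd hC)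
    (fun z => norm_mul_le_of_abs_le hdc hf _ _) (fun x => norm_mul_le_of_abs_le hdc hf _ _)
    (((integrable_const δ).add (hind.const_mul 2)).const_mul c) fun ω ξ u hu => ?_
  rw [← mul_sub, abs_mul]
  exact mul_le_mul (hdc ω) (abs_sub_comp_radial_act_le hf hδ hfρ hε.le hεs hερ _ _ hu)
    (abs_nonneg _) ((abs_nonneg _).trans (hdc ω))

lemma measureReal_exp_le_norm_cocycle_le [IsFiniteMeasure μ] {T : Ω → Ω} (hT : Measurable T)
    {B : Ω → SL2} (hB : Measurable B) {K : ℝ} (hK : ∀ ω, ‖act (B ω)‖ ≤ K) {j : ℕ} {a δ : ℝ}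
    (ha : 0 < a) (hj : ∫ ω, log ‖act (cocycle T B j ω)‖ ∂μ ≤ a * δ) :
    μ.real {ω | rexp a ≤ ‖act (cocycle T B j ω)‖} ≤ δ := by
  have hmarkov := mul_meas_ge_le_integral_of_nonneg (μ := μ)
    (Eventually.of_forall fun ω => log_nonneg (one_le_norm_act (cocycle T B j ω)))
    (integrable_log_norm_cocycle hT hB hK j) a
  simp only [le_log_iff_exp_le (one_pos.trans_le (one_le_norm_act _))] at hmarkov
  exact le_of_mul_le_mul_left (hmarkov.trans hj) ha

variable [IsProbabilityMeasure μ] {T : Ω ≃ᵐ Ω} {B : Ω → SL2} {K : ℝ}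

lemma abs_integral_innovation_mul_le (hℱ : ℱ ≤ mΩ) (hT : MeasurePreserving T μ μ)
    (hTℱ : Measurable[ℱ, ℱ] T) (hB : Measurable[ℱ] B) (hK : ∀ ω, ‖act (B ω)‖ ≤ K)
    (hgrow : Tendsto (fun n : ℕ => 1 / (n : ℝ) * ∫ ω, log ‖act (cocycle T B n ω)‖ ∂μ) atTop (𝓝 0))
    (ν : Kernel Ω UnitCircle) [IsMarkovKernel ν]
    (hν : ∀ᵐ ω ∂μ, (ν ω).map (circleAct (B ω)) = ν (T ω))
    {f : C(UnitCircle, ℝ)} (hf : ∀ ξ, |f ξ| ≤ 1) {b b' : Ω → ℝ} (hb : Measurable[ℱ] b)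
    (hb' : Measurable[ℱ] b') (hb1 : ∀ ω, |b ω| ≤ 1) (hb1' : ∀ ω, |b' ω| ≤ 1)
    (hbb' : b' =ᵐ[μ] μ[b ∘ T.symm | ℱ]) {δ : ℝ} (hδ : 0 < δ) :
    |∫ ω, (b (T.symm ω) - b' ω) * ∫ ξ, f ξ ∂ν ω ∂μ| ≤ 4 * √(7 * δ) + 6 * δ := by
  have hBm : Measurable B := hB.mono hℱ le_rfl
  have hdm : Measurable fun ω => b (T.symm ω) - b' ω :=
    ((hb.mono hℱ le_rfl).comp T.symm.measurable).sub (hb'.mono hℱ le_rfl)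
  have hd2 (ω : Ω) : |b (T.symm ω) - b' ω| ≤ 2 :=
    (abs_sub _ _).trans (by linarith [hb1 (T.symm ω), hb1' ω])
  obtain ⟨ρ, hρ, hfρ⟩ := Metric.uniformContinuous_iff.1
    (CompactSpace.uniformContinuous_of_continuous f.continuous) δ hδ
  have hexp : Tendsto (fun n : ℕ => rexp (-(n * δ))) atTop (𝓝 0) :=
    tendsto_exp_neg_atTop_nhds_zero.comp (tendsto_natCast_atTop_atTop.atTop_mul_const hδ)
  have hlin : ∀ᶠ n : ℕ in atTop, 3 * log 3 + refMass ≤ n * (δ / 2) :=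
    (tendsto_natCast_atTop_atTop.atTop_mul_const (half_pos hδ)).eventually_ge_atTop _
  obtain ⟨n, hn0, hnρ, hn1, hnlin, hngrow, hngrow'⟩ := ((eventually_gt_atTop 0).and
    ((hexp.eventually_lt_const (half_pos hρ)).and ((hexp.eventually_lt_const one_pos).and
    (hlin.and ((eventually_forall_le_of_tendsto hgrow (by positivity : 0 < δ ^ 2)).and
    (eventually_forall_le_of_tendsto hgrow (by positivity : 0 < δ / 6))))))).exists
  have hnδ : 0 < n * δ := by positivity
  have hε : rexp (-(3 * (n * δ))) * rexp (n * δ) ^ 2 = rexp (-(n * δ)) := by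
    rw [← exp_nat_mul, ← exp_add]
    congr 1
    push_cast
    ring
  obtain ⟨j, hj, hjD⟩ := exists_abs_integral_smoothedLaw_le ν (exp_pos (-(3 * (n * δ))))
    (exp_le_one_iff.2 (by linarith)) hℱ hT hTℱ hB hK hf hb hb' hb1 hb1' hbb' hn0
    (sqrt_nonneg (7 * δ)) (by
      rw [sq_sqrt (by positivity), log_exp]
      linarith [hngrow' n le_rfl])
  have hbad := measureReal_exp_le_norm_cocycle_le hT.measurable hBm hK hnδ
    ((hngrow j hj).trans_eq (by ring : n * δ ^ 2 = n * δ * δ))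
  have hdiff := abs_integral_sub_integral_smoothedLaw_le (μ := μ) ν hf hδ.le hfρ
    (exp_pos (-(3 * (n * δ)))) (s := rexp (n * δ)) (by rwa [hε]) (by rw [hε]; linarith)
    (hdm.comp (hT.measurable.iterate j)) (fun ω => hd2 _) (measurable_cocycle hT.measurable hBm j)
  rw [integral_mul_integral_eq_of_equivariant hT hBm ν hν hf hdm hd2 j]
  have := (abs_sub_abs_le_abs_sub _ _).trans hdiff
  simp only [Function.comp_apply] at this
  linarith

/- The integral is at most `4√(7δ) + 6δ` for every `δ > 0`. -/
lemma integral_innovation_mul_eq_zero (hℱ : ℱ ≤ mΩ) (hT : MeasurePreserving T μ μ)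
    (hTℱ : Measurable[ℱ, ℱ] T) (hB : Measurable[ℱ] B) (hK : ∀ ω, ‖act (B ω)‖ ≤ K)
    (hgrow : Tendsto (fun n : ℕ => 1 / (n : ℝ) * ∫ ω, log ‖act (cocycle T B n ω)‖ ∂μ) atTop (𝓝 0))
    (ν : Kernel Ω UnitCircle) [IsMarkovKernel ν]
    (hν : ∀ᵐ ω ∂μ, (ν ω).map (circleAct (B ω)) = ν (T ω))
    {f : C(UnitCircle, ℝ)} (hf : ∀ ξ, |f ξ| ≤ 1) {b b' : Ω → ℝ} (hb : Measurable[ℱ] b)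
    (hb' : Measurable[ℱ] b') (hb1 : ∀ ω, |b ω| ≤ 1) (hb1' : ∀ ω, |b' ω| ≤ 1)
    (hbb' : b' =ᵐ[μ] μ[b ∘ T.symm | ℱ]) :
    ∫ ω, (b (T.symm ω) - b' ω) * ∫ ξ, f ξ ∂ν ω ∂μ = 0 := by
  have hlim : Tendsto (fun δ : ℝ => 4 * √(7 * δ) + 6 * δ) (𝓝[>] 0) (𝓝 0) :=
    (Continuous.tendsto' (by fun_prop) _ _ (by simp)).mono_left nhdsWithin_le_nhds
  exact abs_nonpos_iff.1 (ge_of_tendsto hlim (eventually_nhdsWithin_of_forall fun δ hδ =>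
    abs_integral_innovation_mul_le hℱ hT hTℱ hB hK hgrow ν hν hf hb hb' hb1 hb1' hbb' hδ))

end InvariancePrinciple

section FibreAverages

open ProbabilityTheory

variable {Ω : Type*} {ℱ mΩ : MeasurableSpace Ω} {μ : Measure Ω}

lemma integral_condExp_mul_comm [IsFiniteMeasure μ] (hℱ : ℱ ≤ mΩ) {f g : Ω → ℝ}
    (hf : Integrable f μ) (hg : Integrable g μ) {c : ℝ} (hfc : ∀ ω, |f ω| ≤ c)
    (hgc : ∀ ω, |g ω| ≤ c) : ∫ ω, (μ[f | ℱ]) ω * g ω ∂μ = ∫ ω, f ω * (μ[g | ℱ]) ω ∂μ := by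
  have pull {u v : Ω → ℝ} (hv : Integrable v μ) (hu : ∀ ω, |u ω| ≤ c) :
      ∫ ω, (μ[u | ℱ]) ω * v ω ∂μ = ∫ ω, (μ[u | ℱ]) ω * (μ[v | ℱ]) ω ∂μ := by
    have huv : Integrable (μ[u | ℱ] * v) μ :=
      hv.bdd_mul (stronglyMeasurable_condExp.mono hℱ).aestronglyMeasurable
        (ae_bdd_abs_condExp_of_ae_bdd_abs (Eventually.of_forall hu))
    rw [← integral_condExp hℱ (f := fun ω => (μ[u | ℱ]) ω * v ω)]
    exact integral_congr_ae
      (condExp_mul_of_stronglyMeasurable_left stronglyMeasurable_condExp huv hv)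
  rw [pull hg hfc]
  simp only [mul_comm _ ((μ[g | ℱ]) _)]
  rw [pull hf hgc]

lemma exists_bounded_condExp_version {f : Ω → ℝ} {c : ℝ} (hc : 0 ≤ c) (hf : ∀ ω, |f ω| ≤ c) :
    ∃ g : Ω → ℝ, Measurable[ℱ] g ∧ (∀ ω, |g ω| ≤ c) ∧ g =ᵐ[μ] μ[f | ℱ] := by
  refine ⟨fun ω => max (-c) (min c ((μ[f | ℱ]) ω)), ?_, fun ω => ?_, ?_⟩
  · exact measurable_const.max (measurable_const.min stronglyMeasurable_condExp.measurable)
  · exact abs_le.2 ⟨le_max_left _ _, max_le (by linarith) (min_le_left _ _)⟩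
  · filter_upwards [ae_bdd_abs_condExp_of_ae_bdd_abs (μ := μ) (m := ℱ) (Eventually.of_forall hf)]
      with ω hω
    rw [min_eq_right (abs_le.1 hω).2, max_eq_right (abs_le.1 hω).1]

lemma abs_integral_le_one {ρ : Measure UnitCircle} [IsProbabilityMeasure ρ] {f : C(UnitCircle, ℝ)}
    (hf : ∀ ξ, |f ξ| ≤ 1) : |∫ ξ, f ξ ∂ρ| ≤ 1 := by
  simpa using norm_integral_le_of_norm_le_const (μ := ρ) (f := f) (Eventually.of_forall hf)

lemma setIntegral_preimage_eq {X : Type*} {_ : MeasurableSpace X} {φ : Ω → X} (hφ : Measurable φ)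
    {t : Set X} (ht : MeasurableSet t) (u : Ω → ℝ) :
    ∫ ω in φ ⁻¹' t, u ω ∂μ = ∫ ω, t.indicator 1 (φ ω) * u ω ∂μ := by
  rw [← integral_indicator (hφ ht)]
  congr 1 with ω
  by_cases hω : φ ω ∈ t <;> simp [hω]

/-- The `n`-th iterate of an invertible measurable transformation. -/
def iterateEquiv (T : Ω ≃ᵐ Ω) (n : ℕ) : Ω ≃ᵐ Ω where
  toFun := T^[n]
  invFun := T.symm^[n]
  left_inv := Function.LeftInverse.iterate T.symm_apply_apply n
  right_inv := Function.RightInverse.iterate T.apply_symm_apply n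
  measurable_toFun := T.measurable.iterate n
  measurable_invFun := T.symm.measurable.iterate n

lemma le_comap_symm {T : Ω ≃ᵐ Ω} (hTℱ : Measurable[ℱ, ℱ] T) : ℱ ≤ ℱ.comap T.symm := fun s hs =>
  ⟨T ⁻¹' s, hTℱ hs, by rw [← preimage_comp, T.self_comp_symm, preimage_id]⟩

lemma monotone_comap_symm_iterate {T : Ω ≃ᵐ Ω} (hTℱ : Measurable[ℱ, ℱ] T) :
    Monotone fun n : ℕ => ℱ.comap T.symm^[n] :=
  monotone_nat_of_le_succ fun n => by
    rw [Function.iterate_succ', ← MeasurableSpace.comap_comp]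
    exact MeasurableSpace.comap_mono (le_comap_symm hTℱ)

lemma tendsto_growth_cocycle_iterate {T : Ω → Ω} {B : Ω → SL2}
    (hgrow : Tendsto (fun n : ℕ => 1 / (n : ℝ) * ∫ ω, log ‖act (cocycle T B n ω)‖ ∂μ) atTop (𝓝 0))
    {k : ℕ} (hk : 0 < k) :
    Tendsto (fun n : ℕ => 1 / (n : ℝ) * ∫ ω, log ‖act (cocycle T^[k] (cocycle T B k) n ω)‖ ∂μ)
      atTop (𝓝 0) := by
  have h := (hgrow.comp (tendsto_id.const_mul_atTop' hk)).const_mul (k : ℝ)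
  rw [mul_zero] at h
  refine h.congr fun n => ?_
  simp only [Function.comp_apply, id, Nat.cast_mul, cocycle_iterate]
  rcases eq_or_ne (n : ℝ) 0 with hn | hn
  · simp [hn]
  · field_simp

variable [IsProbabilityMeasure μ] {T : Ω ≃ᵐ Ω} {B : Ω → SL2} {K : ℝ}

lemma condExp_integral_kernel_ae_eq_comap (hℱ : ℱ ≤ mΩ) (hT : MeasurePreserving T μ μ)
    (hTℱ : Measurable[ℱ, ℱ] T) (hB : Measurable[ℱ] B) (hK : ∀ ω, ‖act (B ω)‖ ≤ K)
    (hgrow : Tendsto (fun n : ℕ => 1 / (n : ℝ) * ∫ ω, log ‖act (cocycle T B n ω)‖ ∂μ) atTop (𝓝 0))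
    (ν : Kernel Ω UnitCircle) [IsMarkovKernel ν]
    (hν : ∀ᵐ ω ∂μ, (ν ω).map (circleAct (B ω)) = ν (T ω))
    {f : C(UnitCircle, ℝ)} (hf : ∀ ξ, |f ξ| ≤ 1) :
    μ[fun ω => ∫ ξ, f ξ ∂ν ω | ℱ] =ᵐ[μ] μ[fun ω => ∫ ξ, f ξ ∂ν ω | ℱ.comap T.symm] := by
  set g : Ω → ℝ := fun ω => ∫ ξ, f ξ ∂ν ω
  have hg1 (ω : Ω) : |g ω| ≤ 1 := abs_integral_le_one hf
  have hg : Integrable g μ := Integrable.of_bound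
    (measurable_integral_kernel ν f).aestronglyMeasurable 1 (Eventually.of_forall hg1)
  have hle : ℱ.comap T.symm ≤ mΩ :=
    (MeasurableSpace.comap_mono hℱ).trans T.symm.measurable.comap_le
  refine ae_eq_condExp_of_forall_setIntegral_eq hle hg
    (fun s _ _ => integrable_condExp.integrableOn) ?_
    (stronglyMeasurable_condExp.mono (le_comap_symm hTℱ)).aestronglyMeasurable
  rintro _ ⟨t, ht, rfl⟩ -
  set b : Ω → ℝ := t.indicator 1
  have hb : Measurable[ℱ] b := Measurable.indicator (@measurable_const _ _ _ ℱ 1) ht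
  have hb1 (ω : Ω) : |b ω| ≤ 1 := by by_cases h : ω ∈ t <;> simp [b, h]
  have hbT : Integrable (b ∘ T.symm) μ := Integrable.of_bound
    ((hb.mono hℱ le_rfl).comp T.symm.measurable).aestronglyMeasurable 1
    (Eventually.of_forall fun ω => hb1 _)
  obtain ⟨b', hb', hb1', hbb'⟩ := exists_bounded_condExp_version (μ := μ) (ℱ := ℱ) zero_le_one
    (fun ω => hb1 (T.symm ω))
  have hinnov := integral_innovation_mul_eq_zero hℱ hT hTℱ hB hK hgrow ν hν hf hb hb' hb1 hb1' hbb'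
  have hbg : ∫ ω, (b ∘ T.symm) ω * g ω ∂μ = ∫ ω, b' ω * g ω ∂μ := by
    rw [← sub_eq_zero, ← integral_sub
      (hg.bdd_mul hbT.aestronglyMeasurable (Eventually.of_forall fun ω => hb1 _))
      (hg.bdd_mul (hb'.mono hℱ le_rfl).aestronglyMeasurable (Eventually.of_forall hb1')), ← hinnov]
    simp only [sub_mul, Function.comp_apply, g]
  calc ∫ ω in T.symm ⁻¹' t, (μ[g | ℱ]) ω ∂μ
      = ∫ ω, (b ∘ T.symm) ω * (μ[g | ℱ]) ω ∂μ :=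
        setIntegral_preimage_eq T.symm.measurable (hℱ _ ht) _
    _ = ∫ ω, (μ[b ∘ T.symm | ℱ]) ω * g ω ∂μ :=
        (integral_condExp_mul_comm hℱ hbT hg (fun ω => hb1 _) hg1).symm
    _ = ∫ ω, b' ω * g ω ∂μ := integral_congr_ae (hbb'.symm.mul EventuallyEq.rfl)
    _ = ∫ ω in T.symm ⁻¹' t, g ω ∂μ := by
        rw [← hbg, setIntegral_preimage_eq T.symm.measurable (hℱ _ ht)]
        rfl

/- By the previous lemma for the iterates of `T`, the martingale `μ[g | T^k ℱ]` of the fibre average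
`g` is constant; Lévy's upward theorem identifies its limit with `g`. -/
lemma condExp_integral_kernel_ae_eq (hℱ : ℱ ≤ mΩ) (hT : MeasurePreserving T μ μ)
    (hTℱ : Measurable[ℱ, ℱ] T) (hgen : mΩ ≤ ⨆ n : ℕ, ℱ.comap T.symm^[n])
    (hB : Measurable[ℱ] B) (hK : ∀ ω, ‖act (B ω)‖ ≤ K)
    (hgrow : Tendsto (fun n : ℕ => 1 / (n : ℝ) * ∫ ω, log ‖act (cocycle T B n ω)‖ ∂μ) atTop (𝓝 0))
    (ν : Kernel Ω UnitCircle) [IsMarkovKernel ν]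
    (hν : ∀ᵐ ω ∂μ, (ν ω).map (circleAct (B ω)) = ν (T ω))
    {f : C(UnitCircle, ℝ)} (hf : ∀ ξ, |f ξ| ≤ 1) :
    μ[fun ω => ∫ ξ, f ξ ∂ν ω | ℱ] =ᵐ[μ] fun ω => ∫ ξ, f ξ ∂ν ω := by
  have hgm : Measurable fun ω => ∫ ξ, f ξ ∂ν ω := measurable_integral_kernel ν f
  have hg : Integrable (fun ω => ∫ ξ, f ξ ∂ν ω) μ := Integrable.of_bound
    hgm.aestronglyMeasurable 1 (Eventually.of_forall fun ω => abs_integral_le_one hf)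
  let 𝒢 : Filtration ℕ mΩ := ⟨fun n => ℱ.comap T.symm^[n], monotone_comap_symm_iterate hTℱ,
    fun n => (MeasurableSpace.comap_mono hℱ).trans (T.symm.measurable.iterate n).comap_le⟩
  have hconst (k : ℕ) :
      μ[fun ω => ∫ ξ, f ξ ∂ν ω | ℱ] =ᵐ[μ] μ[fun ω => ∫ ξ, f ξ ∂ν ω | 𝒢 k] := by
    rcases k.eq_zero_or_pos with rfl | hk
    · have : 𝒢 0 = ℱ := MeasurableSpace.comap_id
      rw [this]
    · exact condExp_integral_kernel_ae_eq_comap (T := iterateEquiv T k) hℱ (hT.iterate k)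
        (hTℱ.iterate k) (measurable_cocycle hTℱ hB k) (norm_cocycle_le hK k)
        (tendsto_growth_cocycle_iterate hgrow hk) ν (ae_map_cocycle_eq hT hν k) hf
  have hlim := hg.tendsto_ae_condExp (ℱ := 𝒢) (hgm.mono hgen le_rfl).stronglyMeasurable
  filter_upwards [hlim, ae_all_iff.2 hconst] with ω hω hωconst
  exact tendsto_nhds_unique (tendsto_const_nhds.congr hωconst) hω

end FibreAverages

section InvariantLift

open scoped ENNReal BoundedContinuousFunction
open ProbabilityTheory

lemma eq_of_mapClusterPt_of_tendsto {ι X Y : Type*} [TopologicalSpace X] [TopologicalSpace Y]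
    [T2Space Y] {l : Filter ι} {u : ι → X} {x : X} (hx : MapClusterPt x l u) {φ : X → Y}
    (hφ : Continuous φ) {y : Y} (hy : Tendsto (fun i => φ (u i)) l (𝓝 y)) : φ x = y :=
  have : (𝓝 (φ x) ⊓ 𝓝 y).NeBot :=
    (hx.continuousAt_comp hφ.continuousAt).clusterPt.mono hy
  eq_of_nhds_neBot this

section BirkhoffMeasure

variable {Z : Type*} [MeasurableSpace Z] {F : Z → Z} {m : Measure Z}

/-- The average of the push-forwards of `m` under `F^[0], …, F^[n]`; invariant measures are obtained
as its limit points. -/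
noncomputable def birkhoffMeasure (F : Z → Z) (m : Measure Z) (n : ℕ) : Measure Z :=
  ((n + 1 : ℕ) : ℝ≥0∞)⁻¹ • ∑ j ∈ Finset.range (n + 1), m.map F^[j]

lemma map_birkhoffMeasure (hF : Measurable F) {X : Type*} [MeasurableSpace X] {μ : Measure X}
    {T : X → X} (hT : MeasurePreserving T μ μ) {φ : Z → X} (hφ : MeasurePreserving φ m μ)
    (hFT : Function.Semiconj φ F T) (n : ℕ) : (birkhoffMeasure F m n).map φ = μ := by
  have hj (j : ℕ) : (m.map F^[j]).map φ = μ := by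
    rw [Measure.map_map hφ.measurable (hF.iterate j), (hFT.iterate_right j).comp_eq,
      ← Measure.map_map (hT.measurable.iterate j) hφ.measurable, hφ.map_eq, (hT.iterate j).map_eq]
  ext s hs
  have hjs (j : ℕ) : m.map F^[j] (φ ⁻¹' s) = μ s := by
    rw [← Measure.map_apply hφ.measurable hs, hj]
  rw [Measure.map_apply hφ.measurable hs, birkhoffMeasure, Measure.smul_apply,
    Measure.finsetSum_apply]
  simp only [hjs, Finset.sum_const, Finset.card_range, nsmul_eq_mul, smul_eq_mul]
  rw [← mul_assoc, ENNReal.inv_mul_cancel (by simp) (by simp), one_mul]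

variable [IsProbabilityMeasure m]

lemma isProbabilityMeasure_birkhoffMeasure (hF : Measurable F) (n : ℕ) :
    IsProbabilityMeasure (birkhoffMeasure F m n) := by
  constructor
  have hj (j : ℕ) : m.map F^[j] univ = 1 := by
    rw [Measure.map_apply (hF.iterate j) .univ, preimage_univ, measure_univ]
  simp only [birkhoffMeasure, Measure.smul_apply, Measure.finsetSum_apply, hj, smul_eq_mul,
    Finset.sum_const, Finset.card_range, nsmul_eq_mul, mul_one]
  exact ENNReal.inv_mul_cancel (by simp) (by simp)

variable [TopologicalSpace Z] [OpensMeasurableSpace Z]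

lemma integral_birkhoffMeasure (hF : Measurable F) (n : ℕ) (g : Z →ᵇ ℝ) :
    ∫ z, g z ∂birkhoffMeasure F m n
      = ((n : ℝ) + 1)⁻¹ * ∑ j ∈ Finset.range (n + 1), ∫ z, g (F^[j] z) ∂m := by
  have (j : ℕ) : IsProbabilityMeasure (m.map F^[j]) :=
    Measure.isProbabilityMeasure_map (hF.iterate j).aemeasurable
  rw [birkhoffMeasure, integral_smul_measure, integral_finsetSum_measure fun j _ => g.integrable _]
  simp only [ENNReal.toReal_inv, smul_eq_mul, Nat.cast_add, Nat.cast_one]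
  congr 1
  refine Finset.sum_congr rfl fun j _ => ?_
  rw [integral_map (hF.iterate j).aemeasurable g.continuous.measurable.aestronglyMeasurable]

lemma abs_integral_comp_sub_integral_birkhoffMeasure_le [BorelSpace Z] (hF : Continuous F) (n : ℕ)
    (g : Z →ᵇ ℝ) :
    |∫ z, g (F z) ∂birkhoffMeasure F m n - ∫ z, g z ∂birkhoffMeasure F m n|
      ≤ 2 * ‖g‖ * (1 / ((n : ℝ) + 1)) := by
  have hb (j : ℕ) : |∫ z, g (F^[j] z) ∂m| ≤ ‖g‖ := by
    simpa using norm_integral_le_of_norm_le_const (μ := m) (f := fun z => g (F^[j] z)) (C := ‖g‖)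
      (Eventually.of_forall fun z => g.norm_coe_le_norm _)
  have hshift := integral_birkhoffMeasure (m := m) hF.measurable n (g.compContinuous ⟨F, hF⟩)
  simp only [BoundedContinuousFunction.compContinuous_apply, ContinuousMap.coe_mk,
    ← Function.iterate_succ_apply' F] at hshift
  rw [hshift, integral_birkhoffMeasure hF.measurable, ← mul_sub, ← Finset.sum_sub_distrib,
    Finset.sum_range_sub (fun j => ∫ z, g (F^[j] z) ∂m), abs_mul,
    abs_of_pos (by positivity : (0 : ℝ) < ((n : ℝ) + 1)⁻¹), one_div, mul_comm]
  gcongr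
  exact (abs_sub _ _).trans (by linarith [hb (n + 1), hb 0])

end BirkhoffMeasure

variable {X Y : Type*} [TopologicalSpace X] [PolishSpace X] [MeasurableSpace X] [BorelSpace X]
  [TopologicalSpace Y] [CompactSpace Y] [PolishSpace Y] [MeasurableSpace Y] [BorelSpace Y]
  {μ : Measure X} [IsProbabilityMeasure μ] {T : X → X}

lemma exists_mapClusterPt_of_fst_eq {u : ℕ → ProbabilityMeasure (X × Y)}
    (hu : ∀ n, (u n : Measure (X × Y)).fst = μ) : ∃ m, MapClusterPt m atTop u := by
  have htight : IsTightMeasureSet {((ρ : ProbabilityMeasure (X × Y)) : Measure (X × Y)) |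
      ρ ∈ range u} := by
    refine IsTightMeasureSet.prodMk ?_ IsTightMeasureSet.of_compactSpace
    refine (isTightMeasureSet_singleton (μ := μ)).subset ?_
    rintro _ ⟨_, ⟨_, ⟨n, rfl⟩, rfl⟩, rfl⟩
    exact hu n
  obtain ⟨m, -, hm⟩ := (isCompact_closure_of_isTightMeasureSet htight).exists_mapClusterPt
    (f := atTop) (u := u)
    (tendsto_principal.2 (Eventually.of_forall fun n => subset_closure (mem_range_self n)))
  exact ⟨m, hm⟩

variable [Nonempty Y]

lemma exists_invariant_lift (hT : MeasurePreserving T μ μ) {F : X × Y → X × Y} (hF : Continuous F)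
    (hFT : Function.Semiconj Prod.fst F T) :
    ∃ m : Measure (X × Y), IsProbabilityMeasure m ∧ m.fst = μ ∧ m.map F = m := by
  obtain ⟨y⟩ := ‹Nonempty Y›
  set m₀ : Measure (X × Y) := μ.prod (Measure.dirac y)
  let u (n : ℕ) : ProbabilityMeasure (X × Y) :=
    ⟨birkhoffMeasure F m₀ n, isProbabilityMeasure_birkhoffMeasure hF.measurable n⟩
  have hfst (n : ℕ) : (u n : Measure (X × Y)).fst = μ :=
    map_birkhoffMeasure hF.measurable hT measurePreserving_fst hFT n
  obtain ⟨m, hm⟩ := exists_mapClusterPt_of_fst_eq hfst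
  refine ⟨m, inferInstance, ?_, ?_⟩
  · refine ext_of_forall_integral_eq_of_IsFiniteMeasure fun g => ?_
    have hfstint (ρ : Measure (X × Y)) : ∫ z, g z.1 ∂ρ = ∫ x, g x ∂ρ.fst :=
      (integral_map measurable_fst.aemeasurable
        g.continuous.measurable.aestronglyMeasurable).symm
    rw [← hfstint]
    refine eq_of_mapClusterPt_of_tendsto hm
      (ProbabilityMeasure.continuous_integral_boundedContinuousFunction
        (g.compContinuous ⟨Prod.fst, continuous_fst⟩)) (tendsto_const_nhds.congr fun n => ?_)
    exact (hfstint _).trans (by rw [hfst]) |>.symm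
  · have := Measure.isProbabilityMeasure_map (μ := (m : Measure (X × Y))) hF.aemeasurable
    refine ext_of_forall_integral_eq_of_IsFiniteMeasure fun g => ?_
    rw [integral_map hF.aemeasurable g.continuous.measurable.aestronglyMeasurable, ← sub_eq_zero]
    refine eq_of_mapClusterPt_of_tendsto hm
      ((ProbabilityMeasure.continuous_integral_boundedContinuousFunction
        (g.compContinuous ⟨F, hF⟩)).sub
        (ProbabilityMeasure.continuous_integral_boundedContinuousFunction g)) ?_
    refine squeeze_zero_norm
      (abs_integral_comp_sub_integral_birkhoffMeasure_le (m := m₀) hF · g) ?_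
    simpa using tendsto_one_div_add_atTop_nhds_zero_nat.const_mul (2 * ‖g‖)

lemma id_prod_map_apply {X Y Z : Type*} [MeasurableSpace X] [MeasurableSpace Y]
    [MeasurableSpace Z] (ν : Kernel X Y) [IsSFiniteKernel ν] {Φ : X × Y → Z} (hΦ : Measurable Φ)
    (x : X) : (Kernel.id ×ₖ ν).map Φ x = (ν x).map fun y => Φ (x, y) := by
  rw [Kernel.map_apply _ hΦ, Kernel.prod_apply, Kernel.id_apply, Measure.dirac_prod,
    Measure.map_map hΦ measurable_prodMk_left]
  rfl

/- Disintegrate an invariant lift of `μ`: uniqueness of the disintegration is equivariance. -/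
lemma exists_equivariant_kernel {T : X ≃ᵐ X} (hT : MeasurePreserving T μ μ) {Φ : X × Y → Y}
    (hF : Continuous fun z : X × Y => (T z.1, Φ z)) :
    ∃ ν : Kernel X Y, IsMarkovKernel ν ∧ ∀ᵐ x ∂μ, ((ν x).map fun y => Φ (x, y)) = ν (T x) := by
  obtain ⟨m, hm, hfst, hinv⟩ := exists_invariant_lift hT hF fun _ => rfl
  have hΦ : Measurable Φ := (continuous_snd.comp hF).measurable
  set ν := m.condKernel with hν
  have hmν : m = μ ⊗ₘ ν := by rw [← hfst]; exact (m.disintegrate ν).symm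
  let κ : Kernel X Y := (Kernel.id ×ₖ ν).map Φ
  have : IsMarkovKernel κ := Kernel.IsMarkovKernel.map _ hΦ
  have hκ : m = m.fst ⊗ₘ κ.comap T.symm T.symm.measurable := by
    rw [hfst]
    refine Measure.ext_of_lintegral _ fun g hg => ?_
    have hgκ : Measurable fun x => ∫⁻ y, g (x, y) ∂κ.comap T.symm T.symm.measurable x :=
      hg.lintegral_kernel_prod_right'
    have hgF : Measurable fun z : X × Y => g (T z.1, Φ z) := hg.comp hF.measurable
    rw [Measure.lintegral_compProd hg]
    conv_rhs => rw [← hT.map_eq, lintegral_map hgκ hT.measurable]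
    conv_lhs => rw [← hinv, lintegral_map hg hF.measurable, hmν, Measure.lintegral_compProd hgF]
    refine lintegral_congr fun x => ?_
    rw [Kernel.comap_apply, T.symm_apply_apply, id_prod_map_apply ν hΦ]
    exact (lintegral_map (f := fun y => g (T x, y)) (hg.comp measurable_prodMk_left)
      (hΦ.comp measurable_prodMk_left)).symm
  have hae := eq_condKernel_of_measure_eq_compProd (κ.comap T.symm T.symm.measurable) hκ
  rw [hfst] at hae
  refine ⟨ν, inferInstance, ?_⟩
  filter_upwards [hT.quasiMeasurePreserving.ae hae] with x hx
  rw [← id_prod_map_apply ν hΦ, hν, ← hx, Kernel.comap_apply, T.symm_apply_apply]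

end InvariantLift

section ProjectiveRigidity

/-- The area form of the plane. -/
def wedge (v w : Plane) : ℝ := v 0 * w 1 - v 1 * w 0

/-- The quadratic form `v ∧ gv`, whose nonzero null vectors are the eigenvectors of `g`. -/
noncomputable def eigenform (g : SL2) (v : Plane) : ℝ := wedge v (act g v)

lemma det_eq_one (g : SL2) : g.1 0 0 * g.1 1 1 - g.1 0 1 * g.1 1 0 = 1 := by
  rw [← det_fin_two]; exact g.2

lemma wedge_act_act (g : SL2) (v w : Plane) : wedge (act g v) (act g w) = wedge v w := by
  simp only [wedge, act_apply]
  linear_combination (v 0 * w 1 - v 1 * w 0) * det_eq_one g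

lemma abs_wedge_le (v w : Plane) : |wedge v w| ≤ ‖v‖ * ‖w‖ := by
  refine abs_le_of_sq_le_sq ?_ (by positivity)
  rw [mul_pow, EuclideanSpace.real_norm_sq_eq, EuclideanSpace.real_norm_sq_eq, Fin.sum_univ_two,
    Fin.sum_univ_two, wedge]
  linarith [sq_nonneg (v 0 * w 0 + v 1 * w 1)]

lemma act_act_eq (g : SL2) (v : Plane) : act g (act g v) = g.1.trace • act g v - v := by
  ext i
  simp only [act_apply, PiLp.sub_apply, PiLp.smul_apply, smul_eq_mul, trace_fin_two]
  fin_cases i <;> simp only [Fin.zero_eta, Fin.mk_one]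
  · linear_combination (-(v 0)) * det_eq_one g
  · linear_combination (-(v 1)) * det_eq_one g

lemma act_pow_succ_apply (g : SL2) (n : ℕ) (v : Plane) :
    act (g ^ (n + 1)) v = act g (act (g ^ n) v) := by
  rw [pow_succ', act_mul_apply]

lemma eigenform_smul (g : SL2) (c : ℝ) (v : Plane) :
    eigenform g (c • v) = c ^ 2 * eigenform g v := by
  simp only [eigenform, wedge, map_smul, PiLp.smul_apply, smul_eq_mul]
  ring

lemma eigenform_act_pow (g : SL2) (n : ℕ) (v : Plane) :
    eigenform g (act (g ^ n) v) = eigenform g v := by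
  rw [eigenform, ← act_mul_apply, (Commute.self_pow g n).eq, act_mul_apply, wedge_act_act,
    eigenform]

lemma eigenform_circleAct (g h : SL2) (ξ : UnitCircle) :
    eigenform g (circleAct h ξ) = (‖act h ξ‖⁻¹) ^ 2 * eigenform g (act h ξ) := by
  rw [coe_circleAct, eigenform_smul]

lemma abs_eigenform_le (g : SL2) (v : Plane) : |eigenform g v| ≤ ‖act g‖ * ‖v‖ ^ 2 :=
  calc |eigenform g v| ≤ ‖v‖ * ‖act g v‖ := abs_wedge_le _ _
    _ ≤ ‖v‖ * (‖act g‖ * ‖v‖) := by gcongr; exact (act g).le_opNorm v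
    _ = ‖act g‖ * ‖v‖ ^ 2 := by ring

lemma continuous_eigenform (g : SL2) : Continuous (eigenform g) := by
  unfold eigenform wedge
  fun_prop

/- Up to a constant factor, the form is a sum of two squares with weights `1` and `4 - tr² > 0`. -/
lemma eigenform_ne_zero {R : SL2} (hR : |R.1.trace| < 2) {v : Plane} (hv : v ≠ 0) :
    eigenform R v ≠ 0 := by
  intro h
  have hdet := det_eq_one R
  have htr : 0 < 4 - (R.1 0 0 + R.1 1 1) ^ 2 := by
    rw [← trace_fin_two, ← sq_abs]
    nlinarith [abs_nonneg R.1.trace]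
  rw [eigenform, wedge, act_apply, act_apply] at h
  have eq_zero_of_sum {a y : ℝ} (ha : a ^ 2 + (4 - (R.1 0 0 + R.1 1 1) ^ 2) * y ^ 2 = 0) :
      y = 0 := by
    by_contra hy
    nlinarith [sq_nonneg a, mul_pos htr (sq_pos_of_ne_zero hy)]
  have h1 : v 1 = 0 := by
    refine eq_zero_of_sum (a := 2 * R.1 1 0 * v 0 + (R.1 1 1 - R.1 0 0) * v 1) ?_
    linear_combination (4 * R.1 1 0) * h - 4 * v 1 ^ 2 * hdet
  have h0 : v 0 = 0 := by
    refine eq_zero_of_sum (a := 2 * R.1 0 1 * v 1 - (R.1 1 1 - R.1 0 0) * v 0) ?_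
    linear_combination (-4 * R.1 0 1) * h - 4 * v 0 ^ 2 * hdet
  refine hv (PiLp.ext fun i => ?_)
  fin_cases i
  · exact h0
  · exact h1

lemma tendsto_atTop_of_sub_add_le_sub {a : ℕ → ℝ} {s : ℝ} (hs : 0 < s)
    (ha : ∀ n, a (n + 1) - a n + s ≤ a (n + 2) - a (n + 1)) : Tendsto a atTop atTop := by
  have hinc (n : ℕ) : a 1 - a 0 + n * s ≤ a (n + 1) - a n := by
    induction n with
    | zero => simp
    | succ n ih => push_cast; linarith [ha n]
  obtain ⟨N, hN⟩ := exists_nat_gt ((1 - (a 1 - a 0)) / s)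
  rw [div_lt_iff₀ hs] at hN
  have hlin (n : ℕ) : n + a N ≤ a (n + N) := by
    induction n with
    | zero => simp
    | succ n ih =>
      have hn := hinc (n + N)
      have hns : (0 : ℝ) ≤ n * s := by positivity
      rw [Nat.succ_add]
      push_cast at hn ⊢
      linarith
  rw [← tendsto_add_atTop_iff_nat N]
  exact tendsto_atTop_mono hlin
    (tendsto_atTop_add_const_right _ _ tendsto_natCast_atTop_atTop)

/- Cayley–Hamilton makes the norms along an orbit convex. -/
lemma tendsto_norm_act_pow {g : SL2} (hg : 2 < |g.1.trace|) {v : Plane} {c : ℝ} (hc : 0 < c)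
    (hv : ∀ n, c ≤ ‖act (g ^ n) v‖) : Tendsto (fun n => ‖act (g ^ n) v‖) atTop atTop := by
  refine tendsto_atTop_of_sub_add_le_sub (mul_pos (sub_pos.2 hg) hc) fun n => ?_
  have hrec : g.1.trace • act (g ^ (n + 1)) v = act (g ^ (n + 2)) v + act (g ^ n) v := by
    rw [act_pow_succ_apply g (n + 1), act_pow_succ_apply, act_act_eq]
    abel
  have hnorm : |g.1.trace| * ‖act (g ^ (n + 1)) v‖ ≤ ‖act (g ^ (n + 2)) v‖ + ‖act (g ^ n) v‖ := by
    rw [← Real.norm_eq_abs, ← norm_smul, hrec]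
    exact norm_add_le _ _
  linarith [mul_le_mul_of_nonneg_left (hv (n + 1)) (sub_pos.2 hg).le]

lemma tendsto_eigenform_circleAct_pow {g : SL2} (hg : 2 < |g.1.trace|) (ξ : UnitCircle) :
    Tendsto (fun n => eigenform g (circleAct (g ^ n) ξ)) atTop (𝓝 0) := by
  simp only [eigenform_circleAct, eigenform_act_pow]
  rcases eq_or_ne (eigenform g ξ) 0 with h0 | h0
  · simp [h0]
  have hg0 : 0 < ‖act g‖ := one_pos.trans_le (one_le_norm_act g)
  have hgrow : Tendsto (fun n => ‖act (g ^ n) ξ‖) atTop atTop := by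
    refine tendsto_norm_act_pow hg (c := √(|eigenform g ξ| / ‖act g‖))
      (sqrt_pos.2 (div_pos (abs_pos.2 h0) hg0)) fun n => sqrt_le_iff.2 ⟨norm_nonneg _, ?_⟩
    rw [div_le_iff₀' hg0, ← eigenform_act_pow g n]
    exact abs_eigenform_le g _
  simpa using ((tendsto_inv_atTop_zero.comp hgrow).pow 2).mul_const (eigenform g ξ)

lemma ae_eq_const_of_tendsto_iterate {X Y : Type*} [TopologicalSpace X]
    [SecondCountableTopology X] [MeasurableSpace X] [OpensMeasurableSpace X] [TopologicalSpace Y]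
    [T2Space Y] {μ : Measure X} {f : X → X} (hf : Conservative f μ) {q : X → Y}
    (hq : Continuous q) {c : Y} (hqc : ∀ x, Tendsto (fun n => q (f^[n] x)) atTop (𝓝 c)) :
    ∀ᵐ x ∂μ, q x = c := by
  filter_upwards [hf.ae_frequently_mem_of_mem_nhds] with x hx
  by_contra hne
  obtain ⟨U, V, hU, hV, hqU, hcV, hUV⟩ := t2_separation hne
  obtain ⟨n, hnU, hnV⟩ := ((hx _ (hq.continuousAt (hU.mem_nhds hqU))).and_eventually
    (hqc x (hV.mem_nhds hcV))).exists
  exact disjoint_left.1 hUV hnU hnV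

lemma iterate_circleAct (g : SL2) (n : ℕ) : (circleAct g)^[n] = circleAct (g ^ n) := by
  induction n with
  | zero => ext1 ξ; simp
  | succ n ih => ext1 ξ; rw [Function.iterate_succ_apply', ih, pow_succ', circleAct_mul]

/- By Poincaré recurrence: every orbit of a hyperbolic map accumulates on its eigendirections. -/
lemma ae_eigenform_eq_zero {g : SL2} (hg : 2 < |g.1.trace|) {ρ : Measure UnitCircle}
    [IsFiniteMeasure ρ] (hρ : ρ.map (circleAct g) = ρ) :
    ∀ᵐ ξ : UnitCircle ∂ρ, eigenform g ξ = 0 := by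
  have hmp : MeasurePreserving (circleAct g) ρ ρ := ⟨(continuous_circleAct g).measurable, hρ⟩
  refine ae_eq_const_of_tendsto_iterate (q := fun ξ : UnitCircle => eigenform g ξ) hmp.conservative
    ((continuous_eigenform g).comp continuous_subtype_val) fun ξ => ?_
  simp only [iterate_circleAct]
  exact tendsto_eigenform_circleAct_pow hg ξ

/- A quadratic form in two variables with three null directions is zero, so `g = ±1`. -/
lemma trace_sq_eq_four_of_eigenform_eq_zero {g : SL2} {v w : Plane} (hvw : wedge v w ≠ 0)
    (hv : eigenform g v = 0) (hw : eigenform g w = 0) {c d : ℝ} (hc : c ≠ 0) (hd : d ≠ 0)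
    (hcd : eigenform g (c • v + d • w) = 0) : g.1.trace ^ 2 = 4 := by
  have hpolar : wedge v (act g w) + wedge w (act g v) = 0 := by
    refine (mul_eq_zero.1 (?_ : c * d * _ = 0)).resolve_left (mul_ne_zero hc hd)
    simp only [eigenform, map_add, map_smul, wedge, PiLp.add_apply, PiLp.smul_apply,
      smul_eq_mul] at hv hw hcd ⊢
    linear_combination hcd - c ^ 2 * hv - d ^ 2 * hw
  have hdet := det_eq_one g
  have hD : wedge v w ^ 2 ≠ 0 := pow_ne_zero _ hvw
  simp only [eigenform, wedge, act_apply] at hv hw hpolar hD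
  have h10 : g.1 1 0 = 0 := by
    refine (mul_eq_zero.1 (?_ : _ * (v 0 * w 1 - v 1 * w 0) ^ 2 = 0)).resolve_right hD
    linear_combination w 1 ^ 2 * hv - v 1 * w 1 * hpolar + v 1 ^ 2 * hw
  have h11 : g.1 1 1 - g.1 0 0 = 0 := by
    refine (mul_eq_zero.1 (?_ : _ * (v 0 * w 1 - v 1 * w 0) ^ 2 = 0)).resolve_right hD
    linear_combination (-2 * w 0 * w 1) * hv + (v 0 * w 1 + v 1 * w 0) * hpolar
      - 2 * v 0 * v 1 * hw
  rw [trace_fin_two]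
  linear_combination 4 * hdet + 4 * g.1 0 1 * h10 + (g.1 1 1 - g.1 0 0) * h11

/- The condition `R.1.trace ≠ 0` excludes the rotation by a right angle, which can exchange the two
eigendirections of `g`. -/
lemma not_invariant_of_hyperbolic_of_elliptic {g R : SL2} (hg : 2 < |g.1.trace|)
    (hR : |R.1.trace| < 2) (hR0 : R.1.trace ≠ 0) {ρ : Measure UnitCircle} [IsProbabilityMeasure ρ]
    (hρg : ρ.map (circleAct g) = ρ) : ρ.map (circleAct R) ≠ ρ := by
  intro hρR
  have hnull := ae_eigenform_eq_zero hg hρg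
  have hmp : MeasurePreserving (circleAct R) ρ ρ := ⟨(continuous_circleAct R).measurable, hρR⟩
  have hnull' (n : ℕ) : ∀ᵐ ξ : UnitCircle ∂ρ, eigenform g (act (R ^ n) ξ) = 0 := by
    filter_upwards [(hmp.iterate n).quasiMeasurePreserving.ae hnull] with ξ hξ
    rw [iterate_circleAct, eigenform_circleAct] at hξ
    exact (mul_eq_zero.1 hξ).resolve_left (pow_ne_zero _ (inv_ne_zero
      (norm_ne_zero_iff.2 (act_ne_zero _ (coe_ne_zero ξ)))))
  obtain ⟨ξ, hξ0, hξ1, hξ2⟩ := (hnull.and ((hnull' 1).and (hnull' 2))).exists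
  rw [pow_one] at hξ1
  rw [pow_two, act_mul_apply, act_act_eq, sub_eq_neg_add, ← neg_one_smul ℝ] at hξ2
  have htr := trace_sq_eq_four_of_eigenform_eq_zero (eigenform_ne_zero hR (coe_ne_zero ξ)) hξ0 hξ1
    (neg_ne_zero.2 one_ne_zero) hR0 hξ2
  rw [← sq_abs] at htr
  nlinarith

end ProjectiveRigidity

section SymbolicDynamics

variable {ℓ : ℕ} {W : Set (ℕ × ℕ)} {ω : ℤ → ℕ} {μ : Measure (ℤ → ℕ)}

/-- The shift as a measurable automorphism of the space of bi-infinite sequences. -/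
def shiftEquiv : (ℤ → ℕ) ≃ᵐ (ℤ → ℕ) where
  toFun := shift
  invFun ω n := ω (n - 1)
  left_inv ω := by funext n; simp [shift]
  right_inv ω := by funext n; simp [shift]
  measurable_toFun := measurable_pi_lambda _ fun _ => measurable_pi_apply _
  measurable_invFun := measurable_pi_lambda _ fun _ => measurable_pi_apply _

lemma coe_shiftEquiv : ⇑shiftEquiv = shift := rfl

lemma shiftEquiv_symm_apply (ω : ℤ → ℕ) (m : ℤ) : shiftEquiv.symm ω m = ω (m - 1) := rfl

lemma continuous_shift : Continuous shift :=
  continuous_pi fun _ => continuous_apply _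

lemma continuous_projPlus : Continuous projPlus :=
  continuous_pi fun _ => continuous_apply _

lemma continuous_projMinus : Continuous projMinus :=
  continuous_pi fun _ => continuous_apply _

lemma shift_iterate_apply (n : ℕ) (ω : ℤ → ℕ) (m : ℤ) : shift^[n] ω m = ω (m + n) := by
  induction n generalizing ω with
  | zero => simp
  | succ n ih =>
    rw [Function.iterate_succ_apply, ih, shift]
    congr 1
    push_cast
    ring

lemma shiftEquiv_symm_iterate_apply (n : ℕ) (ω : ℤ → ℕ) (m : ℤ) :
    shiftEquiv.symm^[n] ω m = ω (m - n) := by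
  induction n generalizing ω with
  | zero => simp
  | succ n ih =>
    rw [Function.iterate_succ_apply, ih, shiftEquiv_symm_apply]
    congr 1
    push_cast
    ring

lemma shift_iterate_mem_SFT (hω : ω ∈ SFT ℓ W) (n : ℕ) : shift^[n] ω ∈ SFT ℓ W := by
  simp only [SFT, mem_ofPred_eq, shift_iterate_apply]
  exact ⟨fun m => hω.1 _, fun m => by simpa only [add_right_comm] using hω.2 (m + n)⟩

lemma isClosed_SFT (ℓ : ℕ) (W : Set (ℕ × ℕ)) : IsClosed (SFT ℓ W) := by
  have hSFT : SFT ℓ W = (⋂ n : ℤ, (fun ω : ℤ → ℕ => ω n) ⁻¹' Set.Icc 1 ℓ) ∩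
      ⋂ n : ℤ, (fun ω : ℤ → ℕ => (ω n, ω (n + 1))) ⁻¹' W := by
    ext ω
    simp [SFT]
  rw [hSFT]
  exact (isClosed_iInter fun n => (isClosed_discrete _).preimage (continuous_apply _)).inter
    (isClosed_iInter fun n => (isClosed_discrete _).preimage
      ((continuous_apply _).prodMk (continuous_apply _)))

lemma isCompact_SFT (ℓ : ℕ) (W : Set (ℕ × ℕ)) : IsCompact (SFT ℓ W) :=
  (isCompact_univ_pi fun _ : ℤ => (Set.finite_Icc 1 ℓ).isCompact).of_isClosed_subset
    (isClosed_SFT ℓ W) fun _ hω n _ => hω.1 n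

/-- The bi-infinite sequence with past `x` (read backwards from the origin) and future `y`; the
letter at the origin is `y 0`, so that `x` is recovered only when `x 0 = y 0`. -/
def glue (x y : ℕ → ℕ) : ℤ → ℕ := fun n => if 0 ≤ n then y n.toNat else x (-n).toNat

lemma projPlus_glue (x y : ℕ → ℕ) : projPlus (glue x y) = y := by
  funext n
  simp [projPlus, glue]

lemma projMinus_glue {x y : ℕ → ℕ} (h : x 0 = y 0) : projMinus (glue x y) = x := by
  funext n
  rcases Nat.eq_zero_or_pos n with rfl | hn
  · simp [projMinus, glue, h]
  · have hneg : ¬ (0 : ℤ) ≤ -(n : ℤ) := by lia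
    simp only [projMinus, glue, if_neg hneg, neg_neg, Int.toNat_natCast]

lemma glue_mem_SFT {x y : ℕ → ℕ} (h : x 0 = y 0) (hx : x ∈ projMinus '' SFT ℓ W)
    (hy : y ∈ projPlus '' SFT ℓ W) : glue x y ∈ SFT ℓ W := by
  obtain ⟨u, hu, rfl⟩ := hx
  obtain ⟨v, hv, rfl⟩ := hy
  have hpos : ∀ n : ℤ, 0 ≤ n → glue (projMinus u) (projPlus v) n = v n := fun n hn => by
    simp only [glue, if_pos hn, projPlus, Int.toNat_of_nonneg hn]
  have hneg : ∀ n : ℤ, n ≤ 0 → glue (projMinus u) (projPlus v) n = u n := fun n hn => by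
    have := congrFun (projMinus_glue h) (-n).toNat
    simp only [projMinus] at this
    rwa [Int.toNat_of_nonneg (by lia), neg_neg] at this
  constructor
  · intro n
    rcases le_total n 0 with hn | hn
    · rw [hneg n hn]
      exact hu.1 n
    · rw [hpos n hn]
      exact hv.1 n
  · intro n
    rcases lt_or_ge n 0 with hn | hn
    · rw [hneg n hn.le, hneg _ (by lia)]
      exact hu.2 n
    · rw [hpos n hn, hpos _ (by lia)]
      exact hv.2 n

lemma ae_map_mem_image_of_isCompact {X Y : Type*} [TopologicalSpace X] {_ : MeasurableSpace X}
    [OpensMeasurableSpace X] [TopologicalSpace Y] [T2Space Y] {_ : MeasurableSpace Y}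
    [BorelSpace Y] {ρ : Measure X} {s : Set X} (hs : IsCompact s) (hρ : ∀ᵐ x ∂ρ, x ∈ s) {f : X → Y}
    (hf : Continuous f) : ∀ᵐ y ∂ρ.map f, y ∈ f '' s := by
  refine (ae_map_iff hf.measurable.aemeasurable (hs.image hf).isClosed.measurableSet).2 ?_
  filter_upwards [hρ] with x hx
  exact mem_image_of_mem f hx

lemma measurableSet_zero_eq (j : ℕ) : MeasurableSet {a : ℕ → ℕ | a 0 = j} :=
  measurableSet_eq_fun (measurable_pi_apply 0) measurable_const

lemma LocalProductStructure.prod_absolutelyContinuous (hlps : LocalProductStructure ℓ W μ)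
    [SFinite μ] (hconc : ∀ᵐ ω ∂μ, ω ∈ SFT ℓ W) {j : ℕ} (hj : j ∈ Set.Icc 1 ℓ) :
    ((μ.map projMinus).restrict {a | a 0 = j}).prod ((μ.map projPlus).restrict {a | a 0 = j}) ≪
      (μ.restrict {ω | ω 0 = j}).map pairProj := by
  obtain ⟨ψ, hψ, hmap⟩ := hlps
  obtain ⟨hint, hmap⟩ := hmap j hj.1 hj.2
  rw [hmap]
  refine withDensity_absolutelyContinuous' hint.1.aemeasurable.ennreal_ofReal ?_
  have hpast := Measure.quasiMeasurePreserving_fst (ν := (μ.map projPlus).restrict {a | a 0 = j})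
    |>.ae ((ae_restrict_mem (measurableSet_zero_eq j)).and
      (ae_restrict_of_ae (ae_map_mem_image_of_isCompact (isCompact_SFT ℓ W) hconc
        continuous_projMinus)))
  have hfuture := Measure.quasiMeasurePreserving_snd
    (μ := (μ.map projMinus).restrict {a | a 0 = j})
    |>.ae ((ae_restrict_mem (measurableSet_zero_eq j)).and
      (ae_restrict_of_ae (ae_map_mem_image_of_isCompact (isCompact_SFT ℓ W) hconc
        continuous_projPlus)))
  filter_upwards [hpast, hfuture] with z hx hy
  have h0 : z.1 0 = z.2 0 := hx.1.trans hy.1.symm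
  have hpos := hψ _ (glue_mem_SFT h0 hx.2 hy.2)
  rw [pairProj, projPlus_glue, projMinus_glue h0] at hpos
  exact (ENNReal.ofReal_pos.2 hpos).ne'

lemma LocalProductStructure.exists_ae_eq_const (hlps : LocalProductStructure ℓ W μ) [SFinite μ]
    (hconc : ∀ᵐ ω ∂μ, ω ∈ SFT ℓ W) {E : Type*} [Nonempty E] {_ : MeasurableSpace E}
    [MeasurableEq E] {g : (ℤ → ℕ) → E} {u v : (ℕ → ℕ) → E} (hu : Measurable u) (hv : Measurable v)
    (hgu : g =ᵐ[μ] u ∘ projMinus) (hgv : g =ᵐ[μ] v ∘ projPlus) (j : ℕ) :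
    ∃ c, ∀ᵐ ω ∂μ, ω 0 = j → g ω = c := by
  by_cases hj : ∀ᵐ ω ∂μ, ω 0 ≠ j
  · refine ⟨Classical.arbitrary E, ?_⟩
    filter_upwards [hj] with ω hω h
    exact absurd h hω
  have hjℓ : j ∈ Set.Icc 1 ℓ := by
    by_contra hjℓ
    exact hj (hconc.mono fun ω hω h => hjℓ (h ▸ hω.1 0))
  have hprod := (hlps.prod_absolutelyContinuous hconc hjℓ).ae_le <|
    (ae_map_iff (continuous_projMinus.measurable.prodMk continuous_projPlus.measurable).aemeasurable
      (measurableSet_eq_fun (hu.comp measurable_fst) (hv.comp measurable_snd))).2 <|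
    ae_restrict_of_ae (hgu.symm.trans hgv)
  have : NeZero ((μ.map projMinus).restrict {a | a 0 = j}) := ⟨fun h0 => hj <| by
    rw [Measure.restrict_eq_zero,
      Measure.map_apply continuous_projMinus.measurable (measurableSet_zero_eq j)] at h0
    exact measure_eq_zero_iff_ae_notMem.1 h0⟩
  obtain ⟨x, hx⟩ := (Measure.ae_ae_of_ae_prod hprod).exists
  refine ⟨u x, ?_⟩
  rw [ae_restrict_iff' (measurableSet_zero_eq j)] at hx
  filter_upwards [ae_of_ae_map continuous_projPlus.measurable.aemeasurable hx, hgv]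
    with ω hω hgω h
  exact hgω.trans (hω h).symm

lemma isOpen_eval_eq (n : ℤ) (j : ℕ) : IsOpen {ω : ℤ → ℕ | ω n = j} := by
  have hn : Continuous fun ω : ℤ → ℕ => ω n := continuous_apply n
  exact (isOpen_discrete {j}).preimage hn

lemma FullSupport.frequently_mem (hμ : FullSupport ℓ W μ) {U : Set (ℤ → ℕ)} (hU : IsOpen U)
    (hωU : ω ∈ U) (hω : ω ∈ SFT ℓ W) : ∃ᵐ ω' ∂μ, ω' ∈ U :=
  frequently_ae_iff.2 (hμ U hU ⟨ω, hωU, hω⟩).ne'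

lemma exists_frequently_mem_iterate_mem {X : Type*} {_ : MeasurableSpace X} {ρ : Measure X}
    [IsFiniteMeasure ρ] {T : X → X} (hT : Ergodic T ρ) {U V : Set X} (hU : ∃ᵐ x ∂ρ, x ∈ U)
    (hV : MeasurableSet V) (hρV : ∃ᵐ x ∂ρ, x ∈ V) (N : ℕ) :
    ∃ n ≥ N, ∃ᵐ x ∂ρ, x ∈ U ∧ T^[n] x ∈ V := by
  set S : Set X := ⋃ n ≥ N, T^[n] ⁻¹' V
  have hS : MeasurableSet S := .iUnion fun n => .iUnion fun _ => hT.measurable.iterate n hV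
  have hTS : T ⁻¹' S ⊆ S := by
    intro x hx
    simp only [S, mem_preimage, mem_iUnion] at hx ⊢
    obtain ⟨n, hn, hx⟩ := hx
    exact ⟨n + 1, by lia, by rwa [Function.iterate_succ_apply]⟩
  have hS0 : ρ S ≠ 0 := fun h => frequently_ae_iff.1 hρV <| by
    refine le_zero_iff.1 (le_trans ?_ h.le)
    rw [ofPred_mem_eq, ← (hT.toMeasurePreserving.iterate N).measure_preimage hV.nullMeasurableSet]
    exact measure_mono (subset_iUnion₂_of_subset N le_rfl subset_rfl)
  have hfull : ∀ᵐ x ∂ρ, x ∈ S := by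
    rcases hT.ae_empty_or_univ_of_preimage_ae_le hS.nullMeasurableSet hTS.eventuallyLE with h | h
    · exact absurd (ae_eq_empty.1 h) hS0
    · exact h.mem_iff.mono fun x hx => hx.2 trivial
  by_contra! hno
  refine hU ?_
  have hnever : ∀ᵐ x ∂ρ, ∀ n ≥ N, x ∈ U → T^[n] x ∉ V :=
    ae_all_iff.2 fun n => ae_all_iff.2 fun hn => hno n hn
  filter_upwards [hnever, hfull] with x hx hxS hxU
  simp only [S, mem_iUnion] at hxS
  obtain ⟨n, hn, hxV⟩ := hxS
  exact hx n hn hxU hxV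

lemma FullSupport.exists_transition (hμ : FullSupport ℓ W μ) [IsFiniteMeasure μ]
    (hconc : ∀ᵐ ω ∂μ, ω ∈ SFT ℓ W) (herg : Ergodic shift μ) {u v : ℤ → ℕ} (hu : u ∈ SFT ℓ W)
    (hv : v ∈ SFT ℓ W) (N : ℕ) : ∃ n ≥ N, ∃ ω ∈ SFT ℓ W, ω 0 = u 0 ∧ ω n = v 0 := by
  obtain ⟨n, hn, h⟩ := exists_frequently_mem_iterate_mem herg
    (hμ.frequently_mem (isOpen_eval_eq 0 (u 0)) rfl hu) (isOpen_eval_eq 0 (v 0)).measurableSet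
    (hμ.frequently_mem (isOpen_eval_eq 0 (v 0)) rfl hv) N
  obtain ⟨ω, ⟨h0, hωn⟩, hω⟩ := (h.and_eventually hconc).exists
  refine ⟨n, hn, ω, hω, h0, ?_⟩
  rwa [mem_ofPred_eq, shift_iterate_apply, zero_add] at hωn

end SymbolicDynamics

section StepCocycle

open ProbabilityTheory

variable {ℓ : ℕ} {W : Set (ℕ × ℕ)} {k : ℝ} {ω : ℤ → ℕ} {μ : Measure (ℤ → ℕ)}

/-- The transfer matrix across the transition from the letter `i` to the letter `j`; it is the value
of `Acoc k` at the sequences with `ω₋₁ = i` and `ω₀ = j`. -/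
noncomputable def stepMatrix (k : ℝ) (i j : ℕ) : Matrix (Fin 2) (Fin 2) ℝ :=
  √((j : ℝ) / (i : ℝ)) •
    !![((j : ℝ) + (i : ℝ)) / (j : ℝ) * Real.cos k, -((i : ℝ) / (j : ℝ)); (1 : ℝ), 0]

lemma det_stepMatrix (k : ℝ) {i j : ℕ} (hi : 0 < i) (hj : 0 < j) : (stepMatrix k i j).det = 1 := by
  have : (0 : ℝ) < i := by exact_mod_cast hi
  have : (0 : ℝ) < j := by exact_mod_cast hj
  rw [stepMatrix, Matrix.det_smul, Matrix.det_fin_two_of, Fintype.card_fin,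
    Real.sq_sqrt (by positivity)]
  field_simp
  ring

open Classical in
/-- The transfer matrix as an element of `SL(2, ℝ)`. Outside the alphabet `{1, …, ℓ}` it is set to
the identity, so that the family is bounded. -/
noncomputable def stepSL (ℓ : ℕ) (k : ℝ) (i j : ℕ) : SL2 :=
  if h : i ∈ Set.Icc 1 ℓ ∧ j ∈ Set.Icc 1 ℓ then
    ⟨stepMatrix k i j, det_stepMatrix k h.1.1 h.2.1⟩ else 1

/-- The transfer cocycle over the shift. It reads the transition at the coordinates `0, 1` rather
than `-1, 0`, so that it depends on the future only. -/
noncomputable def stepCocycle (ℓ : ℕ) (k : ℝ) (ω : ℤ → ℕ) : SL2 := stepSL ℓ k (ω 0) (ω 1)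

lemma coe_stepSL {i j : ℕ} (hi : i ∈ Set.Icc 1 ℓ) (hj : j ∈ Set.Icc 1 ℓ) :
    (stepSL ℓ k i j).1 = stepMatrix k i j :=
  congrArg Subtype.val (dif_pos ⟨hi, hj⟩ : stepSL ℓ k i j = _)

lemma coe_stepCocycle (hω : ω ∈ SFT ℓ W) : (stepCocycle ℓ k ω).1 = Acoc k (shift ω) := by
  rw [stepCocycle, coe_stepSL (hω.1 0) (hω.1 1)]
  rfl

lemma coe_cocycle_stepCocycle (hω : ω ∈ SFT ℓ W) (n : ℕ) :
    (cocycle shift (stepCocycle ℓ k) n ω).1 = AIter k (shift ω) n := by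
  induction n with
  | zero => rfl
  | succ n ih =>
    have hstep := coe_stepCocycle (k := k) (shift_iterate_mem_SFT hω n)
    rw [← Function.iterate_succ_apply' shift, Function.iterate_succ_apply] at hstep
    rw [AIter, ← ih, ← hstep]
    rfl

lemma exists_norm_stepSL_le (ℓ : ℕ) (k : ℝ) : ∃ K, ∀ i j, ‖act (stepSL ℓ k i j)‖ ≤ K := by
  have hfin : (Set.range fun z : ℕ × ℕ => stepSL ℓ k z.1 z.2).Finite := by
    refine (((Set.finite_Icc 1 ℓ).prod (Set.finite_Icc 1 ℓ)).image
      (fun z => stepSL ℓ k z.1 z.2)).insert 1 |>.subset ?_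
    rintro _ ⟨z, rfl⟩
    by_cases hz : z.1 ∈ Set.Icc 1 ℓ ∧ z.2 ∈ Set.Icc 1 ℓ
    · exact .inr ⟨z, hz, rfl⟩
    · exact .inl (dif_neg hz)
  obtain ⟨K, hK⟩ := (hfin.image fun g => ‖act g‖).bddAbove
  exact ⟨K, fun i j => hK ⟨_, ⟨(i, j), rfl⟩, rfl⟩⟩

lemma continuous_skew_stepCocycle : Continuous fun z : (ℤ → ℕ) × UnitCircle =>
    (shift z.1, circleAct (stepCocycle ℓ k z.1) z.2) := by
  have hact : Continuous fun z : (ℕ × ℕ) × UnitCircle => circleAct (stepSL ℓ k z.1.1 z.1.2) z.2 :=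
    continuous_prod_of_discrete_left.2 fun a => continuous_circleAct (stepSL ℓ k a.1 a.2)
  have hletters : Continuous fun z : (ℤ → ℕ) × UnitCircle => ((z.1 0, z.1 1), z.2) := by fun_prop
  exact (continuous_shift.comp continuous_fst).prodMk (hact.comp hletters)

lemma integral_log_norm_cocycle (hconc : ∀ᵐ ω ∂μ, ω ∈ SFT ℓ W)
    (hT : MeasurePreserving shift μ μ) (n : ℕ) :
    ∫ ω, log ‖act (cocycle shift (stepCocycle ℓ k) n ω)‖ ∂μ = ∫ ω, log ‖AIter k ω n‖ ∂μ := by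
  rw [← hT.integral_comp shiftEquiv.measurableEmbedding fun ω => log ‖AIter k ω n‖]
  refine integral_congr_ae ?_
  filter_upwards [hconc] with ω hω
  rw [norm_act, coe_cocycle_stepCocycle hω]

end StepCocycle

section EquivariantFamily

open ProbabilityTheory

variable {ℓ : ℕ} {W : Set (ℕ × ℕ)} {k : ℝ} {ω : ℤ → ℕ} {μ : Measure (ℤ → ℕ)}

/-- The σ-algebra generated by the letters at the coordinates `n ≥ 0`. -/
abbrev futureAlgebra : MeasurableSpace (ℤ → ℕ) := .comap projPlus inferInstance

/-- The σ-algebra generated by the letters at the coordinates `n ≤ 0`. -/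
abbrev pastAlgebra : MeasurableSpace (ℤ → ℕ) := .comap projMinus inferInstance

lemma measurable_future_eval {m : ℤ} (hm : 0 ≤ m) : Measurable[futureAlgebra] fun ω => ω m := by
  convert (measurable_pi_apply m.toNat).comp (comap_measurable projPlus) using 2 with ω
  simp [projPlus, hm]

lemma measurable_past_eval {m : ℤ} (hm : m ≤ 0) : Measurable[pastAlgebra] fun ω => ω m := by
  convert (measurable_pi_apply m.natAbs).comp (comap_measurable projMinus) using 2 with ω
  simp [projMinus, abs_of_nonpos hm]

lemma measurable_future_shift : Measurable[futureAlgebra, futureAlgebra] shift :=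
  measurable_comap_iff.2 <| @measurable_pi_lambda _ _ _ futureAlgebra _ _ fun n =>
    measurable_future_eval (m := n + 1) (by positivity)

lemma measurable_past_shiftEquiv_symm :
    Measurable[pastAlgebra, pastAlgebra] shiftEquiv.symm :=
  measurable_comap_iff.2 <| @measurable_pi_lambda _ _ _ pastAlgebra _ _ fun n =>
    measurable_past_eval (m := -n - 1) (by lia)

lemma pi_le_iSup_of_measurable_eval {𝒢 : ℕ → MeasurableSpace (ℤ → ℕ)}
    (h : ∀ m : ℤ, ∃ n, Measurable[𝒢 n] fun ω => ω m) : MeasurableSpace.pi ≤ ⨆ n, 𝒢 n :=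
  iSup_le fun m => (h m).elim fun n hn => hn.comap_le.trans (le_iSup 𝒢 n)

lemma pi_le_iSup_future :
    MeasurableSpace.pi ≤ ⨆ n : ℕ, futureAlgebra.comap shiftEquiv.symm^[n] := by
  refine pi_le_iSup_of_measurable_eval fun m => ⟨m.natAbs, ?_⟩
  convert (measurable_future_eval (m := m + m.natAbs) (by lia)).comp
    (comap_measurable shiftEquiv.symm^[m.natAbs]) using 2 with ω
  rw [Function.comp_apply, shiftEquiv_symm_iterate_apply, add_sub_cancel_right]

lemma pi_le_iSup_past : MeasurableSpace.pi ≤ ⨆ n : ℕ, pastAlgebra.comap shift^[n] := by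
  refine pi_le_iSup_of_measurable_eval fun m => ⟨m.natAbs, ?_⟩
  convert (measurable_past_eval (m := m - m.natAbs) (by lia)).comp
    (comap_measurable shift^[m.natAbs]) using 2 with ω
  rw [Function.comp_apply, shift_iterate_apply, sub_add_cancel]

lemma measurable_future_stepCocycle : Measurable[futureAlgebra] (stepCocycle ℓ k) :=
  (measurable_of_countable fun z : ℕ × ℕ => stepSL ℓ k z.1 z.2).comp
    ((measurable_future_eval le_rfl).prodMk (measurable_future_eval zero_le_one))

lemma measurable_past_stepCocycle_inv :
    Measurable[pastAlgebra] fun ω => (stepCocycle ℓ k (shiftEquiv.symm ω))⁻¹ := by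
  have hletters : Measurable[pastAlgebra] fun ω : ℤ → ℕ => (ω (0 - 1), ω (1 - 1)) :=
    (measurable_past_eval (by lia)).prodMk (measurable_past_eval (by lia))
  exact ((measurable_of_countable fun z : ℕ × ℕ => stepSL ℓ k z.1 z.2).comp hletters).inv

lemma integral_log_norm_cocycle_inv (hT : MeasurePreserving shift μ μ) (n : ℕ) :
    ∫ ω, log ‖act (cocycle shiftEquiv.symm
        (fun ω => (stepCocycle ℓ k (shiftEquiv.symm ω))⁻¹) n ω)‖ ∂μ
      = ∫ ω, log ‖act (cocycle shift (stepCocycle ℓ k) n ω)‖ ∂μ := by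
  simp only [cocycle_inv_of_rightInverse _ shiftEquiv.apply_symm_apply, norm_act_inv,
    coe_shiftEquiv]
  exact ((MeasurePreserving.symm shiftEquiv hT).iterate n).integral_comp
    (iterateEquiv shiftEquiv.symm n).measurableEmbedding
    fun ω => log ‖act (cocycle shift (stepCocycle ℓ k) n ω)‖

lemma map_circleAct_one (ρ : Measure UnitCircle) : ρ.map (circleAct 1) = ρ := by
  have hid : circleAct 1 = id := funext circleAct_one
  rw [hid, Measure.map_id]

lemma map_circleAct_mul (g h : SL2) (ρ : Measure UnitCircle) :
    ρ.map (circleAct (g * h)) = (ρ.map (circleAct h)).map (circleAct g) := by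
  have hcomp : circleAct (g * h) = circleAct g ∘ circleAct h := funext (circleAct_mul g h)
  rw [hcomp, Measure.map_map (continuous_circleAct g).measurable
    (continuous_circleAct h).measurable]

lemma map_circleAct_inv {g : SL2} {ρ ρ' : Measure UnitCircle} (h : ρ.map (circleAct g) = ρ') :
    ρ'.map (circleAct g⁻¹) = ρ := by
  rw [← h, ← map_circleAct_mul, inv_mul_cancel, map_circleAct_one]

section VanishingGrowth

variable [IsProbabilityMeasure μ] (hT : MeasurePreserving shift μ μ)
  (hgrow : Tendsto (fun n : ℕ => 1 / (n : ℝ) *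
    ∫ ω, log ‖act (cocycle shift (stepCocycle ℓ k) n ω)‖ ∂μ) atTop (𝓝 0))
  {ν : Kernel (ℤ → ℕ) UnitCircle} [IsMarkovKernel ν]
  (hν : ∀ᵐ ω ∂μ, (ν ω).map (circleAct (stepCocycle ℓ k ω)) = ν (shift ω))
include hT hgrow hν

lemma condExp_future_integral_kernel {f : C(UnitCircle, ℝ)} (hf : ∀ ξ, |f ξ| ≤ 1) :
    μ[fun ω => ∫ ξ, f ξ ∂ν ω | futureAlgebra] =ᵐ[μ] fun ω => ∫ ξ, f ξ ∂ν ω := by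
  obtain ⟨K, hK⟩ := exists_norm_stepSL_le ℓ k
  exact condExp_integral_kernel_ae_eq (T := shiftEquiv) continuous_projPlus.measurable.comap_le hT
    measurable_future_shift pi_le_iSup_future measurable_future_stepCocycle (fun ω => hK _ _) hgrow
    ν hν hf

lemma condExp_past_integral_kernel {f : C(UnitCircle, ℝ)} (hf : ∀ ξ, |f ξ| ≤ 1) :
    μ[fun ω => ∫ ξ, f ξ ∂ν ω | pastAlgebra] =ᵐ[μ] fun ω => ∫ ξ, f ξ ∂ν ω := by
  obtain ⟨K, hK⟩ := exists_norm_stepSL_le ℓ k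
  have hT' : MeasurePreserving shiftEquiv.symm μ μ := MeasurePreserving.symm shiftEquiv hT
  refine condExp_integral_kernel_ae_eq (T := shiftEquiv.symm)
    continuous_projMinus.measurable.comap_le hT' measurable_past_shiftEquiv_symm pi_le_iSup_past
    measurable_past_stepCocycle_inv (fun ω => by rw [norm_act_inv]; exact hK _ _)
    (by simpa only [integral_log_norm_cocycle_inv hT] using hgrow) ν ?_ hf
  filter_upwards [hT'.quasiMeasurePreserving.ae hν] with ω hω
  rw [← coe_shiftEquiv, shiftEquiv.apply_symm_apply] at hω
  exact map_circleAct_inv hω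

lemma exists_ae_integral_kernel_eq_const (hconc : ∀ᵐ ω ∂μ, ω ∈ SFT ℓ W)
    (hlps : LocalProductStructure ℓ W μ) (f : C(UnitCircle, ℝ)) (j : ℕ) :
    ∃ c, ∀ᵐ ω ∂μ, ω 0 = j → ∫ ξ, f ξ ∂ν ω = c := by
  set a : ℝ := (‖f‖ + 1)⁻¹ with ha
  have hf : ∀ ξ, |(a • f) ξ| ≤ 1 := fun ξ => by
    have hfξ : |f ξ| ≤ ‖f‖ := f.norm_coe_le_norm ξ
    rw [ContinuousMap.smul_apply, smul_eq_mul, abs_mul, abs_of_pos (by positivity), ha,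
      inv_mul_le_iff₀ (by positivity)]
    linarith
  obtain ⟨v, hv, hv'⟩ := (stronglyMeasurable_condExp (μ := μ) (m := futureAlgebra)
    (f := fun ω => ∫ ξ, (a • f) ξ ∂ν ω)).measurable.exists_eq_measurable_comp
  obtain ⟨u, hu, hu'⟩ := (stronglyMeasurable_condExp (μ := μ) (m := pastAlgebra)
    (f := fun ω => ∫ ξ, (a • f) ξ ∂ν ω)).measurable.exists_eq_measurable_comp
  have hfuture := condExp_future_integral_kernel hT hgrow hν hf
  have hpast := condExp_past_integral_kernel hT hgrow hν hf
  rw [hv'] at hfuture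
  rw [hu'] at hpast
  obtain ⟨c, hc⟩ := hlps.exists_ae_eq_const hconc hu hv hpast.symm hfuture.symm j
  refine ⟨a⁻¹ * c, ?_⟩
  filter_upwards [hc] with ω hω h
  have ha0 : a ≠ 0 := by positivity
  rw [← hω h, eq_inv_mul_iff_mul_eq₀ ha0]
  simp only [ContinuousMap.smul_apply, smul_eq_mul, integral_const_mul]

end VanishingGrowth

lemma continuous_integral_continuousMap {Y : Type*} [TopologicalSpace Y] [CompactSpace Y]
    {_ : MeasurableSpace Y} [BorelSpace Y] (ρ : Measure Y) [IsFiniteMeasure ρ] :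
    Continuous fun f : C(Y, ℝ) => ∫ y, f y ∂ρ := by
  have hL1 := continuous_integral.comp
    (ContinuousMap.toLp 1 ρ ℝ : C(Y, ℝ) →L[ℝ] Lp ℝ 1 ρ).continuous
  exact hL1.congr fun f => integral_congr_ae (ContinuousMap.coeFn_toLp ρ f)

lemma eq_of_integral_eq_of_dense {Y : Type*} [TopologicalSpace Y] [CompactSpace Y]
    [HasOuterApproxClosed Y] {_ : MeasurableSpace Y} [BorelSpace Y] {ρ₁ ρ₂ : Measure Y}
    [IsFiniteMeasure ρ₁] [IsFiniteMeasure ρ₂] {D : Set C(Y, ℝ)} (hD : Dense D)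
    (h : ∀ f ∈ D, ∫ y, f y ∂ρ₁ = ∫ y, f y ∂ρ₂) : ρ₁ = ρ₂ := by
  have heq := Continuous.ext_on hD (continuous_integral_continuousMap ρ₁)
    (continuous_integral_continuousMap ρ₂) h
  exact ext_of_forall_integral_eq_of_IsFiniteMeasure fun f => congrFun heq f.toContinuousMap

lemma exists_ae_kernel_eq_of_integral {X Y : Type*} [Nonempty X] {_ : MeasurableSpace X}
    [TopologicalSpace Y] [PolishSpace Y] [CompactSpace Y] {_ : MeasurableSpace Y} [BorelSpace Y]
    {m : Measure X} {ν : Kernel X Y} [IsFiniteKernel ν] {s : Set X}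
    (h : ∀ f : C(Y, ℝ), ∃ c, ∀ᵐ x ∂m, x ∈ s → ∫ y, f y ∂ν x = c) :
    ∃ x₀, ∀ᵐ x ∂m, x ∈ s → ν x = ν x₀ := by
  let := TopologicalSpace.upgradeIsCompletelyMetrizable Y
  obtain ⟨D, hDc, hD⟩ := TopologicalSpace.exists_countable_dense C(Y, ℝ)
  choose c hc using h
  have hall : ∀ᵐ x ∂m, ∀ f ∈ D, x ∈ s → ∫ y, f y ∂ν x = c f :=
    (ae_ball_iff hDc).2 fun f _ => hc f
  by_cases hs : ∃ x₀ ∈ s, ∀ f ∈ D, ∫ y, f y ∂ν x₀ = c f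
  · obtain ⟨x₀, -, hx₀⟩ := hs
    refine ⟨x₀, ?_⟩
    filter_upwards [hall] with x hx hxs
    exact eq_of_integral_eq_of_dense hD fun f hf => (hx f hf hxs).trans (hx₀ f hf).symm
  · refine ⟨Classical.arbitrary X, ?_⟩
    filter_upwards [hall] with x hx hxs
    exact absurd ⟨x, hxs, fun f hf => hx f hf hxs⟩ hs

/-- A family of measures on the circle of directions, indexed by the letters, which the transfer
matrices map to one another. -/
def IsEquivariantFamily (ℓ : ℕ) (W : Set (ℕ × ℕ)) (k : ℝ) (ρ : ℕ → Measure UnitCircle) : Prop :=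
  ∀ ω ∈ SFT ℓ W, (ρ (ω 0)).map (circleAct (stepCocycle ℓ k ω)) = ρ (ω 1)

lemma exists_isEquivariantFamily [IsProbabilityMeasure μ] (hconc : ∀ᵐ ω ∂μ, ω ∈ SFT ℓ W)
    (hT : MeasurePreserving shift μ μ) (hlps : LocalProductStructure ℓ W μ)
    (hsupp : FullSupport ℓ W μ)
    (hgrow : Tendsto (fun n : ℕ => 1 / (n : ℝ) * ∫ ω, log ‖AIter k ω n‖ ∂μ) atTop (𝓝 0)) :
    ∃ ρ : ℕ → Measure UnitCircle, (∀ j, IsProbabilityMeasure (ρ j)) ∧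
      IsEquivariantFamily ℓ W k ρ := by
  simp only [← integral_log_norm_cocycle (k := k) hconc hT] at hgrow
  have : Nonempty UnitCircle := ⟨radial 0⟩
  obtain ⟨ν, hνm, hν⟩ := exists_equivariant_kernel (T := shiftEquiv) hT
    (continuous_skew_stepCocycle (ℓ := ℓ) (k := k))
  change ∀ᵐ ω ∂μ, (ν ω).map (circleAct (stepCocycle ℓ k ω)) = ν (shift ω) at hν
  have hconst : ∀ j, ∃ ω₀, ∀ᵐ ω ∂μ, ω 0 = j → ν ω = ν ω₀ := fun j =>
    exists_ae_kernel_eq_of_integral (s := {ω : ℤ → ℕ | ω 0 = j}) fun f =>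
      exists_ae_integral_kernel_eq_const hT hgrow hν hconc hlps f j
  choose τ hτ using hconst
  refine ⟨fun j => ν (τ j), fun j => inferInstance, fun ω hω => ?_⟩
  have hfreq := hsupp.frequently_mem
    ((isOpen_eval_eq 0 (ω 0)).inter (isOpen_eval_eq 1 (ω 1))) ⟨rfl, rfl⟩ hω
  obtain ⟨ω', ⟨h0, h1⟩, hν0, hν1, hmap⟩ := (hfreq.and_eventually ((hτ (ω 0)).and
    ((hT.quasiMeasurePreserving.ae (hτ (ω 1))).and hν))).exists
  rw [mem_ofPred_eq] at h0 h1
  have hstep : stepCocycle ℓ k ω' = stepCocycle ℓ k ω := by simp only [stepCocycle, h0, h1]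
  rwa [hν0 h0, hν1 h1, hstep] at hmap

lemma IsEquivariantFamily.map_cocycle {ρ : ℕ → Measure UnitCircle}
    (hρ : IsEquivariantFamily ℓ W k ρ) (hω : ω ∈ SFT ℓ W) (n : ℕ) :
    (ρ (ω 0)).map (circleAct (cocycle shift (stepCocycle ℓ k) n ω)) = ρ (ω n) := by
  induction n with
  | zero => exact map_circleAct_one _
  | succ n ih =>
    have hstep := hρ _ (shift_iterate_mem_SFT hω n)
    rw [shift_iterate_apply, shift_iterate_apply, zero_add, add_comm 1, ← ih,
      ← map_circleAct_mul] at hstep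
    exact_mod_cast hstep

end EquivariantFamily

section PeriodicTraces

variable {ℓ : ℕ} {W : Set (ℕ × ℕ)} {k : ℝ} {μ : Measure (ℤ → ℕ)}

lemma shiftEquiv_symm_mem_SFT {ω : ℤ → ℕ} (hω : ω ∈ SFT ℓ W) : shiftEquiv.symm ω ∈ SFT ℓ W := by
  refine ⟨fun n => hω.1 (n - 1), fun n => ?_⟩
  rw [shiftEquiv_symm_apply, shiftEquiv_symm_apply, add_sub_right_comm]
  exact hω.2 (n - 1)

lemma apply_eq_of_shift_eq {r : ℤ → ℕ} (hr : shift r = r) (n : ℤ) : r n = r 0 := by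
  have h : ∀ m, r (m + 1) = r m := congrFun hr
  induction n using Int.induction_on with
  | zero => rfl
  | succ n ih => rw [h, ih]
  | pred n ih => rw [← ih, ← h (-n - 1), sub_add_cancel]

lemma stepMatrix_self (k : ℝ) {a : ℕ} (ha : 0 < a) :
    stepMatrix k a a = !![2 * Real.cos k, -1; 1, 0] := by
  have ha' : (a : ℝ) ≠ 0 := by positivity
  rw [stepMatrix, div_self ha', Real.sqrt_one, one_smul, ← two_mul, mul_div_cancel_right₀ _ ha']

lemma coe_stepCocycle_of_shift_eq {r : ℤ → ℕ} (hr : r ∈ SFT ℓ W) (hrr : shift r = r) :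
    (stepCocycle ℓ k r).1 = !![2 * Real.cos k, -1; 1, 0] := by
  rw [stepCocycle, apply_eq_of_shift_eq hrr 1, coe_stepSL (hr.1 0) (hr.1 0),
    stepMatrix_self k (hr.1 0).1]

lemma abs_cos_lt_one (hk : k ∈ Ioo 0 π) : |Real.cos k| < 1 := by
  have h := sin_pos_of_mem_Ioo hk
  rw [← sq_lt_one_iff_abs_lt_one]
  nlinarith [sin_sq_add_cos_sq k]

lemma cos_ne_zero_of_ne_pi_div_two (hk : k ∈ Ioo 0 π) (hk2 : k ≠ π / 2) : Real.cos k ≠ 0 := by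
  intro h
  refine hk2 (injOn_cos ⟨hk.1.le, hk.2.le⟩ ⟨by positivity, by linarith [pi_pos]⟩ ?_)
  rw [h, cos_pi_div_two]

lemma trace_conj (h g : SL2) : (h * g * h⁻¹).1.trace = g.1.trace := by
  change (h.1 * g.1 * (h⁻¹).1).trace = _
  rw [Matrix.trace_mul_comm, ← Matrix.mul_assoc]
  change ((h⁻¹ * h).1 * g.1).trace = _
  rw [inv_mul_cancel]
  exact congrArg Matrix.trace (Matrix.one_mul g.1)

lemma map_circleAct_conj {g h : SL2} {ρ ρ' : Measure UnitCircle} (hg : ρ.map (circleAct g) = ρ)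
    (hh : ρ.map (circleAct h) = ρ') : ρ'.map (circleAct (h * g * h⁻¹)) = ρ' := by
  rw [map_circleAct_mul, map_circleAct_inv hh, map_circleAct_mul, hg, hh]

lemma abs_trace_le_two_of_growth_zero [IsProbabilityMeasure μ] (hconc : ∀ᵐ ω ∂μ, ω ∈ SFT ℓ W)
    (herg : Ergodic shift μ) (hlps : LocalProductStructure ℓ W μ) (hsupp : FullSupport ℓ W μ)
    (hfix : ∃ r ∈ SFT ℓ W, shift r = r) (hk : k ∈ Ioo 0 π) (hk2 : k ≠ π / 2)
    (hgrow : Tendsto (fun n : ℕ => 1 / (n : ℝ) * ∫ ω, log ‖AIter k ω n‖ ∂μ) atTop (𝓝 0))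
    {p : ℤ → ℕ} (hp : p ∈ SFT ℓ W) {N : ℕ} (hN : shift^[N] p = p) :
    |(AIter k p N).trace| ≤ 2 := by
  by_contra! hhyp
  obtain ⟨ρ, hρm, hρ⟩ := exists_isEquivariantFamily hconc herg.toMeasurePreserving hlps hsupp hgrow
  obtain ⟨r, hr, hrr⟩ := hfix
  set q := shiftEquiv.symm p with hq
  have hqS : q ∈ SFT ℓ W := shiftEquiv_symm_mem_SFT hp
  have hqN : q N = q 0 := by
    have h := congrFun hN (-1)
    rw [shift_iterate_apply] at h
    rw [hq, shiftEquiv_symm_apply, shiftEquiv_symm_apply, zero_sub, ← h, neg_add_eq_sub]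
  set g := cocycle shift (stepCocycle ℓ k) N q
  have hg : 2 < |g.1.trace| := by
    rw [coe_cocycle_stepCocycle hqS, hq, ← coe_shiftEquiv, MeasurableEquiv.apply_symm_apply]
    exact hhyp
  have hgρ : (ρ (q 0)).map (circleAct g) = ρ (q 0) := by rw [hρ.map_cocycle hqS, hqN]
  obtain ⟨n, -, ω, hω, h0, hn⟩ := hsupp.exists_transition hconc herg hqS hr 0
  have hhρ : (ρ (q 0)).map (circleAct (cocycle shift (stepCocycle ℓ k) n ω)) = ρ (r 0) := by
    rw [← h0, hρ.map_cocycle hω, hn]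
  have hRρ : (ρ (r 0)).map (circleAct (stepCocycle ℓ k r)) = ρ (r 0) := by
    rw [hρ r hr, apply_eq_of_shift_eq hrr 1]
  have hR : (stepCocycle ℓ k r).1.trace = 2 * Real.cos k := by
    rw [coe_stepCocycle_of_shift_eq hr hrr, Matrix.trace_fin_two_of, add_zero]
  refine not_invariant_of_hyperbolic_of_elliptic ((trace_conj _ g).symm ▸ hg) ?_ ?_
    (map_circleAct_conj hgρ hhρ) hRρ
  · rw [hR, abs_mul, abs_two]
    linarith [abs_cos_lt_one hk]
  · rw [hR]
    exact mul_ne_zero two_ne_zero (cos_ne_zero_of_ne_pi_div_two hk hk2)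

end PeriodicTraces

section BoundedLoops

variable {ℓ : ℕ} {W : Set (ℕ × ℕ)} {k : ℝ} {ω x y r : ℤ → ℕ} {n : ℕ} {μ : Measure (ℤ → ℕ)}

/-- The concatenation of two sequences: `x` up to the coordinate `n`, followed by the letters of `y`
from the coordinate `0` on. -/
def splice (x : ℤ → ℕ) (n : ℕ) (y : ℤ → ℕ) : ℤ → ℕ := fun m => if m ≤ n then x m else y (m - n)

lemma splice_of_le (x y : ℤ → ℕ) {m : ℤ} (h : m ≤ n) : splice x n y m = x m := if_pos h

lemma splice_of_ge (h : x n = y 0) {m : ℤ} (hm : n ≤ m) : splice x n y m = y (m - n) := by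
  rcases hm.eq_or_lt with rfl | hm
  · rw [splice_of_le _ _ le_rfl, h, sub_self]
  · exact if_neg hm.not_ge

lemma splice_add (h : x n = y 0) (m : ℕ) : splice x n y (m + n) = y m := by
  rw [splice_of_ge h (by lia), add_sub_cancel_right]

lemma splice_mem_SFT (h : x n = y 0) (hx : x ∈ SFT ℓ W) (hy : y ∈ SFT ℓ W) :
    splice x n y ∈ SFT ℓ W := by
  refine ⟨fun m => ?_, fun m => ?_⟩
  · rw [splice]
    split_ifs
    exacts [hx.1 m, hy.1 _]
  · rcases lt_or_ge m n with hm | hm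
    · rw [splice_of_le _ _ hm.le, splice_of_le _ _ (by lia)]
      exact hx.2 m
    · rw [splice_of_ge h hm, splice_of_ge h (by lia), add_sub_right_comm]
      exact hy.2 (m - n)

lemma cocycle_stepCocycle_congr (h : ∀ i : ℕ, i ≤ n → x i = y i) :
    cocycle shift (stepCocycle ℓ k) n x = cocycle shift (stepCocycle ℓ k) n y := by
  induction n with
  | zero => rfl
  | succ n ih =>
    have h1 := h (n + 1) le_rfl
    rw [Nat.cast_add_one, add_comm] at h1
    rw [cocycle, cocycle, ih fun i hi => h i (by lia)]
    simp only [stepCocycle, shift_iterate_apply, zero_add, h n (by lia), h1]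

lemma cocycle_splice (h : x n = y 0) (m : ℕ) :
    cocycle shift (stepCocycle ℓ k) (m + n) (splice x n y)
      = cocycle shift (stepCocycle ℓ k) m y * cocycle shift (stepCocycle ℓ k) n x := by
  rw [cocycle_add]
  congr 1
  · refine cocycle_stepCocycle_congr fun i _ => ?_
    rw [shift_iterate_apply, splice_add h]
  · exact cocycle_stepCocycle_congr fun i hi => splice_of_le _ _ (by exact_mod_cast hi)

/-- The `n`-periodic sequence which agrees with `ω` at the coordinates `0, …, n - 1`. -/
def periodize (n : ℕ) (ω : ℤ → ℕ) : ℤ → ℕ := fun m => ω (m % n)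

lemma shift_iterate_periodize (n : ℕ) (ω : ℤ → ℕ) : shift^[n] (periodize n ω) = periodize n ω := by
  funext m
  rw [shift_iterate_apply, periodize, periodize, Int.add_emod_right]

lemma periodize_apply_of_le (h : ω n = ω 0) {i : ℕ} (hi : i ≤ n) : periodize n ω i = ω i := by
  rw [periodize]
  rcases hi.lt_or_eq with hi | rfl
  · rw [Int.emod_eq_of_lt (by lia) (by lia)]
  · rw [Int.emod_self, h]

lemma periodize_mem_SFT (hω : ω ∈ SFT ℓ W) (hn : 0 < n) (h : ω n = ω 0) :
    periodize n ω ∈ SFT ℓ W := by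
  refine ⟨fun m => hω.1 _, fun m => ?_⟩
  have hpos := Int.emod_nonneg m (b := n) (by lia)
  have hsucc : periodize n ω (m + 1) = ω (m % n + 1) := by
    rw [periodize, ← Int.emod_add_emod]
    rcases (Int.add_one_le_of_lt (Int.emod_lt_of_pos m (b := n) (by lia))).lt_or_eq with hlt | heq
    · rw [Int.emod_eq_of_lt (by lia) hlt]
    · rw [heq, Int.emod_self, h]
  rw [hsucc]
  exact hω.2 (m % n)

lemma abs_trace_cocycle_le_two
    (hper : ∀ p ∈ SFT ℓ W, ∀ n : ℕ, 1 ≤ n → shift^[n] p = p → |(AIter k p n).trace| ≤ 2)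
    (hω : ω ∈ SFT ℓ W) (hn : 0 < n) (h : ω n = ω 0) :
    |(cocycle shift (stepCocycle ℓ k) n ω).1.trace| ≤ 2 := by
  have hp := periodize_mem_SFT hω hn h
  rw [← cocycle_stepCocycle_congr fun i hi => periodize_apply_of_le h hi,
    coe_cocycle_stepCocycle hp]
  refine hper _ (shift_iterate_mem_SFT hp 1) n hn ?_
  rw [← Function.iterate_add_apply, add_comm, Function.iterate_add_apply, shift_iterate_periodize,
    Function.iterate_one]

lemma norm_act_le_of_abs_apply_le {g : SL2} {C : ℝ} (h : ∀ i j, |g.1 i j| ≤ C) :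
    ‖act g‖ ≤ 2 * C := by
  have hC : 0 ≤ C := (abs_nonneg _).trans (h 0 0)
  have hsq : ∀ i j, g.1 i j ^ 2 ≤ C ^ 2 := fun i j => sq_le_sq' (abs_le.1 (h i j)).1
    (abs_le.1 (h i j)).2
  refine ContinuousLinearMap.opNorm_le_bound _ (by positivity) fun v => ?_
  have hrow : ∀ i, (g.1 i 0 * v 0 + g.1 i 1 * v 1) ^ 2 ≤ 2 * C ^ 2 * (v 0 ^ 2 + v 1 ^ 2) :=
    fun i => by
      nlinarith [sq_nonneg (g.1 i 0 * v 0 - g.1 i 1 * v 1),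
        mul_le_mul_of_nonneg_right (hsq i 0) (sq_nonneg (v 0)),
        mul_le_mul_of_nonneg_right (hsq i 1) (sq_nonneg (v 1))]
  refine le_of_sq_le_sq ?_ (by positivity)
  rw [mul_pow, EuclideanSpace.norm_sq_eq, EuclideanSpace.norm_sq_eq, Fin.sum_univ_two,
    Fin.sum_univ_two]
  simp only [act_apply, Real.norm_eq_abs, sq_abs]
  nlinarith [hrow 0, hrow 1]

lemma sq_add_sq_le_of_quadForm_le {c x y : ℝ} (hc : |c| < 1)
    (h : x ^ 2 + 2 * c * (x * y) + y ^ 2 ≤ 2 * |x| + 2 * |y|) :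
    x ^ 2 + y ^ 2 ≤ (4 / (1 - |c|)) ^ 2 := by
  set M := 4 / (1 - |c|)
  have hc0 : 0 < 1 - |c| := by linarith
  have hMc : M * (1 - |c|) = 4 := div_mul_cancel₀ _ hc0.ne'
  have hcoercive : (1 - |c|) * (x ^ 2 + y ^ 2) ≤ x ^ 2 + 2 * c * (x * y) + y ^ 2 := by
    have hcross : |2 * c * (x * y)| ≤ |c| * (x ^ 2 + y ^ 2) := by
      rw [abs_mul, abs_mul, abs_mul, abs_two, ← sq_abs x, ← sq_abs y]
      nlinarith [mul_nonneg (abs_nonneg c) (sq_nonneg (|x| - |y|))]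
    linarith [(abs_le.1 hcross).1]
  have hlin : 4 * (x ^ 2 + y ^ 2) ≤ M * (2 * |x| + 2 * |y|) := by
    rw [← hMc, mul_assoc]
    exact mul_le_mul_of_nonneg_left (hcoercive.trans h) (by positivity)
  nlinarith [sq_nonneg (M - |x|), sq_nonneg (M - |y|), sq_abs x, sq_abs y]

/-- By Cayley–Hamilton, the traces of `g` and `R * g` turn `det g = 1` into a bound for the positive
definite form `x² + 2cxy + y²` at the first row of `g`. -/
lemma norm_act_le_of_abs_trace_le {c : ℝ} (hc : |c| < 1) {R g : SL2}
    (hR : R.1 = !![2 * c, -1; 1, 0]) (hg : |g.1.trace| ≤ 2) (hRg : |(R * g).1.trace| ≤ 2) :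
    ‖act g‖ ≤ 2 * (2 + 3 * (4 / (1 - |c|))) := by
  have htrace : (R * g).1.trace = 2 * c * g.1 0 0 - g.1 1 0 + g.1 0 1 := by
    change (R.1 * g.1).trace = _
    rw [hR, Matrix.trace_fin_two]
    simp [Matrix.mul_apply, Fin.sum_univ_two]
    ring
  rw [htrace] at hRg
  rw [Matrix.trace_fin_two] at hg
  have hdet := det_eq_one g
  set x := g.1 0 0 with hx
  set y := g.1 0 1 with hy
  set z := g.1 1 0 with hz
  set w := g.1 1 1 with hw
  set M := 4 / (1 - |c|)
  have hM : 0 ≤ M := div_nonneg zero_le_four (by linarith)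
  have hform : x ^ 2 + 2 * c * (x * y) + y ^ 2 ≤ 2 * |x| + 2 * |y| := by
    have hxg : x * (x + w) ≤ |x| * 2 := (le_abs_self _).trans
      ((abs_mul _ _).trans_le (mul_le_mul_of_nonneg_left hg (abs_nonneg x)))
    have hyg : y * (2 * c * x - z + y) ≤ |y| * 2 := (le_abs_self _).trans
      ((abs_mul _ _).trans_le (mul_le_mul_of_nonneg_left hRg (abs_nonneg y)))
    linarith
  have hsum := sq_add_sq_le_of_quadForm_le hc hform
  have hxM : |x| ≤ M := abs_le_of_sq_le_sq (by linarith [sq_nonneg y]) hM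
  have hyM : |y| ≤ M := abs_le_of_sq_le_sq (by linarith [sq_nonneg x]) hM
  have hcx : |c * x| ≤ M := by
    rw [abs_mul]
    nlinarith [abs_nonneg x, abs_nonneg c]
  rw [abs_le] at hg hRg hxM hyM hcx
  refine norm_act_le_of_abs_apply_le fun i j => abs_le.2 ?_
  fin_cases i <;> fin_cases j <;> simp only [Fin.zero_eta, Fin.mk_one, ← hx, ← hy, ← hz, ← hw] <;>
    constructor <;> linarith

lemma exists_norm_cocycle_loop_le (hr : r ∈ SFT ℓ W) (hrr : shift r = r) (hk : k ∈ Ioo 0 π)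
    (hper : ∀ p ∈ SFT ℓ W, ∀ n : ℕ, 1 ≤ n → shift^[n] p = p → |(AIter k p n).trace| ≤ 2) :
    ∃ C, ∀ ω ∈ SFT ℓ W, ∀ n : ℕ, 0 < n → ω 0 = r 0 → ω n = r 0 →
      ‖act (cocycle shift (stepCocycle ℓ k) n ω)‖ ≤ C := by
  refine ⟨_, fun ω hω n hn h0 h1 => norm_act_le_of_abs_trace_le (abs_cos_lt_one hk)
    (coe_stepCocycle_of_shift_eq hr hrr) (abs_trace_cocycle_le_two hper hω hn (h1.trans h0.symm))
    ?_⟩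
  have hone : cocycle shift (stepCocycle ℓ k) 1 r = stepCocycle ℓ k r := mul_one _
  rw [← hone, ← cocycle_splice h1 1]
  refine abs_trace_cocycle_le_two hper (splice_mem_SFT h1 hω hr) (by lia) ?_
  rw [Nat.cast_add, splice_add h1, splice_of_le _ _ (by lia), h0]
  exact apply_eq_of_shift_eq hrr 1

lemma exists_norm_connection_le [IsFiniteMeasure μ] (k : ℝ) (hconc : ∀ᵐ ω ∂μ, ω ∈ SFT ℓ W)
    (herg : Ergodic shift μ) (hsupp : FullSupport ℓ W μ) :
    ∃ D, ∀ x ∈ SFT ℓ W, ∀ y ∈ SFT ℓ W, ∃ u ∈ SFT ℓ W, ∃ n : ℕ, 0 < n ∧ u 0 = x 0 ∧ u n = y 0 ∧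
      ‖act (cocycle shift (stepCocycle ℓ k) n u)‖ ≤ D := by
  have hletters : ∀ i j, ∃ d, ∀ x ∈ SFT ℓ W, ∀ y ∈ SFT ℓ W, x 0 = i → y 0 = j →
      ∃ u ∈ SFT ℓ W, ∃ n : ℕ, 0 < n ∧ u 0 = i ∧ u n = j ∧
        ‖act (cocycle shift (stepCocycle ℓ k) n u)‖ ≤ d := by
    intro i j
    by_cases h : ∃ x ∈ SFT ℓ W, ∃ y ∈ SFT ℓ W, x 0 = i ∧ y 0 = j
    · obtain ⟨x, hx, y, hy, rfl, rfl⟩ := h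
      obtain ⟨n, hn, u, hu, hu0, hun⟩ := hsupp.exists_transition hconc herg hx hy 1
      exact ⟨_, fun _ _ _ _ _ _ => ⟨u, hu, n, hn, hu0, hun, le_rfl⟩⟩
    · exact ⟨0, fun x hx y hy hi hj => absurd ⟨x, hx, y, hy, hi, hj⟩ h⟩
  choose d hd using hletters
  obtain ⟨D, hD⟩ := (((finite_Icc 1 ℓ).prod (finite_Icc 1 ℓ)).image fun z => d z.1 z.2).bddAbove
  refine ⟨D, fun x hx y hy => ?_⟩
  obtain ⟨u, hu, n, hn, hu0, hun, hnorm⟩ := hd _ _ x hx y hy rfl rfl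
  exact ⟨u, hu, n, hn, hu0, hun, hnorm.trans (hD ⟨(x 0, y 0), ⟨hx.1 0, hy.1 0⟩, rfl⟩)⟩

lemma exists_norm_cocycle_le_of_periodic [IsFiniteMeasure μ] (hconc : ∀ᵐ ω ∂μ, ω ∈ SFT ℓ W)
    (herg : Ergodic shift μ) (hsupp : FullSupport ℓ W μ) (hfix : ∃ r ∈ SFT ℓ W, shift r = r)
    (hk : k ∈ Ioo 0 π)
    (hper : ∀ p ∈ SFT ℓ W, ∀ n : ℕ, 1 ≤ n → shift^[n] p = p → |(AIter k p n).trace| ≤ 2) :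
    ∃ C, ∀ ω ∈ SFT ℓ W, ∀ n, ‖act (cocycle shift (stepCocycle ℓ k) n ω)‖ ≤ C := by
  obtain ⟨r, hr, hrr⟩ := hfix
  obtain ⟨C, hC⟩ := exists_norm_cocycle_loop_le hr hrr hk hper
  obtain ⟨D, hD⟩ := exists_norm_connection_le k hconc herg hsupp
  refine ⟨D * C * D, fun ω hω n => ?_⟩
  obtain ⟨u, hu, a, ha, hu0, hua, hUD⟩ := hD r hr ω hω
  obtain ⟨v, hv, b, -, hv0, hvb, hVD⟩ := hD _ (shift_iterate_mem_SFT hω n) r hr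
  have hx : splice u a ω ((n + a : ℕ) : ℤ) = v 0 := by
    rw [Nat.cast_add, splice_add hua, hv0, shift_iterate_apply, zero_add]
  have hxS := splice_mem_SFT hua hu hω
  have hloop := hC _ (splice_mem_SFT hx hxS hv) (b + (n + a)) (by lia)
    (by rw [splice_of_le _ _ (by lia), splice_of_le _ _ (by lia), hu0])
    (by rw [Nat.cast_add, splice_add hx, hvb])
  rw [cocycle_splice hx, cocycle_splice hua] at hloop
  set V := cocycle shift (stepCocycle ℓ k) b v
  set Z := cocycle shift (stepCocycle ℓ k) n ω
  set U := cocycle shift (stepCocycle ℓ k) a u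
  have hC0 : 0 ≤ C := (norm_nonneg _).trans hloop
  have hD0 : 0 ≤ D := (norm_nonneg _).trans hUD
  calc ‖act Z‖ = ‖act (V⁻¹ * (V * (Z * U)) * U⁻¹)‖ := by group
    _ ≤ ‖act V⁻¹‖ * ‖act (V * (Z * U))‖ * ‖act U⁻¹‖ :=
        (norm_act_mul_le _ _).trans (mul_le_mul_of_nonneg_right (norm_act_mul_le _ _)
          (norm_nonneg _))
    _ ≤ D * C * D := by
        rw [norm_act_inv, norm_act_inv]
        gcongr

lemma tendsto_growth_zero_of_periodic [IsProbabilityMeasure μ] (hconc : ∀ᵐ ω ∂μ, ω ∈ SFT ℓ W)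
    (herg : Ergodic shift μ) (hsupp : FullSupport ℓ W μ) (hfix : ∃ r ∈ SFT ℓ W, shift r = r)
    (hk : k ∈ Ioo 0 π)
    (hper : ∀ p ∈ SFT ℓ W, ∀ n : ℕ, 1 ≤ n → shift^[n] p = p → |(AIter k p n).trace| ≤ 2) :
    Tendsto (fun n : ℕ => 1 / (n : ℝ) * ∫ ω, log ‖AIter k ω n‖ ∂μ) atTop (𝓝 0) := by
  simp only [← integral_log_norm_cocycle (k := k) hconc herg.toMeasurePreserving]
  obtain ⟨C, hC⟩ := exists_norm_cocycle_le_of_periodic hconc herg hsupp hfix hk hper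
  have hbound : ∀ n : ℕ,
      ‖∫ ω, log ‖act (cocycle shift (stepCocycle ℓ k) n ω)‖ ∂μ‖ ≤ log C := by
    intro n
    refine (norm_integral_le_of_norm_le_const (C := log C) ?_).trans_eq (by simp)
    filter_upwards [hconc] with ω hω
    have hone := one_le_norm_act (cocycle shift (stepCocycle ℓ k) n ω)
    rw [Real.norm_of_nonneg (log_nonneg hone)]
    exact log_le_log (by linarith) (hC ω hω n)
  refine tendsto_one_div_atTop_nhds_zero_nat.zero_mul_isBoundedUnder_le
    ⟨log C, eventually_map.2 (Eventually.of_forall hbound)⟩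

end BoundedLoops

section PeriodicSpectrum

open Polynomial

open scoped ENNReal

variable {p : ℤ → ℕ} {H : L2Z →L[ℝ] L2Z} {N : ℕ}

/-- The unnormalised transfer matrix over the site `m` of the sequence `p`, as a polynomial in the
energy. -/
noncomputable def sitePoly (p : ℤ → ℕ) (m : ℤ) : Matrix (Fin 2) (Fin 2) ℝ[X] :=
  !![C (((p m : ℝ) + p (m - 1)) / p m) * X, -C ((p (m - 1) : ℝ) / p m); 1, 0]

/-- The product of the matrices `sitePoly p i` over the sites `i = m, …, m + n - 1`, later sites on
the left. -/
noncomputable def transferPoly (p : ℤ → ℕ) : ℕ → ℤ → Matrix (Fin 2) (Fin 2) ℝ[X]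
  | 0, _ => 1
  | n + 1, m => sitePoly p (m + n) * transferPoly p n m

/-- The trace of the transfer matrix over the sites `0, …, N - 1`, as a polynomial in the energy. -/
noncomputable def discriminant (p : ℤ → ℕ) (N : ℕ) : ℝ[X] := (transferPoly p N 0).trace

lemma transferPoly_succ (p : ℤ → ℕ) (n : ℕ) (m : ℤ) :
    transferPoly p (n + 1) m = transferPoly p n (m + 1) * sitePoly p m := by
  induction n with
  | zero => simp [transferPoly]
  | succ n ih =>
    rw [transferPoly, ih, transferPoly, Matrix.mul_assoc, Nat.cast_succ, add_right_comm m 1,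
      add_assoc m]

lemma det_transferPoly (hp : ∀ m, 0 < p m) (n : ℕ) (m : ℤ) :
    (transferPoly p n m).det = C ((p (m - 1) : ℝ) / p (m + n - 1)) := by
  have hp0 : ∀ m, (p m : ℝ) ≠ 0 := fun m => by exact_mod_cast (hp m).ne'
  induction n with
  | zero => simp [transferPoly, hp0]
  | succ n ih =>
    rw [transferPoly, det_mul, ih, sitePoly, det_fin_two_of, mul_zero, mul_one, zero_sub, neg_neg,
      ← C_mul, Nat.cast_succ, ← add_assoc, add_sub_cancel_right, mul_comm,
      div_mul_div_cancel₀ (hp0 _)]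

lemma sitePoly_add_period (hper : ∀ m, p (m + N) = p m) (m : ℤ) :
    sitePoly p (m + N) = sitePoly p m := by
  rw [sitePoly, sitePoly, add_sub_right_comm, hper, hper]

lemma transferPoly_add_period (hper : ∀ m, p (m + N) = p m) (n : ℕ) (m : ℤ) :
    transferPoly p n (m + N) = transferPoly p n m := by
  induction n with
  | zero => rfl
  | succ n ih => rw [transferPoly, ih, add_right_comm, sitePoly_add_period hper, transferPoly]

lemma trace_transferPoly (hper : ∀ m, p (m + N) = p m) (m : ℤ) :
    (transferPoly p N m).trace = discriminant p N := by
  have hsucc : ∀ m, (transferPoly p N (m + 1)).trace = (transferPoly p N m).trace := fun m => by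
    rcases N with - | n
    · rfl
    · have hsite : sitePoly p (m + 1 + n) = sitePoly p m := by
        rw [← sitePoly_add_period hper m, Nat.cast_succ, add_right_comm, add_assoc]
      rw [transferPoly_succ p n m, transferPoly, hsite, Matrix.trace_mul_comm]
  induction m using Int.induction_on with
  | zero => rfl
  | succ i ih => rw [hsucc, ih]
  | pred i ih => rw [← ih, ← hsucc (-(i : ℤ) - 1), sub_add_cancel]

lemma AIter_eq_map_eval (hp : ∀ m, 0 < p m) (k : ℝ) (n : ℕ) :
    AIter k p n = √((p (n - 1) : ℝ) / p (-1)) •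
      (transferPoly p n 0).map (eval (Real.cos k)) := by
  have hp0 : ∀ m, (p m : ℝ) ≠ 0 := fun m => by exact_mod_cast (hp m).ne'
  induction n with
  | zero => simp [AIter, transferPoly, hp0]
  | succ n ih =>
    have hsite : Acoc k (shift^[n] p) = √((p n : ℝ) / p (n - 1)) •
        (sitePoly p (0 + n)).map (eval (Real.cos k)) := by
      rw [Acoc, shift_iterate_apply, shift_iterate_apply, zero_add, neg_add_eq_sub]
      congr 1
      ext i j
      fin_cases i <;> fin_cases j <;> simp [sitePoly]
    rw [AIter, ih, hsite, transferPoly, smul_mul_smul_comm, ← Real.sqrt_mul (by positivity),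
      div_mul_div_cancel₀ (hp0 _), Nat.cast_succ, add_sub_cancel_right]
    congr 1
    exact (Matrix.map_mul (f := evalRingHom (Real.cos k))).symm

lemma trace_AIter (hp : ∀ m, 0 < p m) (hper : ∀ m, p (m + N) = p m) (k : ℝ) :
    (AIter k p N).trace = (discriminant p N).eval (Real.cos k) := by
  have h := hper (-1)
  rw [neg_add_eq_sub] at h
  have : (p (-1) : ℝ) ≠ 0 := by exact_mod_cast (hp (-1)).ne'
  rw [AIter_eq_map_eval hp, h, div_self this, Real.sqrt_one, one_smul]
  exact (AddMonoidHom.map_trace (evalRingHom (Real.cos k)) _).symm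

/-- The pairing of a row `r` of polynomials with the values of `u` at `m` and `m - 1`, where the
polynomials act through `H`. Under it the transfer matrices act on rows from the right. -/
noncomputable def rowEval (H : L2Z →L[ℝ] L2Z) (u : L2Z) (m : ℤ) (r : Fin 2 → ℝ[X]) : ℝ :=
  aeval H (r 0) u m + aeval H (r 1) u (m - 1)

lemma rowEval_add_one (hp : ∀ m, 0 < p m) (hH : IsJacobiOp p H) (u : L2Z) (m : ℤ)
    (r : Fin 2 → ℝ[X]) : rowEval H u (m + 1) r = rowEval H u m (r ᵥ* sitePoly p m) := by
  have hpm : (0 : ℝ) < p m := by exact_mod_cast hp m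
  have h0 : aeval H ((r ᵥ* sitePoly p m) 0) u m =
      (p m + p (m - 1)) / p m * H (aeval H (r 0) u) m + aeval H (r 1) u m := by
    have : (r ᵥ* sitePoly p m) 0 = C (((p m : ℝ) + p (m - 1)) / p m) * (X * r 0) + r 1 := by
      simp only [sitePoly, vecMul, vec2_dotProduct, of_apply, cons_val', cons_val_zero,
        cons_val_one, cons_val_fin_one]
      ring
    rw [this, map_add, map_mul, map_mul, aeval_C, aeval_X]
    rfl
  have h1 : aeval H ((r ᵥ* sitePoly p m) 1) u (m - 1) =
      -(p (m - 1) / p m * aeval H (r 0) u (m - 1)) := by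
    have : (r ᵥ* sitePoly p m) 1 = -(C ((p (m - 1) : ℝ) / p m) * r 0) := by
      simp only [sitePoly, vecMul, vec2_dotProduct, of_apply, cons_val', cons_val_zero,
        cons_val_one, cons_val_fin_one]
      ring
    rw [this, map_neg, map_mul, aeval_C]
    rfl
  rw [rowEval, rowEval, h0, h1, hH, add_sub_cancel_right]
  field_simp
  ring

lemma rowEval_add (hp : ∀ m, 0 < p m) (hH : IsJacobiOp p H) (u : L2Z) (m : ℤ) (n : ℕ)
    (r : Fin 2 → ℝ[X]) : rowEval H u (m + n) r = rowEval H u m (r ᵥ* transferPoly p n m) := by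
  induction n generalizing r with
  | zero => simp [transferPoly]
  | succ n ih =>
    rw [Nat.cast_succ, ← add_assoc, rowEval_add_one hp hH, ih, vecMul_vecMul, transferPoly]

lemma mul_self_eq_trace_smul_sub_det_smul {R : Type*} [CommRing R] (M : Matrix (Fin 2) (Fin 2) R) :
    M * M = M.trace • M - M.det • 1 := by
  ext i j
  fin_cases i <;> fin_cases j <;> simp [mul_apply, trace_fin_two, det_fin_two] <;> ring

/-- Cayley–Hamilton for the transfer matrix over a period makes the discriminant of the periodic
operator a sum of two translations. -/
lemma aeval_discriminant_apply (hp : ∀ m, 0 < p m) (hper : ∀ m, p (m + N) = p m)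
    (hH : IsJacobiOp p H) (u : L2Z) (m : ℤ) :
    aeval H (discriminant p N) u m = u (m + N) + u (m - N) := by
  have hCH : transferPoly p N (m - N) * transferPoly p N (m - N) =
      discriminant p N • transferPoly p N (m - N) - 1 := by
    have hdet : (transferPoly p N (m - N)).det = 1 := by
      have hp0 : (p (m - N - 1) : ℝ) ≠ 0 := by exact_mod_cast (hp _).ne'
      rw [det_transferPoly hp, add_sub_right_comm, hper, div_self hp0, C_1]
    rw [mul_self_eq_trace_smul_sub_det_smul, hdet, one_smul, trace_transferPoly hper]
  have hshift : ∀ r, rowEval H u m r = rowEval H u (m - N) (r ᵥ* transferPoly p N (m - N)) :=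
    fun r => by rw [← rowEval_add hp hH, sub_add_cancel]
  have htrans : transferPoly p N m = transferPoly p N (m - N) := by
    rw [← transferPoly_add_period hper N (m - N), sub_add_cancel]
  have key : rowEval H u (m + N) ![1, 0] =
      rowEval H u m (discriminant p N • ![1, 0]) - rowEval H u (m - N) ![1, 0] := by
    rw [rowEval_add hp hH, hshift, hshift, htrans, vecMul_vecMul, hCH, vecMul_sub, vecMul_one,
      vecMul_smul, smul_vecMul]
    simp only [rowEval, Pi.sub_apply, map_sub, _root_.sub_apply, lp.coeFn_sub]
    ring
  simp only [rowEval, Pi.smul_apply, cons_val_zero, cons_val_one, cons_val_fin_one, smul_eq_mul,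
    mul_one, mul_zero, map_one, map_zero, one_apply_eq_self,
    _root_.zero_apply, lp.coeFn_zero, Pi.zero_apply, add_zero] at key
  rw [key, sub_add_cancel]

lemma exists_translate (u : L2Z) (i : ℤ) : ∃ v : L2Z, (∀ n, v n = u (n + i)) ∧ ‖v‖ = ‖u‖ := by
  have h2 : 0 < (2 : ℝ≥0∞).toReal := by norm_num
  have hu : Summable fun n : ℤ => ‖u n‖ ^ (2 : ℝ≥0∞).toReal := (memℓp_gen_iff h2).1 (lp.memℓp u)
  refine ⟨⟨fun n => u (n + i), memℓp_gen ((Equiv.addRight i).summable_iff.2 hu)⟩, fun n => rfl, ?_⟩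
  rw [lp.norm_eq_tsum_rpow h2, lp.norm_eq_tsum_rpow h2]
  congr 1
  exact (Equiv.addRight i).tsum_eq fun n : ℤ => ‖u n‖ ^ (2 : ℝ≥0∞).toReal

lemma norm_aeval_discriminant_le (hp : ∀ m, 0 < p m) (hper : ∀ m, p (m + N) = p m)
    (hH : IsJacobiOp p H) : ‖aeval H (discriminant p N)‖ ≤ 2 := by
  refine ContinuousLinearMap.opNorm_le_bound _ zero_le_two fun u => ?_
  obtain ⟨v, hv, hvu⟩ := exists_translate u N
  obtain ⟨w, hw, hwu⟩ := exists_translate u (-N)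
  have hsum : aeval H (discriminant p N) u = v + w := lp.ext <| funext fun m => by
    rw [aeval_discriminant_apply hp hper hH, lp.coeFn_add, Pi.add_apply, hv, hw, sub_eq_add_neg]
  calc ‖aeval H (discriminant p N) u‖ ≤ ‖v‖ + ‖w‖ := hsum ▸ norm_add_le v w
    _ = 2 * ‖u‖ := by rw [hvu, hwu, two_mul]

lemma abs_eval_discriminant_le {E : ℝ} (hp : ∀ m, 0 < p m) (hper : ∀ m, p (m + N) = p m)
    (hH : IsJacobiOp p H) (hE : E ∈ spectrum ℝ H) : |(discriminant p N).eval E| ≤ 2 :=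
  have : Nontrivial L2Z :=
    ⟨lp.single 2 0 1, 0, fun h => by simpa using congrArg (fun v : L2Z => v 0) h⟩
  (spectrum.norm_le_norm_of_mem
    (spectrum.subset_polynomial_aeval H (discriminant p N) ⟨E, hE, rfl⟩)).trans
    (norm_aeval_discriminant_le hp hper hH)

/-- The quadratic form `x j ^ 2 - t * x j * x (j + 1) + x (j + 1) ^ 2` is conserved, hence zero, and
it is at least `(|x (j + 1)| - |x j|) ^ 2`. -/
lemma eq_zero_of_recurrence {x : ℕ → ℝ} {t : ℝ} (ht : |t| ≤ 2)
    (hx : ∀ j, x (j + 2) + x j = t * x (j + 1)) (hlim : Tendsto x atTop (𝓝 0)) : x 0 = 0 := by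
  have hconst : ∀ j, x j ^ 2 - t * x j * x (j + 1) + x (j + 1) ^ 2 =
      x 0 ^ 2 - t * x 0 * x 1 + x 1 ^ 2 := fun j => by
    induction j with
    | zero => rfl
    | succ j ih => linear_combination ih + (x (j + 2) - x j) * hx j
  have hform : x 0 ^ 2 - t * x 0 * x 1 + x 1 ^ 2 = 0 := by
    have hlim' : Tendsto (fun j => x (j + 1)) atTop (𝓝 0) := (tendsto_add_atTop_iff_nat 1).2 hlim
    have h0 := ((hlim.pow 2).sub ((hlim.const_mul t).mul hlim')).add (hlim'.pow 2)
    simp only [hconst] at h0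
    simpa using tendsto_nhds_unique tendsto_const_nhds h0
  have habs : ∀ j, |x j| = |x 0| := fun j => by
    induction j with
    | zero => rfl
    | succ j ih =>
      have hle : t * x j * x (j + 1) ≤ 2 * |x j| * |x (j + 1)| := (le_abs_self _).trans <| by
        rw [abs_mul, abs_mul]
        gcongr
      have hsq : (|x (j + 1)| - |x j|) ^ 2 ≤ 0 := by
        nlinarith [hconst j, sq_abs (x j), sq_abs (x (j + 1))]
      rw [← ih, ← sub_eq_zero, pow_eq_zero_iff two_ne_zero |>.1 (le_antisymm hsq (sq_nonneg _))]
  have h0 : Tendsto (fun _ : ℕ => |x 0|) atTop (𝓝 |0|) := hlim.abs.congr habs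
  rwa [abs_zero, tendsto_const_nhds_iff, abs_eq_zero] at h0

lemma eventually_eq_zero_of_recurrence {f : ℤ → ℝ} {t : ℝ} (ht : |t| ≤ 2) {i : ℤ} (hi : 0 < i)
    (hrec : ∀ᶠ m in atTop, f (m + i) + f (m - i) = t * f m) (hlim : Tendsto f atTop (𝓝 0)) :
    ∀ᶠ m in atTop, f m = 0 := by
  obtain ⟨M, hM⟩ := eventually_atTop.1 hrec
  refine eventually_atTop.2 ⟨M, fun m hm => ?_⟩
  have hx : Tendsto (fun j : ℕ => m + j * i) atTop atTop :=
    tendsto_atTop_add_const_left _ m (tendsto_natCast_atTop_atTop.atTop_mul_const' hi)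
  suffices h0 : f (m + (0 : ℕ) * i) = 0 by rwa [Nat.cast_zero, zero_mul, add_zero] at h0
  refine eq_zero_of_recurrence (x := fun j : ℕ => f (m + j * i)) ht (fun j => ?_) (hlim.comp hx)
  rw [← hM (m + (j + 1 : ℕ) * i) (le_add_of_le_of_nonneg hm (by positivity))]
  congr 2
  · push_cast
    ring
  · push_cast
    ring

lemma eventually_cofinite_eq_zero_of_recurrence {f : ℤ → ℝ} {t : ℝ} (ht : |t| ≤ 2) {i : ℤ}
    (hi : 0 < i) (hrec : ∀ᶠ m in cofinite, f (m + i) + f (m - i) = t * f m)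
    (hlim : Tendsto f cofinite (𝓝 0)) : ∀ᶠ m in cofinite, f m = 0 := by
  rw [Int.cofinite_eq] at hlim ⊢
  rw [Int.cofinite_eq, eventually_sup] at hrec
  rw [tendsto_sup] at hlim
  refine eventually_sup.2 ⟨?_, eventually_eq_zero_of_recurrence ht hi hrec.2 hlim.2⟩
  have hneg : ∀ᶠ m in atTop, f (-m) = 0 := by
    refine eventually_eq_zero_of_recurrence ht hi ?_ (hlim.1.comp tendsto_neg_atTop_atBot)
    filter_upwards [tendsto_neg_atTop_atBot.eventually hrec.1] with m hm
    rw [← hm, add_comm, neg_add', neg_sub', sub_neg_eq_add]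
  filter_upwards [tendsto_neg_atBot_atTop.eventually hneg] with m hm
  rwa [neg_neg] at hm

lemma eventually_aeval_apply_eq_zero (hH : IsJacobiOp p H) {u : L2Z}
    (hu : ∀ᶠ m in cofinite, u m = 0) (q : ℝ[X]) : ∀ᶠ m in cofinite, aeval H q u m = 0 := by
  have hstep : ∀ v : L2Z, (∀ᶠ m in cofinite, v m = 0) → ∀ᶠ m in cofinite, H v m = 0 := by
    intro v hv
    filter_upwards [(add_left_injective 1).tendsto_cofinite.eventually hv,
      (sub_left_injective (b := 1)).tendsto_cofinite.eventually hv] with m h1 h2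
    rw [hH, h1, h2, mul_zero, mul_zero, add_zero]
  have hpow : ∀ n : ℕ, ∀ᶠ m in cofinite, (H ^ n) u m = 0 := fun n => by
    induction n with
    | zero => exact hu
    | succ n ih => rw [pow_succ']; exact hstep _ ih
  induction q using Polynomial.induction_on' with
  | add q r hq hr =>
    filter_upwards [hq, hr] with m h1 h2
    rw [map_add, _root_.add_apply, lp.coeFn_add, Pi.add_apply, h1, h2, add_zero]
  | monomial n a =>
    filter_upwards [hpow n] with m hm
    have : aeval H (monomial n a) u m = a * (H ^ n) u m := by rw [aeval_monomial]; rfl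
    rw [this, hm, mul_zero]

lemma tendsto_cofinite_zero (u : L2Z) : Tendsto u cofinite (𝓝 0) := by
  have h := ((memℓp_gen_iff (by norm_num)).1 (lp.memℓp u)).tendsto_cofinite_zero
  simp only [ENNReal.toReal_ofNat, Real.rpow_ofNat] at h
  simpa [tendsto_zero_iff_abs_tendsto_zero, Real.sqrt_sq_eq_abs, Function.comp_def] using h.sqrt

/-- At either end of its support, a nonzero finitely supported `u` is seen by `E • 1 - H` just
outside of that support, so the image of `u` is not supported at a single site. -/
lemma smul_sub_apply_ne_single {E : ℝ} (hp : ∀ m, 0 < p m) (hH : IsJacobiOp p H) {u : L2Z}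
    (hu : ∀ᶠ m in cofinite, u m = 0) : E • u - H u ≠ lp.single 2 (0 : ℤ) (1 : ℝ) := by
  intro h
  have hstep : ∀ m ≠ 0, u m = 0 → (u (m + 1) = 0 ↔ u (m - 1) = 0) := fun m hm hum => by
    have hp0 : (0 : ℝ) < p m := by exact_mod_cast hp m
    have hp1 : (0 : ℝ) < p (m - 1) := by exact_mod_cast hp (m - 1)
    have heq : E * u m - H u m = 0 :=
      (congrArg (fun v : L2Z => v m) h).trans (lp.single_apply_ne 2 0 1 hm)
    rw [hum, mul_zero, zero_sub, neg_eq_zero, hH] at heq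
    constructor <;> intro h0 <;> simpa [h0, hp0.ne', hp1.ne', (add_pos hp0 hp1).ne'] using heq
  have hne : (Function.support u).Nonempty := by
    refine Function.support_nonempty_iff.2 fun h0 => ?_
    have hu0 : u = 0 := lp.ext h0
    have := congrArg (fun v : L2Z => v 0) h
    simp [hu0] at this
  have hfin : (Function.support u).Finite := hu
  obtain ⟨r, hr, hrmax⟩ := hfin.exists_maximal hne
  obtain ⟨l, hl, hlmin⟩ := hfin.exists_minimal hne
  have hr1 : r = -1 := by
    by_contra hr1
    have hout : ∀ m, r < m → u m = 0 := fun m hm => by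
      by_contra h0
      exact hm.not_ge (hrmax h0 hm.le)
    refine hr ?_
    have hiff := hstep (r + 1) (fun h0 => hr1 (eq_neg_of_add_eq_zero_left h0)) (hout _ (by lia))
    rwa [add_sub_cancel_right, iff_true_left (hout _ (by lia))] at hiff
  have hl1 : l = 1 := by
    by_contra hl1
    have hout : ∀ m, m < l → u m = 0 := fun m hm => by
      by_contra h0
      exact hm.not_ge (hlmin h0 hm.le)
    refine hl ?_
    have hiff := hstep (l - 1) (fun h0 => hl1 (sub_eq_zero.1 h0)) (hout _ (by lia))
    rwa [sub_add_cancel, iff_true_right (hout _ (by lia))] at hiff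
  rcases le_total l r with hlr | hlr
  · lia
  · exact absurd (hrmax hl hlr) (by lia)

lemma mem_spectrum_of_abs_eval_discriminant_le {E : ℝ} (hp : ∀ m, 0 < p m) (hN : 1 ≤ N)
    (hper : ∀ m, p (m + N) = p m) (hH : IsJacobiOp p H) (hE : |(discriminant p N).eval E| ≤ 2) :
    E ∈ spectrum ℝ H := by
  intro hunit
  set t := (discriminant p N).eval E
  obtain ⟨u, hu⟩ := (ContinuousLinearMap.isUnit_iff_bijective.1 hunit).2 (lp.single 2 (0 : ℤ) 1)
  obtain ⟨q, hq⟩ : X - C E ∣ discriminant p N - C t := X_sub_C_dvd_sub_C_eval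
  have hdiscr : aeval H (discriminant p N) u - t • u = -aeval H q (lp.single 2 (0 : ℤ) 1) := by
    rw [mul_comm] at hq
    have h : aeval H (discriminant p N) u - t • u = aeval H q (H u - E • u) := by
      simpa [Algebra.algebraMap_eq_smul_one] using
        congrArg (fun A : L2Z →L[ℝ] L2Z => A u) (congrArg (aeval H) hq)
    rw [h, ← hu, ← map_neg]
    simp [Algebra.algebraMap_eq_smul_one]
  have hrec : ∀ᶠ m in cofinite, u (m + N) + u (m - N) = t * u m := by
    have hsingle : ∀ᶠ m in cofinite, (lp.single 2 (0 : ℤ) (1 : ℝ) : L2Z) m = 0 := by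
      filter_upwards [(Set.finite_singleton (0 : ℤ)).compl_mem_cofinite] with m hm
      exact lp.single_apply_ne _ _ _ hm
    filter_upwards [eventually_aeval_apply_eq_zero hH hsingle q] with m hm
    have h : aeval H (discriminant p N) u m - t * u m = -(aeval H q (lp.single 2 (0 : ℤ) 1) m) :=
      congrArg (fun v : L2Z => v m) hdiscr
    rwa [hm, neg_zero, sub_eq_zero, aeval_discriminant_apply hp hper hH] at h
  refine smul_sub_apply_ne_single hp hH (E := E) (eventually_cofinite_eq_zero_of_recurrence hE
    (by exact_mod_cast hN) hrec (tendsto_cofinite_zero u)) ?_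
  rw [← hu]
  simp [Algebra.algebraMap_eq_smul_one]

lemma cos_mem_spectrum_iff {k : ℝ} (hp : ∀ m, 0 < p m) (hN : 1 ≤ N) (hper : ∀ m, p (m + N) = p m)
    (hH : IsJacobiOp p H) : Real.cos k ∈ spectrum ℝ H ↔ |(AIter k p N).trace| ≤ 2 := by
  rw [trace_AIter hp hper]
  exact ⟨abs_eval_discriminant_le hp hper hH,
    mem_spectrum_of_abs_eval_discriminant_le hp hN hper hH⟩

end PeriodicSpectrum

/-- Suppose `μ` is a shift-ergodic Borel probability measure on `Ω` with a local
product structure and full support, and the shift has a fixed point in `Ω`.  Then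
`{k ∈ (0,π) : k ≠ π/2, L(A^{(k)},μ) = 0}`
`  = ⋂_{p ∈ Per(T)} {k ∈ (0,π) : k ≠ π/2, cos k ∈ σ(H̃_p)}`. -/
theorem statement6 (ℓ : ℕ) (hℓ : 1 < ℓ) (W : Set (ℕ × ℕ))
    (μ : Measure (ℤ → ℕ)) [IsProbabilityMeasure μ]
    (hconc : μ (SFT ℓ W)ᶜ = 0)
    (herg : Ergodic shift μ)
    (hlps : LocalProductStructure ℓ W μ)
    (hsupp : FullSupport ℓ W μ)
    (hfix : ∃ p ∈ SFT ℓ W, shift p = p)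
    (H : (ℤ → ℕ) → (L2Z →L[ℝ] L2Z))
    (hH : ∀ p, IsJacobiOp p (H p))
    (L : ℝ → ℝ)
    (hL : ∀ k : ℝ,
      Tendsto (fun n : ℕ => (1 / (n : ℝ)) * ∫ ω, Real.log ‖AIter k ω n‖ ∂μ)
        atTop (𝓝 (L k))) :
    {k ∈ Ioo (0 : ℝ) π | k ≠ π / 2 ∧ L k = 0} =
      ⋂ p ∈ {p ∈ SFT ℓ W | ∃ n : ℕ, 1 ≤ n ∧ shift^[n] p = p},
        {k ∈ Ioo (0 : ℝ) π | k ≠ π / 2 ∧ Real.cos k ∈ spectrum ℝ (H p)} := by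
  have hspec : ∀ {k : ℝ} {p : ℤ → ℕ} {n : ℕ}, p ∈ SFT ℓ W → 1 ≤ n → shift^[n] p = p →
      (Real.cos k ∈ spectrum ℝ (H p) ↔ |(AIter k p n).trace| ≤ 2) := by
    intro k p n hp hn hpn
    have hper : ∀ m, p (m + n) = p m := fun m => by rw [← shift_iterate_apply n p, hpn]
    exact cos_mem_spectrum_iff (fun m => (hp.1 m).1) hn hper (hH p)
  ext k
  simp only [mem_iInter, and_imp, forall_exists_index, mem_ofPred_eq]
  constructor
  · rintro ⟨hk, hk2, hLk⟩ p hp n hn hpn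
    exact ⟨hk, hk2, (hspec hp hn hpn).2 <| abs_trace_le_two_of_growth_zero hconc herg hlps hsupp
      hfix hk hk2 (hLk ▸ hL k) hp hpn⟩
  · intro h
    obtain ⟨q, hq, hqfix⟩ := hfix
    obtain ⟨hk, hk2, -⟩ := h q hq 1 le_rfl hqfix
    refine ⟨hk, hk2, tendsto_nhds_unique (hL k) ?_⟩
    exact tendsto_growth_zero_of_periodic hconc herg hsupp ⟨q, hq, hqfix⟩ hk
      fun p hp n hn hpn => (hspec hp hn hpn).1 (h p hp n hn hpn).2.2
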